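/- arXiv:1111.7207 — 2 statements merged into one kernel-verified Lean document; each statement's English description precedes it below -/
import Mathlib

section
/- Let n ≥ 1, let Ω ⊂ ℝⁿ be a bounded open convex set, let Ω' be a compact subset of Ω, let k ∈ ℕ, and let 0 < λ ≤ Λ. Then there exists a constant C > 0, depending only on k, n, λ, Λ, Ω and Ω', such that every function u : closure(Ω) → ℝ which is continuous on closure(Ω), convex and C² in Ω, satisfies u = 0 on ∂Ω, and satisfies λ ≤ det D²u(x) ≤ Λ for all x ∈ Ω, obeys ∫_{Ω'} ‖D²u(x)‖ log^k(2 + ‖D²u(x)‖) dx ≤ C. -/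
open MeasureTheory Metric Set
open scoped Pointwise

noncomputable def hessMatrix {n : ℕ} (u : EuclideanSpace ℝ (Fin n) → ℝ)
    (x : EuclideanSpace ℝ (Fin n)) : Matrix (Fin n) (Fin n) ℝ :=
  fun i j => iteratedFDeriv ℝ 2 u x ![EuclideanSpace.single i (1 : ℝ), EuclideanSpace.single j 1]

noncomputable def hessNorm {n : ℕ} (u : EuclideanSpace ℝ (Fin n) → ℝ)
    (x : EuclideanSpace ℝ (Fin n)) : ℝ :=
  ‖Matrix.toEuclideanCLM (𝕜 := ℝ) (hessMatrix u x)‖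

noncomputable def hessDet {n : ℕ} (u : EuclideanSpace ℝ (Fin n) → ℝ)
    (x : EuclideanSpace ℝ (Fin n)) : ℝ :=
  (hessMatrix u x).det

/-!
The proof is the elementary form of the argument of De Philippis and Figalli. For `x` in `Ω` let
`tsec Ω u x t` be the section of height `t`, where the graph of `u` is less than `t` above its
tangent plane at `x`.

*Sections are balanced.* The Alexandrov maximum principle (`MASol.alexandrov_slab`) bounds the depth
of a convex function below its boundary values in terms of the volume of the domain, the bound
improving for points near the boundary; comparison with a paraboloid bounds the volume from above by
the depth (`MASol.lam_mul_detT_sq_le`). With a weak form of John's lemma (`exists_john`), compactly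
contained sections are comparable to ellipsoids whose translates, around every point of the section
of half the height, stay inside (`exists_balanced`). Engulfing and doubling of sections follow
(`MASol.dev_le_of_mem_tsec`, `MASol.volume_tsec_le`). As `u` is negative inside `Ω`, with a bound
independent of `u`, sections of small height at points away from the boundary are compactly
contained (`MADir.exists_tangent_gap`).

*Reverse inequality.* In coordinates adapted to a section of height `t`, the trace of the Hessian
has average of order `t`, because second derivatives of a convex function integrate to differences
of slopes (`MASol.lintegral_trace_le`). Where the trace is not much larger than that, the lower bound
on the determinant forces all eigenvalues to be of order `t`. So `‖D²u‖` is at least a multiple of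
its average on a fixed fraction of the section (`exists_density`).

*Weak-type inequality.* A Vitali covering of `{‖D²u‖ > γ}` by sections on which the average of
`‖D²u‖` first reaches `γ` yields, for `γ` large,
`∫_{‖D²u‖ > γ} ‖D²u‖ ≤ C γ |{‖D²u‖ ≥ c γ}|` (`exists_weak_type`), on slightly different interior
domains. Summing over `γ = γ₀ 2 ^ j` with suitable weights turns a bound for
`∫ ‖D²u‖ log^k (2 + ‖D²u‖)` into one for the power `k + 1`; the case `k = 0` is the `L¹` bound for
the Hessian of a convex function.
-/

/-! ### Linear algebra of positive semidefinite matrices -/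

section LinearAlgebra

open Matrix

variable {n : ℕ}

lemma dotProduct_mulVec_eigen {M : Matrix (Fin n) (Fin n) ℝ} (hM : M.IsHermitian)
    (ω : EuclideanSpace ℝ (Fin n)) :
    ω.ofLp ⬝ᵥ M *ᵥ ω.ofLp
      = ∑ i, hM.eigenvalues i * (inner ℝ (hM.eigenvectorBasis i) ω) ^ 2 := by
  set b := hM.eigenvectorBasis
  have h1 : ω.ofLp ⬝ᵥ M *ᵥ ω.ofLp = inner ℝ ω (Matrix.toEuclideanCLM (𝕜 := ℝ) M ω) := by
    rw [Matrix.inner_toEuclideanCLM]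
  rw [h1, ← b.sum_inner_mul_inner]
  refine Finset.sum_congr rfl fun i _ => ?_
  have h2 : inner ℝ (b i) (Matrix.toEuclideanCLM (𝕜 := ℝ) M ω)
      = hM.eigenvalues i * inner ℝ (b i) ω := by
    have h3 : inner ℝ (b i) (Matrix.toEuclideanCLM (𝕜 := ℝ) M ω)
      = inner ℝ (Matrix.toEuclideanCLM (𝕜 := ℝ) M (b i)) ω := by
      rw [real_inner_comm ω, Matrix.inner_toEuclideanCLM, Matrix.inner_toEuclideanCLM]
      rw [Matrix.dotProduct_mulVec, ← Matrix.mulVec_transpose, dotProduct_comm]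
      have := hM.eq
      rw [Matrix.conjTranspose_eq_transpose_of_trivial] at this
      rw [this]
    have h4 : Matrix.toEuclideanCLM (𝕜 := ℝ) M (b i) = hM.eigenvalues i • b i := by
      apply (WithLp.ofLp_injective 2)
      simpa using hM.mulVec_eigenvectorBasis i
    rw [h3, h4, inner_smul_left]
    simp
  rw [h2, real_inner_comm]
  ring

lemma sum_inner_eigen {M : Matrix (Fin n) (Fin n) ℝ} (hM : M.IsHermitian)
    (ω : EuclideanSpace ℝ (Fin n)) :
    ‖ω‖ ^ 2 = ∑ i, (inner ℝ (hM.eigenvectorBasis i) ω) ^ 2 := by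
  rw [← real_inner_self_eq_norm_sq, ← hM.eigenvectorBasis.sum_inner_mul_inner]
  refine Finset.sum_congr rfl fun i _ => ?_
  rw [real_inner_comm]
  ring

lemma quad_le_trace {M : Matrix (Fin n) (Fin n) ℝ} (hM : M.PosSemidef)
    (ω : EuclideanSpace ℝ (Fin n)) :
    ω.ofLp ⬝ᵥ M *ᵥ ω.ofLp ≤ M.trace * ‖ω‖ ^ 2 := by
  have ht : M.trace = ∑ i, hM.1.eigenvalues i := by
    simpa using hM.1.trace_eq_sum_eigenvalues
  rw [dotProduct_mulVec_eigen hM.1, sum_inner_eigen hM.1, Finset.mul_sum]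
  refine Finset.sum_le_sum fun i _ => ?_
  gcongr
  rw [ht]
  exact Finset.single_le_sum (fun j _ => hM.eigenvalues_nonneg j) (Finset.mem_univ i)

/-- The smallest eigenvalue of a positive semidefinite matrix is at least
`det M / (tr M) ^ (n - 1)`. -/
lemma det_mul_le_quad {M : Matrix (Fin n) (Fin n) ℝ} (hM : M.PosSemidef)
    (ω : EuclideanSpace ℝ (Fin n)) :
    M.det * ‖ω‖ ^ 2 ≤ M.trace ^ (n - 1) * (ω.ofLp ⬝ᵥ M *ᵥ ω.ofLp) := by
  have ht : M.trace = ∑ i, hM.1.eigenvalues i := by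
    simpa using hM.1.trace_eq_sum_eigenvalues
  have hd : M.det = ∏ i, hM.1.eigenvalues i := by
    simpa using hM.1.det_eq_prod_eigenvalues
  rw [dotProduct_mulVec_eigen hM.1, sum_inner_eigen hM.1, Finset.mul_sum, Finset.mul_sum]
  refine Finset.sum_le_sum fun i _ => ?_
  rw [← mul_assoc]
  refine mul_le_mul_of_nonneg_right ?_ (sq_nonneg _)
  rw [hd, ← Finset.mul_prod_erase _ _ (Finset.mem_univ i), mul_comm]
  refine mul_le_mul_of_nonneg_right ?_ (hM.eigenvalues_nonneg i)
  calc ∏ j ∈ Finset.univ.erase i, hM.1.eigenvalues j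
      ≤ ∏ j ∈ Finset.univ.erase i, M.trace := by
        refine Finset.prod_le_prod (fun j _ => hM.eigenvalues_nonneg j) fun j _ => ?_
        rw [ht]
        exact Finset.single_le_sum (fun j _ => hM.eigenvalues_nonneg j) (Finset.mem_univ j)
    _ = M.trace ^ (n - 1) := by
        rw [Finset.prod_const, Finset.card_erase_of_mem (Finset.mem_univ i)]
        simp

lemma det_le_pow_of_quad_le {M : Matrix (Fin n) (Fin n) ℝ} (hM : M.PosSemidef) {s : ℝ}
    (h : ∀ ω : EuclideanSpace ℝ (Fin n), ω.ofLp ⬝ᵥ M *ᵥ ω.ofLp ≤ s * ‖ω‖ ^ 2) :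
    M.det ≤ s ^ n := by
  have hd : M.det = ∏ i, hM.1.eigenvalues i := by
    simpa using hM.1.det_eq_prod_eigenvalues
  rw [hd]
  calc ∏ i, hM.1.eigenvalues i ≤ ∏ _i : Fin n, s := by
        refine Finset.prod_le_prod (fun j _ => hM.eigenvalues_nonneg j) fun i _ => ?_
        have h1 := h (hM.1.eigenvectorBasis i)
        rw [hM.1.mulVec_eigenvectorBasis i] at h1
        have h2 : (hM.1.eigenvectorBasis i).ofLp ⬝ᵥ (hM.1.eigenvectorBasis i).ofLp = 1 := by
          have := real_inner_self_eq_norm_sq (hM.1.eigenvectorBasis i)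
          rw [hM.1.eigenvectorBasis.norm_eq_one] at this
          rw [EuclideanSpace.inner_eq_star_dotProduct] at this
          simpa using this
        rw [dotProduct_smul, h2] at h1
        simpa using h1
    _ = s ^ n := by simp

end LinearAlgebra

/-! ### Hessians of convex functions -/

/-- The standing hypotheses on a convex solution of `lam ≤ det D²u ≤ Lam` in a bounded convex
open set, without any boundary condition. -/
structure MASol {n : ℕ} (Ω : Set (EuclideanSpace ℝ (Fin n))) (lam Lam : ℝ)
    (u : EuclideanSpace ℝ (Fin n) → ℝ) : Prop where
  isOpen : IsOpen Ω
  bdd : Bornology.IsBounded Ω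
  conv : Convex ℝ Ω
  lam_pos : 0 < lam
  lam_le : lam ≤ Lam
  cvx : ConvexOn ℝ Ω u
  c2 : ContDiffOn ℝ 2 u Ω
  det_lb : ∀ x ∈ Ω, lam ≤ hessDet u x
  det_ub : ∀ x ∈ Ω, hessDet u x ≤ Lam

/-- The Hessian of `u` at `x` as a bilinear map. -/
noncomputable def hessB {n : ℕ} (u : EuclideanSpace ℝ (Fin n) → ℝ)
    (x : EuclideanSpace ℝ (Fin n)) :
    EuclideanSpace ℝ (Fin n) →L[ℝ] EuclideanSpace ℝ (Fin n) →L[ℝ] ℝ :=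
  fderiv ℝ (fderiv ℝ u) x

section Hessian

open Matrix

variable {n : ℕ} {u : EuclideanSpace ℝ (Fin n) → ℝ} {x : EuclideanSpace ℝ (Fin n)}

lemma hessMatrix_apply (i j : Fin n) : hessMatrix u x i j
    = hessB u x (EuclideanSpace.single i 1) (EuclideanSpace.single j 1) := by
  simp [hessMatrix, hessB, iteratedFDeriv_two_apply]

lemma euclid_eq_sum (v : EuclideanSpace ℝ (Fin n)) :
    v = ∑ i, v i • EuclideanSpace.single i (1 : ℝ) := by
  conv_lhs => rw [← (EuclideanSpace.basisFun (Fin n) ℝ).sum_repr v]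
  simp

lemma hessB_eq_dotProduct (v w : EuclideanSpace ℝ (Fin n)) :
    hessB u x v w = v.ofLp ⬝ᵥ (hessMatrix u x) *ᵥ w.ofLp := by
  conv_lhs => rw [euclid_eq_sum v, euclid_eq_sum w]
  simp only [map_sum, map_smul, _root_.sum_apply, _root_.smul_apply,
    smul_eq_mul, dotProduct, mulVec, hessMatrix_apply, Finset.mul_sum]
  refine Finset.sum_comm.trans ?_
  refine Finset.sum_congr rfl fun i _ => Finset.sum_congr rfl fun j _ => ?_
  ring

/-- The matrix of the Hessian form pulled back by the linear map `T`. -/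
noncomputable def pullHess (u : EuclideanSpace ℝ (Fin n) → ℝ) (x : EuclideanSpace ℝ (Fin n))
    (T : EuclideanSpace ℝ (Fin n) ≃L[ℝ] EuclideanSpace ℝ (Fin n)) : Matrix (Fin n) (Fin n) ℝ :=
  fun i j => hessB u x (T (EuclideanSpace.single i 1)) (T (EuclideanSpace.single j 1))

lemma hessB_eq_pullHess (T : EuclideanSpace ℝ (Fin n) ≃L[ℝ] EuclideanSpace ℝ (Fin n))
    (v w : EuclideanSpace ℝ (Fin n)) :
    hessB u x (T v) (T w) = v.ofLp ⬝ᵥ (pullHess u x T) *ᵥ w.ofLp := by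
  conv_lhs => rw [euclid_eq_sum v, euclid_eq_sum w]
  simp only [map_sum, map_smul, _root_.sum_apply, _root_.smul_apply,
    smul_eq_mul, dotProduct, mulVec, pullHess, Finset.mul_sum]
  refine Finset.sum_comm.trans ?_
  refine Finset.sum_congr rfl fun i _ => Finset.sum_congr rfl fun j _ => ?_
  ring

/-- Determinant of a linear automorphism, as a real number. -/
noncomputable def detT (T : EuclideanSpace ℝ (Fin n) ≃L[ℝ] EuclideanSpace ℝ (Fin n)) : ℝ :=
  LinearMap.det ((T : EuclideanSpace ℝ (Fin n) →L[ℝ] EuclideanSpace ℝ (Fin n)) :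
    EuclideanSpace ℝ (Fin n) →ₗ[ℝ] EuclideanSpace ℝ (Fin n))

lemma det_pullHess (T : EuclideanSpace ℝ (Fin n) ≃L[ℝ] EuclideanSpace ℝ (Fin n)) :
    (pullHess u x T).det = detT T ^ 2 * hessDet u x := by
  set b := (EuclideanSpace.basisFun (Fin n) ℝ).toBasis
  set A := LinearMap.toMatrix b b
    ((T : EuclideanSpace ℝ (Fin n) →L[ℝ] EuclideanSpace ℝ (Fin n)) :
    EuclideanSpace ℝ (Fin n) →ₗ[ℝ] EuclideanSpace ℝ (Fin n)) with hA
  have hAij : ∀ i j, A i j = T (EuclideanSpace.single j 1) i := by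
    intro i j
    simp [hA, LinearMap.toMatrix_apply, b]
  have h : pullHess u x T = Aᵀ * (hessMatrix u x * A) := by
    ext i j
    rw [pullHess, hessB_eq_dotProduct]
    simp only [dotProduct, mulVec, Matrix.mul_apply, transpose_apply, hAij]
  rw [h, det_mul, det_mul, det_transpose, hA, LinearMap.det_toMatrix, hessDet, detT]
  ring

lemma detT_ne_zero (T : EuclideanSpace ℝ (Fin n) ≃L[ℝ] EuclideanSpace ℝ (Fin n)) :
    detT T ≠ 0 := (LinearEquiv.isUnit_det' T.toLinearEquiv).ne_zero

variable {Ω : Set (EuclideanSpace ℝ (Fin n))} {lam Lam : ℝ}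

namespace MASol

lemma contDiffAt (h : MASol Ω lam Lam u) (hx : x ∈ Ω) : ContDiffAt ℝ 2 u x :=
  h.c2.contDiffAt (h.isOpen.mem_nhds hx)

lemma differentiableAt (h : MASol Ω lam Lam u) (hx : x ∈ Ω) : DifferentiableAt ℝ u x :=
  (h.contDiffAt hx).differentiableAt (by norm_num)

lemma continuousOn (h : MASol Ω lam Lam u) : ContinuousOn u Ω := h.c2.continuousOn

lemma fderiv_contDiffOn (h : MASol Ω lam Lam u) : ContDiffOn ℝ 1 (fderiv ℝ u) Ω :=
  h.c2.fderiv_of_isOpen h.isOpen (by norm_num)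

lemma hasFDerivAt_fderiv (h : MASol Ω lam Lam u) (hx : x ∈ Ω) :
    HasFDerivAt (fderiv ℝ u) (hessB u x) x :=
  ((h.fderiv_contDiffOn.contDiffAt (h.isOpen.mem_nhds hx)).differentiableAt
    (by norm_num)).hasFDerivAt

lemma continuousOn_hessB (h : MASol Ω lam Lam u) : ContinuousOn (hessB u) Ω :=
  h.fderiv_contDiffOn.continuousOn_fderiv_of_isOpen h.isOpen (by norm_num)

lemma symm (h : MASol Ω lam Lam u) (hx : x ∈ Ω) (v w : EuclideanSpace ℝ (Fin n)) :
    hessB u x v w = hessB u x w v :=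
  (h.contDiffAt hx).isSymmSndFDerivAt (by simp) v w

/-- The tangent plane of a convex function lies below its graph. -/
lemma tangent_le (h : MASol Ω lam Lam u) {y : EuclideanSpace ℝ (Fin n)} (hx : x ∈ Ω)
    (hy : y ∈ Ω) : u x + fderiv ℝ u x (y - x) ≤ u y := by
  set γ : ℝ →ᵃ[ℝ] EuclideanSpace ℝ (Fin n) := AffineMap.lineMap x y
  have hc : ConvexOn ℝ (γ ⁻¹' Ω) (u ∘ γ) := h.cvx.comp_affineMap γ
  have hd : HasDerivAt (u ∘ γ) (fderiv ℝ u x (y - x)) 0 := by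
    have h1 : HasFDerivAt u (fderiv ℝ u x) (γ 0) := by
      simpa [γ] using (h.differentiableAt hx).hasFDerivAt
    exact h1.comp_hasDerivAt 0 AffineMap.hasDerivAt_lineMap
  have := hc.le_slope_of_hasDerivAt (x := 0) (y := 1) (by simpa [γ] using hx)
    (by simpa [γ] using hy) one_pos hd
  simp only [slope_def_field, γ, Function.comp_apply, AffineMap.lineMap_apply_one,
    AffineMap.lineMap_apply_zero, sub_zero, div_one] at this
  linarith

end MASol

lemma hasDerivAt_line {f : EuclideanSpace ℝ (Fin n) → ℝ} {x v : EuclideanSpace ℝ (Fin n)} {t : ℝ}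
    (hf : DifferentiableAt ℝ f (x + t • v)) :
    HasDerivAt (fun s : ℝ => f (x + s • v)) (fderiv ℝ f (x + t • v) v) t := by
  have h2 : HasDerivAt (fun s : ℝ => x + s • v) v t := by
    simpa using ((hasDerivAt_id t).smul_const v).const_add x
  exact hf.hasFDerivAt.comp_hasDerivAt t h2

/-- Second-order necessary condition at a local minimum, in one variable. -/
lemma second_deriv_nonneg_of_localMin {φ φ' : ℝ → ℝ} {d : ℝ}
    (h1 : ∀ᶠ t in nhds (0 : ℝ), HasDerivAt φ (φ' t) t) (h2 : HasDerivAt φ' d 0)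
    (hmin : IsLocalMin φ 0) : 0 ≤ d := by
  by_contra hd
  push Not at hd
  have hz : φ' 0 = 0 := hmin.hasDerivAt_eq_zero h1.self_of_nhds
  -- if the second derivative were negative, `0` would also be a local maximum
  have hev : deriv (-φ) =ᶠ[nhds 0] -φ' := by
    filter_upwards [h1] with t ht using ht.neg.deriv
  have hmax : IsLocalMin (-φ) 0 := by
    refine isLocalMin_of_deriv_deriv_pos ?_ ?_ h1.self_of_nhds.continuousAt.neg
    · rw [hev.deriv_eq, h2.neg.deriv]
      linarith
    · rw [h1.self_of_nhds.neg.deriv, hz, neg_zero]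
  have hconst : φ =ᶠ[nhds 0] fun _ => φ 0 := by
    filter_upwards [hmin, hmax] with t a b
    simp only [Pi.neg_apply] at b
    linarith
  have hd0 : φ' =ᶠ[nhds 0] fun _ => 0 := by
    filter_upwards [h1, hconst.eventually_nhds] with t ht hc
    have : φ =ᶠ[nhds t] fun _ => φ 0 := hc
    exact ht.unique ((hasDerivAt_const t (φ 0)).congr_of_eventuallyEq this)
  have := h2.unique ((hasDerivAt_const (0 : ℝ) (0 : ℝ)).congr_of_eventuallyEq hd0)
  linarith

namespace MASol

/-- If `u` is touched from below at `x` along direction `v` by a quadratic with coefficient `s`,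
then `D²u(v, v) ≥ 2 s`. -/
lemma le_hessB_of_localMin (h : MASol Ω lam Lam u) (hx : x ∈ Ω) (v : EuclideanSpace ℝ (Fin n))
    (a s σ : ℝ) (hmin : IsLocalMin (fun t : ℝ => σ * u (x + t • v) - (a * t + s * t ^ 2)) 0) :
    2 * s ≤ σ * hessB u x v v := by
  have hcont : Continuous (fun t : ℝ => x + t • v) := by fun_prop
  have hmem : ∀ᶠ t in nhds (0 : ℝ), x + t • v ∈ Ω :=
    hcont.continuousAt.eventually_mem (by simpa using h.isOpen.mem_nhds hx)
  have h1 : ∀ᶠ t in nhds (0 : ℝ), HasDerivAt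
      (fun t : ℝ => σ * u (x + t • v) - (a * t + s * t ^ 2))
      (σ * fderiv ℝ u (x + t • v) v - (a + s * (2 * t))) t := by
    filter_upwards [hmem] with t ht
    have := ((hasDerivAt_line (h.differentiableAt ht)).const_mul σ).sub
      (((hasDerivAt_id t).const_mul a).add (((hasDerivAt_id t).pow 2).const_mul s))
    exact this.congr_deriv (by simp only [id]; norm_num)
  have h2 : HasDerivAt (fun t : ℝ => σ * fderiv ℝ u (x + t • v) v - (a + s * (2 * t)))
      (σ * hessB u x v v - 2 * s) 0 := by
    have e1 : HasDerivAt (fun s : ℝ => x + s • v) v 0 := by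
      simpa using ((hasDerivAt_id (0 : ℝ)).smul_const v).const_add x
    have e2 : HasDerivAt (fun t : ℝ => fderiv ℝ u (x + t • v)) (hessB u x v) 0 := by
      have := h.hasFDerivAt_fderiv hx
      have e0 : x = x + (0 : ℝ) • v := by simp
      rw [e0] at this
      have h3 := this.comp_hasDerivAt (0 : ℝ) e1
      rw [← e0] at h3
      exact h3
    have e3 : HasDerivAt (fun t : ℝ => fderiv ℝ u (x + t • v) v) (hessB u x v v) 0 := by
      simpa using e2.clm_apply (hasDerivAt_const (0 : ℝ) v)
    have := (e3.const_mul σ).sub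
      (((((hasDerivAt_id (0 : ℝ)).const_mul 2).const_mul s).const_add a))
    exact this.congr_deriv (by ring)
  have := second_deriv_nonneg_of_localMin h1 h2 hmin
  linarith

lemma hessB_nonneg (h : MASol Ω lam Lam u) (hx : x ∈ Ω) (v : EuclideanSpace ℝ (Fin n)) :
    0 ≤ hessB u x v v := by
  have := h.le_hessB_of_localMin hx v (fderiv ℝ u x v) 0 1 ?_
  · linarith
  have hcont : Continuous (fun t : ℝ => x + t • v) := by fun_prop
  have hmem : ∀ᶠ t in nhds (0 : ℝ), x + t • v ∈ Ω :=
    hcont.continuousAt.eventually_mem (by simpa using h.isOpen.mem_nhds hx)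
  filter_upwards [hmem] with t ht
  have := h.tangent_le hx ht
  simp at this ⊢
  linarith

lemma pullHess_posSemidef (h : MASol Ω lam Lam u) (hx : x ∈ Ω)
    (T : EuclideanSpace ℝ (Fin n) ≃L[ℝ] EuclideanSpace ℝ (Fin n)) :
    (pullHess u x T).PosSemidef := by
  refine Matrix.PosSemidef.of_dotProduct_mulVec_nonneg ?_ fun w => ?_
  · ext i j
    simp [pullHess, h.symm hx]
  · have := hessB_eq_pullHess (u := u) (x := x) T (WithLp.toLp 2 w) (WithLp.toLp 2 w)
    simp only [star_trivial]
    rw [← this]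
    exact h.hessB_nonneg hx _

lemma inner_toEuclideanCLM_hess (v w : EuclideanSpace ℝ (Fin n)) :
    inner ℝ v (Matrix.toEuclideanCLM (𝕜 := ℝ) (hessMatrix u x) w) = hessB u x v w := by
  rw [Matrix.inner_toEuclideanCLM, hessB_eq_dotProduct]

lemma hessB_le_hessNorm (v : EuclideanSpace ℝ (Fin n)) :
    hessB u x v v ≤ hessNorm u x * ‖v‖ ^ 2 := by
  rw [← inner_toEuclideanCLM_hess]
  refine (real_inner_le_norm _ _).trans ?_
  have := (Matrix.toEuclideanCLM (𝕜 := ℝ) (hessMatrix u x)).le_opNorm v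
  rw [hessNorm]
  nlinarith [norm_nonneg v]

lemma hessNorm_nonneg : 0 ≤ hessNorm u x := norm_nonneg _

lemma hessNorm_le (h : MASol Ω lam Lam u) (hx : x ∈ Ω) {τ : ℝ} (hτ : 0 ≤ τ)
    (hb : ∀ v, hessB u x v v ≤ τ * ‖v‖ ^ 2) : hessNorm u x ≤ τ := by
  have hs : (Matrix.toEuclideanCLM (𝕜 := ℝ) (hessMatrix u x)).IsSymmetric := by
    intro v w
    simp only [ContinuousLinearMap.coe_coe]
    rw [inner_toEuclideanCLM_hess, real_inner_comm, inner_toEuclideanCLM_hess, h.symm hx]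
  rw [hessNorm, ContinuousLinearMap.norm_eq_iSup_rayleighQuotient _ hs]
  refine Real.iSup_le (fun v => ?_) hτ
  rw [ContinuousLinearMap.rayleighQuotient, ContinuousLinearMap.reApplyInnerSelf]
  simp only [RCLike.re_to_real]
  rw [real_inner_comm, inner_toEuclideanCLM_hess,
    abs_of_nonneg (div_nonneg (h.hessB_nonneg hx v) (sq_nonneg _))]
  exact div_le_of_le_mul₀ (sq_nonneg _) hτ (hb v)

lemma hessNorm_le_trace (h : MASol Ω lam Lam u) (hx : x ∈ Ω)
    (T : EuclideanSpace ℝ (Fin n) ≃L[ℝ] EuclideanSpace ℝ (Fin n)) :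
    hessNorm u x ≤ ‖(T.symm : EuclideanSpace ℝ (Fin n) →L[ℝ] EuclideanSpace ℝ (Fin n))‖ ^ 2
      * (pullHess u x T).trace := by
  have hp := h.pullHess_posSemidef hx T
  have htr := hp.trace_nonneg
  refine h.hessNorm_le hx (by positivity) fun v => ?_
  have h1 := quad_le_trace hp (T.symm v)
  rw [← hessB_eq_pullHess, T.apply_symm_apply] at h1
  have h2 := (T.symm : EuclideanSpace ℝ (Fin n) →L[ℝ] EuclideanSpace ℝ (Fin n)).le_opNorm v
  simp only [ContinuousLinearEquiv.coe_coe] at h2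
  calc hessB u x v v ≤ _ := h1
    _ ≤ (pullHess u x T).trace *
      (‖(T.symm : EuclideanSpace ℝ (Fin n) →L[ℝ] EuclideanSpace ℝ (Fin n))‖ * ‖v‖) ^ 2 := by
        gcongr
    _ = _ := by ring

lemma continuousOn_hessNorm (h : MASol Ω lam Lam u) : ContinuousOn (hessNorm u) Ω := by
  have hm : ContinuousOn (hessMatrix u) Ω := by
    refine continuousOn_pi.2 fun i => continuousOn_pi.2 fun j => ?_
    simp only [hessMatrix_apply]
    exact ((h.continuousOn_hessB.clm_apply continuousOn_const).clm_apply continuousOn_const)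
  have hl : Continuous (fun M : Matrix (Fin n) (Fin n) ℝ => Matrix.toEuclideanCLM (𝕜 := ℝ) M) :=
    (Matrix.toEuclideanCLM (n := Fin n) (𝕜 := ℝ)).toAlgEquiv.toLinearMap.continuous_of_finiteDimensional
  exact (hl.comp_continuousOn hm).norm

end MASol

end Hessian

/-! ### Inscribed and circumscribed ellipsoids -/

section John

variable {n : ℕ}

/-- A weak form of John's lemma. The ellipsoids come from a simplex with one fixed vertex `p₀` and
with the other vertices chosen to maximise its volume. -/
lemma exists_john (n : ℕ) : ∃ R : ℝ, 1 ≤ R ∧ ∀ S : Set (EuclideanSpace ℝ (Fin n)),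
    IsOpen S → Convex ℝ S → Bornology.IsBounded S → S.Nonempty →
    ∃ (z : EuclideanSpace ℝ (Fin n))
      (T : EuclideanSpace ℝ (Fin n) ≃L[ℝ] EuclideanSpace ℝ (Fin n)),
      (∀ ω, ‖ω‖ < 1 → z + T ω ∈ S) ∧ ∀ y ∈ S, ‖T.symm (y - z)‖ ≤ R := by
  classical
  set N : ℝ := n + 1 with hN
  have hN1 : 1 ≤ N := by simp [hN]
  have hN0 : 0 < N := by linarith
  refine ⟨2 * N ^ 3, by nlinarith [one_le_pow₀ hN1 (n := 3)], fun S hSo hSc hSb hSne => ?_⟩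
  obtain ⟨p0, hp0⟩ := hSne
  set K := closure S
  have hK : IsCompact K := hSb.isCompact_closure
  have hKc : Convex ℝ K := hSc.closure
  set e := (EuclideanSpace.basisFun (Fin n) ℝ).toBasis
  have hcont : Continuous fun p : Fin n → EuclideanSpace ℝ (Fin n) =>
      |e.det (fun i => p i - p0)| := by
    simp only [Module.Basis.det_apply]
    refine (Continuous.matrix_det ?_).abs
    refine continuous_matrix fun i j => ?_
    simp only [Module.Basis.toMatrix_apply, e, OrthonormalBasis.coe_toBasis_repr_apply,
      EuclideanSpace.basisFun_repr]
    fun_prop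
  obtain ⟨p, hpK, hpmax⟩ := (isCompact_univ_pi fun _ : Fin n => hK).exists_isMaxOn
    ⟨fun _ => p0, fun i _ => subset_closure hp0⟩ hcont.continuousOn
  have hpK' : ∀ i, p i ∈ K := fun i => hpK i (mem_univ i)
  set v : Fin n → EuclideanSpace ℝ (Fin n) := fun i => p i - p0 with hv
  have hdet : e.det v ≠ 0 := by
    obtain ⟨ε, hε, hball⟩ := Metric.isOpen_iff.1 hSo p0 hp0
    have h1 : (fun i => p0 + (ε / 2) • e i) ∈ (Set.univ : Set (Fin n)).pi fun _ => K := by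
      intro i _
      refine subset_closure (hball ?_)
      simp [e, norm_smul, abs_of_pos hε]
      linarith
    have h2 := hpmax h1
    simp only [add_sub_cancel_left, mem_ofPred_eq] at h2
    have h3 : e.det (fun i => (ε / 2) • e i) = (ε / 2) ^ n := by
      have := e.det.map_smul_univ (fun _ : Fin n => ε / 2) e
      rw [e.det_self] at this
      rw [this]
      simp [div_pow]
    rw [h3] at h2
    intro h4
    rw [show (fun i => p i - p0) = v from rfl, h4, abs_zero] at h2
    have : 0 < |(ε / 2) ^ n| := by positivity
    linarith
  obtain ⟨hli, hsp⟩ := (e.is_basis_iff_det).2 (isUnit_iff_ne_zero.2 hdet)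
  set b := Module.Basis.mk hli hsp.ge with hb
  set T0 : EuclideanSpace ℝ (Fin n) ≃L[ℝ] EuclideanSpace ℝ (Fin n) :=
    (e.equiv b (Equiv.refl _)).toContinuousLinearEquiv with hT0
  have hT0e : ∀ i, T0 (EuclideanSpace.single i 1) = v i := by
    intro i
    have h1 : (EuclideanSpace.single i (1 : ℝ) : EuclideanSpace ℝ (Fin n)) = e i := by
      simp [e]
    rw [h1]
    have h2 : T0 (e i) = (e.equiv b (Equiv.refl _)) (e i) := rfl
    rw [h2, Module.Basis.equiv_apply]
    simp [hb]
  have hT0s : ∀ ω, T0 ω = ∑ i, ω i • v i := by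
    intro ω
    conv_lhs => rw [euclid_eq_sum ω]
    simp [map_sum, hT0e]
  -- maximality bounds the coordinates of every point of `S` in the basis `v`
  have hcoord : ∀ y ∈ K, ∀ i, |T0.symm (y - p0) i| ≤ 1 := by
    intro y hy i
    have h1 : Function.update p i y ∈ (Set.univ : Set (Fin n)).pi fun _ => K := by
      intro j _
      by_cases hj : j = i
      · subst hj; simpa using hy
      · simpa [hj] using hpK' j
    have h2 := hpmax h1
    simp only [mem_ofPred_eq] at h2
    have h3 : (fun j => Function.update p i y j - p0) = Function.update v i (y - p0) := by
      ext1 j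
      by_cases hj : j = i
      · subst hj; simp
      · simp [hj, hv]
    have h4 := congrArg (fun f => f (y - p0)) (e.det_smul_mk_coord_eq_det_update hli hsp.ge i)
    simp only [LinearMap.smul_apply, Module.Basis.coord_apply, smul_eq_mul,
      MultilinearMap.toLinearMap_apply, AlternatingMap.coe_multilinearMap] at h4
    have h5 : (Module.Basis.mk hli hsp.ge).repr (y - p0) i = T0.symm (y - p0) i := by
      have : y - p0 = ∑ j, T0.symm (y - p0) j • b j := by
        conv_lhs => rw [← T0.apply_symm_apply (y - p0), hT0s]
        simp [hb]
      conv_lhs => rw [this]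
      rw [← hb, b.repr_sum_self]
    rw [h3, ← h4, h5, abs_mul] at h2
    have h6 : 0 < |e.det v| := abs_pos.2 hdet
    exact le_of_mul_le_mul_left (by linarith) h6
  have hTK : ∀ ω : EuclideanSpace ℝ (Fin n), (∀ i, 0 ≤ ω i) → ∑ i, ω i ≤ 1 → p0 + T0 ω ∈ K := by
    intro ω h0 h1
    have h2 : p0 + T0 ω = ∑ o : Option (Fin n),
        (o.elim (1 - ∑ i, ω i) (fun i => ω i)) • (o.elim p0 p) := by
      rw [Fintype.sum_option, hT0s]
      simp only [Option.elim, hv, smul_sub, Finset.sum_sub_distrib, sub_smul, one_smul,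
        Finset.sum_smul]
      abel
    rw [h2]
    refine hKc.sum_mem ?_ ?_ ?_
    · rintro (_ | i) _
      · simpa using h1
      · exact h0 i
    · rw [Fintype.sum_option]; simp
    · rintro (_ | i) _
      · exact subset_closure hp0
      · exact hpK' i
  set r : ℝ := 1 / N ^ 2 with hr
  have hr0 : 0 < r := by positivity
  set ω0 : EuclideanSpace ℝ (Fin n) := WithLp.toLp 2 (fun _ => 1 / N) with hω0
  set T : EuclideanSpace ℝ (Fin n) ≃L[ℝ] EuclideanSpace ℝ (Fin n) :=
    (ContinuousLinearEquiv.smulLeft (Units.mk0 r hr0.ne')).trans T0 with hT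
  have hTa : ∀ ω, T ω = r • T0 ω := by
    intro ω
    simp [hT, ContinuousLinearEquiv.trans_apply]
  have hTs : ∀ y, T.symm y = r⁻¹ • T0.symm y := by
    intro y
    rw [ContinuousLinearEquiv.symm_apply_eq, hTa]
    simp [smul_smul, hr0.ne']
  have hle : ∀ (ω : EuclideanSpace ℝ (Fin n)) i, |ω i| ≤ ‖ω‖ := fun ω i => by
    simpa using PiLp.norm_apply_le ω i
  have hsub : ∀ ω, ‖ω‖ < 1 → p0 + T0 ω0 + T ω ∈ K := by
    intro ω hω
    rw [hTa, add_assoc, ← map_smul, ← map_add]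
    have hb : ∀ i, |r * ω i| ≤ r := by
      intro i
      rw [abs_mul, abs_of_pos hr0]
      have := hle ω i
      nlinarith
    have hrN : r ≤ 1 / N := by
      rw [hr]
      refine one_div_le_one_div_of_le hN0 (by nlinarith)
    refine hTK _ (fun i => ?_) ?_
    · have := (abs_le.1 (hb i)).1
      simp [hω0]
      simp at hrN
      linarith
    · simp only [hω0, PiLp.add_apply, PiLp.smul_apply, smul_eq_mul, Finset.sum_add_distrib]
      have h1 : ∑ i : Fin n, r * ω i ≤ ∑ i : Fin n, r :=
        Finset.sum_le_sum fun i _ => (abs_le.1 (hb i)).2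
      simp only [Finset.sum_const, Finset.card_univ, Fintype.card_fin, nsmul_eq_mul] at h1 ⊢
      have h2 : (n : ℝ) = N - 1 := by simp [hN]
      rw [h2] at h1 ⊢
      have h3 : (N - 1) * (1 / N) + (N - 1) * r ≤ 1 := by
        rw [hr]
        field_simp
        nlinarith
      linarith
  refine ⟨p0 + T0 ω0, T, fun ω hω => ?_, fun y hy => ?_⟩
  · have h1 : (fun ω => p0 + T0 ω0 + T ω) '' ball 0 1 ⊆ interior K := by
      refine interior_maximal ?_ ?_
      · rintro _ ⟨ω, hω, rfl⟩
        exact hsub ω (by simpa using hω)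
      · have : IsOpenMap fun ω => p0 + T0 ω0 + T ω :=
          (isOpenMap_add_left _).comp T.toHomeomorph.isOpenMap
        exact this _ isOpen_ball
    have h2 : interior K = S := by
      rw [hSc.interior_closure_eq_interior_of_nonempty_interior
        (by rw [hSo.interior_eq]; exact ⟨p0, hp0⟩), hSo.interior_eq]
    rw [h2] at h1
    exact h1 ⟨ω, by simpa using hω, rfl⟩
  · have h1 : T.symm (y - (p0 + T0 ω0)) = r⁻¹ • (T0.symm (y - p0) - ω0) := by
      rw [hTs, ← sub_sub, map_sub]
      simp
    rw [h1, norm_smul, norm_inv, Real.norm_of_nonneg hr0.le]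
    have h2 : ‖T0.symm (y - p0) - ω0‖ ≤ 2 * N := by
      calc ‖T0.symm (y - p0) - ω0‖
          ≤ ∑ i, ‖(T0.symm (y - p0) - ω0) i • (EuclideanSpace.single i (1 : ℝ) :
              EuclideanSpace ℝ (Fin n))‖ := by
            conv_lhs => rw [euclid_eq_sum (T0.symm (y - p0) - ω0)]
            exact norm_sum_le _ _
        _ ≤ ∑ i : Fin n, (2 : ℝ) := by
            refine Finset.sum_le_sum fun i _ => ?_
            rw [norm_smul]
            simp only [PiLp.sub_apply, hω0, PiLp.norm_single, norm_one, mul_one,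
              Real.norm_eq_abs]
            have h3 := abs_sub (T0.symm (y - p0) i) (1 / N)
            have h4 := hcoord y (subset_closure hy) i
            have h5 : |1 / N| ≤ 1 := by
              rw [abs_of_pos (by positivity)]
              exact (div_le_one hN0).2 hN1
            linarith
        _ = 2 * n := by simp [mul_comm]
        _ ≤ 2 * N := by simp [hN]
    calc r⁻¹ * ‖T0.symm (y - p0) - ω0‖ ≤ r⁻¹ * (2 * N) := by gcongr
      _ = 2 * N ^ 3 := by rw [hr]; field_simp

end John

/-! ### Alexandrov estimates -/

section Alexandrov

variable {n : ℕ} {u : EuclideanSpace ℝ (Fin n) → ℝ} {Ω : Set (EuclideanSpace ℝ (Fin n))}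
  {lam Lam : ℝ}

/-- The section of `u` below the affine function `L + c`. -/
def sec (Ω : Set (EuclideanSpace ℝ (Fin n))) (u : EuclideanSpace ℝ (Fin n) → ℝ)
    (L : EuclideanSpace ℝ (Fin n) →L[ℝ] ℝ) (c : ℝ) : Set (EuclideanSpace ℝ (Fin n)) :=
  {y | y ∈ Ω ∧ u y < L y + c}

lemma sec_subset {L : EuclideanSpace ℝ (Fin n) →L[ℝ] ℝ} {c : ℝ} : sec Ω u L c ⊆ Ω :=
  fun _ hy => hy.1

namespace MASol

lemma isOpen_sec (h : MASol Ω lam Lam u) (L : EuclideanSpace ℝ (Fin n) →L[ℝ] ℝ) (c : ℝ) :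
    IsOpen (sec Ω u L c) := by
  have : sec Ω u L c = Ω ∩ (fun y => u y - L y) ⁻¹' Iio c := by
    ext y
    simp only [sec, mem_ofPred_eq, mem_inter_iff, mem_preimage, mem_Iio]
    constructor <;> rintro ⟨h1, h2⟩ <;> exact ⟨h1, by linarith⟩
  rw [this]
  exact (h.continuousOn.sub L.continuous.continuousOn).isOpen_inter_preimage h.isOpen isOpen_Iio

lemma convex_sec (h : MASol Ω lam Lam u) (L : EuclideanSpace ℝ (Fin n) →L[ℝ] ℝ) (c : ℝ) :
    Convex ℝ (sec Ω u L c) := by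
  intro x hx y hy a b ha hb hab
  refine ⟨h.conv hx.1 hy.1 ha hb hab, ?_⟩
  have h1 := h.cvx.2 hx.1 hy.1 ha hb hab
  simp only [smul_eq_mul, map_add, map_smul] at h1 ⊢
  have h2 := hx.2
  have h3 := hy.2
  have hc : c = a * c + b * c := by rw [← add_mul, hab, one_mul]
  rcases eq_or_lt_of_le ha with ha' | ha'
  · have : b = 1 := by linarith
    subst this
    rw [← ha'] at h1 ⊢
    linarith
  · nlinarith

lemma bdd_sec (h : MASol Ω lam Lam u) (L : EuclideanSpace ℝ (Fin n) →L[ℝ] ℝ) (c : ℝ) :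
    Bornology.IsBounded (sec Ω u L c) := h.bdd.subset sec_subset

/-- Slopes of planes which, raised until they touch the graph of `u` from below, touch it inside
the domain `S`. -/
lemma exists_touching (h : MASol Ω lam Lam u) {S : Set (EuclideanSpace ℝ (Fin n))}
    (hSo : IsOpen S) (hSΩ : S ⊆ Ω) (hScont : ContinuousOn u (closure S))
    {L : EuclideanSpace ℝ (Fin n) →L[ℝ] ℝ} {c : ℝ}
    (hbd : ∀ y ∈ closure S, y ∉ S → L y + c ≤ u y)
    {x₀ : EuclideanSpace ℝ (Fin n)} (hx₀ : x₀ ∈ S) {m : ℝ} (hm : m ≤ L x₀ + c - u x₀)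
    {q : EuclideanSpace ℝ (Fin n) →L[ℝ] ℝ} (hq : ∀ y ∈ closure S, q (y - x₀) < m) :
    ∃ y ∈ S, fderiv ℝ u y = L + q := by
  have hK : IsCompact (closure S) := (h.bdd.subset hSΩ).isCompact_closure
  obtain ⟨y, hyK, hy⟩ := hK.exists_isMinOn ⟨x₀, subset_closure hx₀⟩
    (hScont.sub (L + q).continuous.continuousOn)
  have hyS : y ∈ S := by
    by_contra hyS
    have h1 := hy (subset_closure hx₀)
    have h2 := hq y hyK
    have h3 := hbd y hyK hyS
    simp only [mem_ofPred_eq, _root_.add_apply, Pi.sub_apply, map_sub] at h1 h2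
    linarith
  refine ⟨y, hyS, ?_⟩
  have hloc : IsLocalMin (u - ⇑(L + q)) y :=
    hy.isLocalMin (Filter.mem_of_superset (hSo.mem_nhds hyS) subset_closure)
  have hd : HasFDerivAt (u - ⇑(L + q)) (fderiv ℝ u y - (L + q)) y :=
    (h.differentiableAt (hSΩ hyS)).hasFDerivAt.sub (L + q).hasFDerivAt
  have := hloc.hasFDerivAt_eq_zero hd
  exact sub_eq_zero.1 this

/-- The volume of a set of slopes, read in the coordinates `T`, is controlled by `det D²u`. -/
lemma volume_slopes_le (h : MASol Ω lam Lam u) {S Q : Set (EuclideanSpace ℝ (Fin n))}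
    (hSo : IsOpen S) (hSΩ : S ⊆ Ω) (L : EuclideanSpace ℝ (Fin n) →L[ℝ] ℝ)
    (T : EuclideanSpace ℝ (Fin n) ≃L[ℝ] EuclideanSpace ℝ (Fin n))
    (hQ : ∀ q ∈ Q, ∃ y ∈ S, ∀ v, fderiv ℝ u y (T v) = L (T v) + inner ℝ q v) :
    volume Q ≤ ENNReal.ofReal (Lam * |detT T|) * volume S := by
  set D := (InnerProductSpace.toDual ℝ (EuclideanSpace ℝ (Fin n))).symm with hD
  set M : (EuclideanSpace ℝ (Fin n) →L[ℝ] ℝ) →L[ℝ] EuclideanSpace ℝ (Fin n) :=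
    LinearMap.toContinuousLinearMap
      { toFun := fun p => D (p.comp
          (T : EuclideanSpace ℝ (Fin n) →L[ℝ] EuclideanSpace ℝ (Fin n)))
        map_add' := fun p q => by rw [ContinuousLinearMap.add_comp, map_add]
        map_smul' := fun r p => by
          rw [ContinuousLinearMap.smul_comp, map_smulₛₗ]; simp } with hM
  have hMi : ∀ p v, inner ℝ (M p) v = p (T v) := by
    intro p v
    simp [hM, hD]
  have hd : ∀ y ∈ S, HasFDerivWithinAt (fun y => M (fderiv ℝ u y - L)) (M.comp (hessB u y)) S y := by
    intro y hy
    exact (M.hasFDerivAt.comp y ((h.hasFDerivAt_fderiv (hSΩ hy)).sub_const L)).hasFDerivWithinAt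
  have hdet : ∀ y ∈ S, |(M.comp (hessB u y)).det| ≤ Lam * |detT T| := by
    intro y hy
    set b := (EuclideanSpace.basisFun (Fin n) ℝ).toBasis
    have h1 : (M.comp (hessB u y)).det = hessDet u y * detT T := by
      rw [ContinuousLinearMap.det, ← LinearMap.det_toMatrix b]
      have h2 : LinearMap.toMatrix b b ((M.comp (hessB u y) :
          EuclideanSpace ℝ (Fin n) →L[ℝ] EuclideanSpace ℝ (Fin n)) : _ →ₗ[ℝ] _)
          = (LinearMap.toMatrix b b ((T : EuclideanSpace ℝ (Fin n) →L[ℝ] EuclideanSpace ℝ (Fin n)) :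
            EuclideanSpace ℝ (Fin n) →ₗ[ℝ] EuclideanSpace ℝ (Fin n))).transpose
            * (hessMatrix u y).transpose := by
        ext i j
        rw [Matrix.mul_apply]
        simp only [Matrix.transpose_apply, LinearMap.toMatrix_apply, hessMatrix_apply]
        have h3 : ∀ v : EuclideanSpace ℝ (Fin n), b.repr v i = inner ℝ v (EuclideanSpace.single i 1) := by
          intro v
          simp [b, EuclideanSpace.inner_single_right]
        rw [h3]
        have hbj : ∀ j, b j = EuclideanSpace.single j 1 := fun j => by simp [b]
        simp only [hbj, ContinuousLinearMap.coe_coe, ContinuousLinearMap.comp_apply,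
          hMi]
        conv_lhs => rw [euclid_eq_sum (T (EuclideanSpace.single i 1))]
        simp [map_sum, b]
      rw [h2, Matrix.det_mul, Matrix.det_transpose, Matrix.det_transpose, LinearMap.det_toMatrix,
        mul_comm]
      rfl
    rw [h1, abs_mul, abs_of_pos (h.lam_pos.trans_le (h.det_lb y (hSΩ hy)))]
    gcongr
    exact h.det_ub y (hSΩ hy)
  calc volume Q ≤ volume ((fun y => M (fderiv ℝ u y - L)) '' S) := by
        refine measure_mono fun q hq => ?_
        obtain ⟨y, hy, hv⟩ := hQ q hq
        refine ⟨y, hy, ?_⟩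
        refine ext_inner_right ℝ fun v => ?_
        simp only [hMi, _root_.sub_apply, hv]
        ring
    _ ≤ ∫⁻ y in S, ENNReal.ofReal |(M.comp (hessB u y)).det| :=
        addHaar_image_le_lintegral_abs_det_fderiv _ hSo.measurableSet hd
    _ ≤ ∫⁻ y in S, ENNReal.ofReal (Lam * |detT T|) :=
        setLIntegral_mono' hSo.measurableSet fun y hy => ENNReal.ofReal_le_ofReal (hdet y hy)
    _ = _ := by simp

/-- The Alexandrov estimate in a domain `S` which, in the coordinates `T`, has size `R` and lies
within distance `d` of `x₀` in the direction `e`. -/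
lemma alexandrov_slab (h : MASol Ω lam Lam u) {S : Set (EuclideanSpace ℝ (Fin n))}
    (hSo : IsOpen S) (hSΩ : S ⊆ Ω) (hScont : ContinuousOn u (closure S))
    {L : EuclideanSpace ℝ (Fin n) →L[ℝ] ℝ} {c : ℝ}
    (hbd : ∀ y ∈ closure S, y ∉ S → L y + c ≤ u y)
    {x₀ : EuclideanSpace ℝ (Fin n)} (hx₀ : x₀ ∈ S) {m : ℝ} (hm0 : 0 < m)
    (hm : m ≤ L x₀ + c - u x₀)
    (T : EuclideanSpace ℝ (Fin n) ≃L[ℝ] EuclideanSpace ℝ (Fin n))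
    {z : EuclideanSpace ℝ (Fin n)} {R d : ℝ} (hR : 0 < R) (hd : 0 < d)
    (hTR : ∀ y ∈ S, ‖T.symm (y - z)‖ ≤ R)
    {e : EuclideanSpace ℝ (Fin n)} (he : ‖e‖ = 1)
    (hTe : ∀ y ∈ S, inner ℝ e (T.symm (y - x₀)) ≤ d) :
    m ^ n * (1 + R / d) ≤ (8 * R ^ 2) ^ n * Lam * detT T ^ 2 := by
  have hne : Nontrivial (EuclideanSpace ℝ (Fin n)) :=
    ⟨e, 0, by rintro rfl; simp at he⟩
  set k := R / d with hk
  have hk0 : 0 < k := by positivity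
  set ρ := m / (8 * R) with hρ
  have hρ0 : 0 < ρ := by positivity
  set A : EuclideanSpace ℝ (Fin n) →ₗ[ℝ] EuclideanSpace ℝ (Fin n) :=
    LinearMap.transvection (k • (innerₛₗ ℝ e)) e with hA
  have hAdet : LinearMap.det A = 1 + k := by
    rw [hA, LinearMap.transvection.det]
    simp [he]
  have hAapp : ∀ p, A p = p + (k * inner ℝ e p) • e := fun p => by
    simp [hA, LinearMap.transvection]
  have hTR' : ∀ y ∈ closure S, ‖T.symm (y - z)‖ ≤ R := fun y hy => by
    have hcl : IsClosed {y | ‖T.symm (y - z)‖ ≤ R} :=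
      isClosed_le (by fun_prop) continuous_const
    exact closure_minimal hTR hcl hy
  have hTe' : ∀ y ∈ closure S, inner ℝ e (T.symm (y - x₀)) ≤ d := fun y hy => by
    have hcl : IsClosed {y | inner ℝ e (T.symm (y - x₀)) ≤ d} :=
      isClosed_le (by fun_prop) continuous_const
    exact closure_minimal hTe hcl hy
  have hslopes : volume (A '' ball (ρ • e) ρ) ≤ ENNReal.ofReal (Lam * |detT T|) * volume S := by
    refine h.volume_slopes_le hSo hSΩ L T ?_
    rintro _ ⟨p, hp, rfl⟩
    have hpn : ‖p‖ ≤ 2 * ρ := by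
      have h1 : ‖p - ρ • e‖ < ρ := by simpa [dist_eq_norm] using hp
      have h2 : ‖ρ • e‖ = ρ := by rw [norm_smul, he, Real.norm_of_nonneg hρ0.le, mul_one]
      have h3 := norm_add_le (p - ρ • e) (ρ • e)
      rw [sub_add_cancel] at h3
      linarith
    have hpe : 0 ≤ inner ℝ e p := by
      have h1 : ‖p - ρ • e‖ < ρ := by simpa [dist_eq_norm] using hp
      have h2 := (abs_le.1 (abs_real_inner_le_norm e (p - ρ • e))).1
      rw [he, one_mul, inner_sub_right, inner_smul_right, real_inner_self_eq_norm_sq, he] at h2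
      linarith
    have hpe2 : inner ℝ e p ≤ 2 * ρ := by
      have := real_inner_le_norm e p
      rw [he, one_mul] at this
      linarith
    have hq : ∀ y ∈ closure S, ((innerSL ℝ (A p)).comp
        (T.symm : EuclideanSpace ℝ (Fin n) →L[ℝ] EuclideanSpace ℝ (Fin n))) (y - x₀) < m := by
      intro y hy
      simp only [ContinuousLinearMap.comp_apply, ContinuousLinearEquiv.coe_coe,
        innerSL_apply_apply, hAapp, inner_add_left, inner_smul_left]
      have h1 : ‖T.symm (y - x₀)‖ ≤ 2 * R := by
        have h2 : T.symm (y - x₀) = T.symm (y - z) - T.symm (x₀ - z) := by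
          rw [← map_sub]; congr 1; abel
        rw [h2]
        exact (norm_sub_le _ _).trans (by linarith [hTR' y hy, hTR x₀ hx₀])
      have h2 : inner ℝ p (T.symm (y - x₀)) ≤ 2 * ρ * (2 * R) :=
        (real_inner_le_norm _ _).trans (by gcongr)
      have h3 : k * inner ℝ e p * inner ℝ e (T.symm (y - x₀)) ≤ k * (2 * ρ) * d :=
        (mul_le_mul_of_nonneg_left (hTe' y hy) (by positivity)).trans (by gcongr)
      have h4 : k * (2 * ρ) * d = 2 * ρ * R := by rw [hk]; field_simp
      have h5 : ρ * R = m / 8 := by rw [hρ]; field_simp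
      simp only [RCLike.conj_to_real]
      nlinarith
    obtain ⟨y, hy, hyq⟩ := h.exists_touching hSo hSΩ hScont hbd hx₀ hm hq
    refine ⟨y, hy, fun v => ?_⟩
    rw [hyq]
    simp
  have hS : volume S ≤ ENNReal.ofReal (|detT T| * R ^ n)
      * volume (ball (0 : EuclideanSpace ℝ (Fin n)) 1) := by
    have h1 : S ⊆ (fun y => z + y) '' (T '' closedBall 0 R) := by
      intro y hy
      refine ⟨y - z, ⟨T.symm (y - z), ?_, by simp⟩, by simp⟩
      simpa using hTR y hy
    refine (measure_mono h1).trans ?_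
    rw [image_add_left, measure_preimage_add]
    have h2 := Measure.addHaar_image_continuousLinearMap volume
      (T : EuclideanSpace ℝ (Fin n) →L[ℝ] EuclideanSpace ℝ (Fin n)) (closedBall 0 R)
    simp only [ContinuousLinearEquiv.coe_coe] at h2
    rw [h2, Measure.addHaar_closedBall _ _ hR.le, finrank_euclideanSpace_fin, ← mul_assoc,
      ← ENNReal.ofReal_mul (abs_nonneg _)]
    exact le_rfl
  rw [Measure.addHaar_image_linearMap, hAdet, Measure.addHaar_ball_of_pos _ _ hρ0,
    finrank_euclideanSpace_fin, ← mul_assoc, ← ENNReal.ofReal_mul (abs_nonneg _)] at hslopes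
  have hfin := hslopes.trans (mul_le_mul_right hS _)
  rw [← mul_assoc, ← ENNReal.ofReal_mul (by have := h.lam_pos.le.trans h.lam_le; positivity)] at hfin
  have hω0 : volume (ball (0 : EuclideanSpace ℝ (Fin n)) 1) ≠ 0 := (measure_ball_pos _ _ one_pos).ne'
  have hωt : volume (ball (0 : EuclideanSpace ℝ (Fin n)) 1) ≠ ⊤ := measure_ball_lt_top.ne
  rw [ENNReal.mul_le_mul_iff_left hω0 hωt, ENNReal.ofReal_le_ofReal_iff
    (by have := h.lam_pos.le.trans h.lam_le; positivity), abs_of_pos (by positivity)] at hfin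
  have hm' : m ^ n = (8 * R) ^ n * ρ ^ n := by
    rw [← mul_pow, hρ]; congr 1; field_simp
  calc m ^ n * (1 + k) = (8 * R) ^ n * ((1 + k) * ρ ^ n) := by rw [hm']; ring
    _ ≤ (8 * R) ^ n * (Lam * |detT T| * (|detT T| * R ^ n)) := by gcongr
    _ = (8 * R ^ 2) ^ n * Lam * |detT T| ^ 2 := by
      rw [show (8 * R ^ 2) ^ n = (8 * R) ^ n * R ^ n by rw [← mul_pow]; ring]; ring
    _ = _ := by rw [sq_abs]

/-- If `u ≤ L + c` on an ellipsoid at whose centre `L + c - u ≤ H`, the ellipsoid is small: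
comparison of `u` with a paraboloid. -/
lemma lam_mul_detT_sq_le (h : MASol Ω lam Lam u) {L : EuclideanSpace ℝ (Fin n) →L[ℝ] ℝ} {c H : ℝ}
    (hH : 0 < H) (T : EuclideanSpace ℝ (Fin n) ≃L[ℝ] EuclideanSpace ℝ (Fin n))
    {z : EuclideanSpace ℝ (Fin n)} (hT : ∀ ω, ‖ω‖ < 1 → z + T ω ∈ Ω)
    (hle : ∀ ω, ‖ω‖ < 1 → u (z + T ω) ≤ L (z + T ω) + c) (hz : L z + c - u z ≤ H) :
    lam * detT T ^ 2 ≤ (4 * H) ^ n := by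
  set ψ : EuclideanSpace ℝ (Fin n) → ℝ :=
    fun ω => u (z + T ω) - (L (z + T ω) + c) - 2 * H * ‖ω‖ ^ 2 with hψ
  have hψc : ContinuousOn ψ (closedBall 0 (3 / 4)) := by
    have h1 : ContinuousOn (fun ω => u (z + T ω)) (closedBall 0 (3 / 4)) := by
      refine h.continuousOn.comp (by fun_prop) fun ω hω => hT ω ?_
      have : ‖ω‖ ≤ 3 / 4 := by simpa using hω
      linarith
    exact (h1.sub (by fun_prop)).sub (by fun_prop)
  obtain ⟨ω, hω, hmax⟩ := (isCompact_closedBall (0 : EuclideanSpace ℝ (Fin n)) (3 / 4)).exists_isMaxOn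
    ⟨0, by norm_num⟩ hψc
  have hω1 : ‖ω‖ ≤ 3 / 4 := by simpa using hω
  have hω' : ‖ω‖ < 3 / 4 := by
    refine lt_of_le_of_ne hω1 fun heq => ?_
    have h1 : ψ 0 ≤ ψ ω := hmax (by norm_num)
    have h2 := hle ω (by linarith)
    simp only [hψ, heq, map_zero, add_zero, norm_zero] at h1
    nlinarith
  have hx : z + T ω ∈ Ω := hT ω (by linarith)
  have hloc : IsLocalMax ψ ω :=
    hmax.isLocalMax (Filter.mem_of_superset (isOpen_ball.mem_nhds (by simpa using hω'))
      ball_subset_closedBall)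
  have hq : ∀ v : EuclideanSpace ℝ (Fin n), hessB u (z + T ω) (T v) (T v) ≤ 4 * H * ‖v‖ ^ 2 := by
    intro v
    have := h.le_hessB_of_localMin hx (T v) (-(L (T v)) - 4 * H * inner ℝ ω v) (-(2 * H * ‖v‖ ^ 2))
      (-1) ?_
    · linarith
    have hc : ContinuousAt (fun t : ℝ => ω + t • v) 0 := by fun_prop
    have h0 : Filter.Tendsto (fun t : ℝ => ω + t • v) (nhds 0) (nhds ω) := by
      simpa [ContinuousAt] using hc
    filter_upwards [h0.eventually hloc] with t ht
    simp only [hψ, map_add, map_smul, smul_eq_mul, norm_add_sq_real, inner_smul_right, norm_smul,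
      mul_pow, Real.norm_eq_abs, sq_abs] at ht ⊢
    simp only [zero_smul, add_zero]
    rw [← add_assoc] at ht
    nlinarith
  have hp := h.pullHess_posSemidef hx T
  have := det_le_pow_of_quad_le hp (s := 4 * H) (fun v => by
    rw [← hessB_eq_pullHess]; exact hq v)
  rw [det_pullHess] at this
  have h2 := h.det_lb _ hx
  nlinarith [sq_nonneg (detT T)]

end MASol

end Alexandrov

/-! ### Ellipsoids adapted to sections -/

section Ellipsoid

variable {n : ℕ} {u : EuclideanSpace ℝ (Fin n) → ℝ} {Ω : Set (EuclideanSpace ℝ (Fin n))}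
  {lam Lam : ℝ}

lemma MASol.sec_boundary {L : EuclideanSpace ℝ (Fin n) →L[ℝ] ℝ} {c : ℝ}
    (hcl : closure (sec Ω u L c) ⊆ Ω) :
    ∀ y ∈ closure (sec Ω u L c), y ∉ sec Ω u L c → L y + c ≤ u y := by
  intro y hy hys
  by_contra hlt
  exact hys ⟨hcl hy, by linarith⟩

lemma detT_smul {r : ℝ} (hr : r ≠ 0) (T : EuclideanSpace ℝ (Fin n) ≃L[ℝ] EuclideanSpace ℝ (Fin n)) :
    detT ((ContinuousLinearEquiv.smulLeft (Units.mk0 r hr)).trans T) = r ^ n * detT T := by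
  have h1 : (((ContinuousLinearEquiv.smulLeft (Units.mk0 r hr)).trans T :
      EuclideanSpace ℝ (Fin n) →L[ℝ] EuclideanSpace ℝ (Fin n)) :
      EuclideanSpace ℝ (Fin n) →ₗ[ℝ] EuclideanSpace ℝ (Fin n)) =
      r • ((T : EuclideanSpace ℝ (Fin n) →L[ℝ] EuclideanSpace ℝ (Fin n)) :
        EuclideanSpace ℝ (Fin n) →ₗ[ℝ] EuclideanSpace ℝ (Fin n)) := by
    ext v
    simp [Units.smul_def]
  rw [detT, h1, LinearMap.det_smul, finrank_euclideanSpace_fin, detT]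

/-- `K` and `c₁` are admissible constants for the balance of compactly contained sections: a section
of height `H` contains, around each of its points of depth at least `H / 2`, a translate of one
fixed ellipsoid, a multiple of which contains the section, and which has volume at least of order
`H ^ (n / 2)`. -/
structure BalancedConst (n : ℕ) (lam Lam K c₁ : ℝ) : Prop where
  one_le : 1 ≤ K
  pos : 0 < c₁
  lam_pos : 0 < lam
  exists_ellipsoid : ∀ (Ω : Set (EuclideanSpace ℝ (Fin n))) (u : EuclideanSpace ℝ (Fin n) → ℝ),
    MASol Ω lam Lam u → ∀ (L : EuclideanSpace ℝ (Fin n) →L[ℝ] ℝ) (c H : ℝ), 0 < H →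
    closure (sec Ω u L c) ⊆ Ω → (∀ y ∈ sec Ω u L c, L y + c - u y ≤ H) →
    (∃ y ∈ sec Ω u L c, H / 2 ≤ L y + c - u y) →
    ∃ T : EuclideanSpace ℝ (Fin n) ≃L[ℝ] EuclideanSpace ℝ (Fin n),
      (∀ y ∈ sec Ω u L c, H / 2 ≤ L y + c - u y → ∀ ω, ‖ω‖ < 1 → y + T ω ∈ sec Ω u L c) ∧
      (∀ y ∈ sec Ω u L c, ∀ y' ∈ sec Ω u L c, ‖T.symm (y' - y)‖ ≤ K) ∧
      c₁ * H ^ n ≤ detT T ^ 2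

lemma exists_balanced (hn : 1 ≤ n) (hlam : 0 < lam) (hle : lam ≤ Lam) :
    ∃ K c₁, BalancedConst n lam Lam K c₁ := by
  obtain ⟨R, hR1, hJ⟩ := exists_john n
  have hR0 : 0 < R := by linarith
  have hLam : 0 < Lam := hlam.trans_le hle
  set M : ℝ := (64 * R ^ 2) ^ n * (Lam / lam) with hM
  have hM1 : 1 ≤ M := by
    have h1 : 1 ≤ Lam / lam := (one_le_div hlam).2 hle
    have h2 : 1 ≤ (64 * R ^ 2) ^ n := one_le_pow₀ (by nlinarith)
    nlinarith
  set κ : ℝ := R / M with hκ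
  have hκ0 : 0 < κ := by positivity
  set c₁ : ℝ := (κ ^ n) ^ 2 / ((16 * R ^ 2) ^ n * Lam) with hc₁
  refine ⟨2 * M, c₁, by linarith, by positivity, hlam, ?_⟩
  intro Ω u h L c H hH hcl hHle ⟨y₀, hy₀, hy₀d⟩
  have hSo := h.isOpen_sec L c
  have hSc := h.convex_sec L c
  have hScont : ContinuousOn u (closure (sec Ω u L c)) := h.continuousOn.mono hcl
  obtain ⟨z, T₀, hT₀, hT₀R⟩ := hJ _ hSo hSc (h.bdd_sec L c) ⟨y₀, hy₀⟩
  have hz : z ∈ sec Ω u L c := by simpa using hT₀ 0 (by simp)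
  have hup : lam * detT T₀ ^ 2 ≤ (4 * H) ^ n :=
    h.lam_mul_detT_sq_le hH T₀ (fun ω hω => (hT₀ ω hω).1) (fun ω hω => (hT₀ ω hω).2.le) (hHle z hz)
  set T : EuclideanSpace ℝ (Fin n) ≃L[ℝ] EuclideanSpace ℝ (Fin n) :=
    (ContinuousLinearEquiv.smulLeft (Units.mk0 κ hκ0.ne')).trans T₀ with hT
  have hTa : ∀ ω, T ω = T₀ (κ • ω) := by
    intro ω
    simp [hT, ContinuousLinearEquiv.trans_apply, Units.smul_def]
  have hTs : ∀ y, T.symm y = κ⁻¹ • T₀.symm y := by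
    intro y
    rw [ContinuousLinearEquiv.symm_apply_eq, hTa]
    simp [smul_smul, hκ0.ne']
  have hdiff : ∀ y ∈ sec Ω u L c, ∀ y' ∈ sec Ω u L c, ‖T₀.symm (y' - y)‖ ≤ 2 * R := by
    intro y hy y' hy'
    have h2 : T₀.symm (y' - y) = T₀.symm (y' - z) - T₀.symm (y - z) := by
      rw [← map_sub]; congr 1; abel
    rw [h2]
    exact (norm_sub_le _ _).trans (by linarith [hT₀R y hy, hT₀R y' hy'])
  refine ⟨T, ?_, ?_, ?_⟩
  · intro y hy hyd ω hω
    by_contra hout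
    obtain ⟨f, hf⟩ := geometric_hahn_banach_open_point hSc hSo hout
    set g : EuclideanSpace ℝ (Fin n) := (InnerProductSpace.toDual ℝ (EuclideanSpace ℝ (Fin n))).symm
      (f.comp (T₀ : EuclideanSpace ℝ (Fin n) →L[ℝ] EuclideanSpace ℝ (Fin n))) with hg
    have hgi : ∀ v, inner ℝ g v = f (T₀ v) := fun v => by simp [hg]
    have hgω : ∀ a ∈ sec Ω u L c, inner ℝ g (T₀.symm (a - y)) < inner ℝ g (κ • ω) := by
      intro a ha
      have := hf a ha
      rw [hgi, hgi, T₀.apply_symm_apply, ← hTa, map_sub]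
      rw [map_add] at this
      linarith
    have hg0 : g ≠ 0 := by
      intro h0
      have := hgω y hy
      simp [h0] at this
    have hgn : 0 < ‖g‖ := norm_pos_iff.2 hg0
    set e := ‖g‖⁻¹ • g with he
    have hen : ‖e‖ = 1 := by rw [he, norm_smul, norm_inv, norm_norm, inv_mul_cancel₀ hgn.ne']
    have hslab : ∀ a ∈ sec Ω u L c, inner ℝ e (T₀.symm (a - y)) ≤ κ := by
      intro a ha
      rw [he, inner_smul_left, RCLike.conj_to_real]
      have h1 : inner ℝ g (κ • ω) ≤ ‖g‖ * κ := by
        refine (real_inner_le_norm _ _).trans ?_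
        rw [norm_smul, Real.norm_of_nonneg hκ0.le]
        gcongr
        nlinarith
      calc ‖g‖⁻¹ * inner ℝ g (T₀.symm (a - y)) ≤ ‖g‖⁻¹ * (‖g‖ * κ) := by
            gcongr
            exact (hgω a ha).le.trans h1
        _ = κ := by field_simp
    have h1 := h.alexandrov_slab hSo sec_subset hScont (MASol.sec_boundary hcl) hy
      (by positivity : 0 < H / 2) hyd T₀ hR0 hκ0 hT₀R hen hslab
    have h2 : R / κ = M := by rw [hκ]; field_simp
    rw [h2] at h1
    -- the two estimates for `detT T₀` contradict each other
    have h3 : (8 * R ^ 2) ^ n * Lam * detT T₀ ^ 2 ≤ (H / 2) ^ n * M := by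
      calc (8 * R ^ 2) ^ n * Lam * detT T₀ ^ 2
          = (8 * R ^ 2) ^ n * (Lam / lam) * (lam * detT T₀ ^ 2) := by field_simp
        _ ≤ (8 * R ^ 2) ^ n * (Lam / lam) * (4 * H) ^ n := by gcongr
        _ = (H / 2) ^ n * M := by
          rw [hM, show (4 * H) ^ n = 8 ^ n * (H / 2) ^ n by rw [← mul_pow]; congr 1; ring,
            show (64 * R ^ 2) ^ n = 8 ^ n * (8 * R ^ 2) ^ n by rw [← mul_pow]; congr 1; ring]
          ring
    have h4 : 0 < (H / 2) ^ n := by positivity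
    nlinarith
  · intro y hy y' hy'
    rw [hTs, norm_smul, norm_inv, Real.norm_of_nonneg hκ0.le]
    calc κ⁻¹ * ‖T₀.symm (y' - y)‖ ≤ κ⁻¹ * (2 * R) := by
          gcongr
          exact hdiff y hy y' hy'
      _ = 2 * M := by rw [hκ]; field_simp
  · have hen : ‖(EuclideanSpace.single (⟨0, hn⟩ : Fin n) (1 : ℝ))‖ = 1 := by simp
    have hslab : ∀ a ∈ sec Ω u L c, inner ℝ (EuclideanSpace.single (⟨0, hn⟩ : Fin n) (1 : ℝ))
        (T₀.symm (a - y₀)) ≤ 2 * R := by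
      intro a ha
      refine (real_inner_le_norm _ _).trans ?_
      rw [hen, one_mul]
      exact hdiff _ hy₀ _ ha
    have h1 := h.alexandrov_slab hSo sec_subset hScont (MASol.sec_boundary hcl) hy₀
      (by positivity : 0 < H / 2) hy₀d T₀ hR0 (by positivity : 0 < 2 * R) hT₀R hen hslab
    have h2 : (H / 2) ^ n ≤ (8 * R ^ 2) ^ n * Lam * detT T₀ ^ 2 := by
      refine le_trans ?_ h1
      have : 0 ≤ R / (2 * R) := by positivity
      have : 0 < (H / 2) ^ n := by positivity
      nlinarith
    rw [hT, detT_smul, mul_pow, hc₁, div_mul_eq_mul_div, div_le_iff₀ (by positivity)]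
    calc (κ ^ n) ^ 2 * H ^ n = (κ ^ n) ^ 2 * (2 ^ n * (H / 2) ^ n) := by
          rw [← mul_pow]; congr 2; ring
      _ ≤ (κ ^ n) ^ 2 * (2 ^ n * ((8 * R ^ 2) ^ n * Lam * detT T₀ ^ 2)) := by gcongr
      _ = _ := by
        rw [show (16 * R ^ 2) ^ n = 2 ^ n * (8 * R ^ 2) ^ n by rw [← mul_pow]; congr 1; ring]
        ring

/-- A chord of a section through a deep point `y` extends beyond `y` by a fixed proportion. -/
lemma BalancedConst.extend {K c₁ : ℝ} (hB : BalancedConst n lam Lam K c₁) (h : MASol Ω lam Lam u)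
    {L : EuclideanSpace ℝ (Fin n) →L[ℝ] ℝ} {c H : ℝ} (hH : 0 < H)
    (hcl : closure (sec Ω u L c) ⊆ Ω) (hHle : ∀ y ∈ sec Ω u L c, L y + c - u y ≤ H)
    {y z : EuclideanSpace ℝ (Fin n)} (hy : y ∈ sec Ω u L c) (hyd : H / 2 ≤ L y + c - u y)
    (hz : z ∈ sec Ω u L c) : y + (2 * K)⁻¹ • (y - z) ∈ sec Ω u L c := by
  obtain ⟨T, h1, h2, -⟩ := hB.exists_ellipsoid Ω u h L c H hH hcl hHle ⟨y, hy, hyd⟩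
  have hK := hB.one_le
  have := h1 y hy hyd (T.symm ((2 * K)⁻¹ • (y - z))) ?_
  · simpa using this
  rw [map_smul, norm_smul, Real.norm_of_nonneg (by positivity)]
  calc (2 * K)⁻¹ * ‖T.symm (y - z)‖ ≤ (2 * K)⁻¹ * K := by
        gcongr
        exact h2 z hz y hy
    _ < 1 := by field_simp; norm_num

end Ellipsoid

/-! ### Localization: tangent planes stay below the boundary values -/

/-- Convex solutions which vanish on the boundary. -/
structure MADir {n : ℕ} (Ω : Set (EuclideanSpace ℝ (Fin n))) (lam Lam : ℝ)
    (u : EuclideanSpace ℝ (Fin n) → ℝ) : Prop extends MASol Ω lam Lam u where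
  dim_pos : 1 ≤ n
  cont : ContinuousOn u (closure Ω)
  bdry : ∀ x ∈ frontier Ω, u x = 0

/-- The points of `Ω` at distance at least `δ` from its complement. -/
def inner' {n : ℕ} (Ω : Set (EuclideanSpace ℝ (Fin n))) (δ : ℝ) : Set (EuclideanSpace ℝ (Fin n)) :=
  {x | ball x δ ⊆ Ω}

section Localization

variable {n : ℕ} {u : EuclideanSpace ℝ (Fin n) → ℝ} {Ω : Set (EuclideanSpace ℝ (Fin n))}
  {lam Lam : ℝ}

lemma inner'_subset {δ : ℝ} (hδ : 0 < δ) : inner' Ω δ ⊆ Ω := fun _ hx => hx (mem_ball_self hδ)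

lemma isClosed_inner' (δ : ℝ) : IsClosed (inner' Ω δ) := by
  have : inner' Ω δ = ⋂ y ∈ Ωᶜ, {x | δ ≤ dist y x} := by
    ext x
    simp only [inner', mem_ofPred_eq, mem_iInter, mem_compl_iff]
    constructor
    · intro hx y hy
      by_contra hlt
      exact hy (hx (by simpa using hlt))
    · intro hx y hy
      by_contra hy'
      have := hx y hy'
      simp only [mem_ball] at hy
      linarith
  rw [this]
  exact isClosed_biInter fun y _ => isClosed_le continuous_const (by fun_prop)

namespace MADir

lemma tangent_le_closure (h : MADir Ω lam Lam u) {x y : EuclideanSpace ℝ (Fin n)} (hx : x ∈ Ω)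
    (hy : y ∈ closure Ω) : u x + fderiv ℝ u x (y - x) ≤ u y := by
  refine ContinuousWithinAt.closure_le (s := Ω) (f := fun y => u x + fderiv ℝ u x (y - x)) hy ?_
    ((h.cont y hy).mono subset_closure) fun z hz => h.tangent_le hx hz
  exact Continuous.continuousWithinAt (by fun_prop)

lemma convex_closure (h : MADir Ω lam Lam u) {x y : EuclideanSpace ℝ (Fin n)} (hx : x ∈ Ω)
    (hy : y ∈ closure Ω) {t : ℝ} (ht0 : 0 ≤ t) (ht1 : t < 1) :
    x + t • (y - x) ∈ Ω ∧ u (x + t • (y - x)) ≤ (1 - t) * u x + t * u y := by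
  have hm : ∀ y ∈ closure Ω, x + t • (y - x) ∈ Ω := by
    intro y hy
    have := h.conv.combo_interior_closure_mem_interior (x := x) (y := y) (a := 1 - t) (b := t)
      (by rwa [h.isOpen.interior_eq]) hy (by linarith) ht0 (by ring)
    rw [h.isOpen.interior_eq] at this
    convert this using 1
    module
  refine ⟨hm y hy, ?_⟩
  refine ContinuousWithinAt.closure_le (s := Ω) (f := fun y => u (x + t • (y - x)))
    (g := fun y => (1 - t) * u x + t * u y) hy ?_ ?_ fun z hz => ?_
  · refine ContinuousAt.continuousWithinAt ?_
    refine ContinuousAt.comp (f := fun y => x + t • (y - x)) (g := u) ?_ (by fun_prop)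
    exact h.continuousOn.continuousAt (h.isOpen.mem_nhds (hm y hy))
  · exact continuousWithinAt_const.add
      (continuousWithinAt_const.mul ((h.cont y hy).mono subset_closure))
  · have := h.cvx.2 hx hz (by linarith : 0 ≤ 1 - t) ht0 (by ring)
    simp only [smul_eq_mul] at this
    convert this using 2
    module

lemma nonpos (h : MADir Ω lam Lam u) {x : EuclideanSpace ℝ (Fin n)} (hx : x ∈ Ω) : u x ≤ 0 := by
  have hK : IsCompact (closure Ω) := h.bdd.isCompact_closure
  obtain ⟨y, hy, hmax⟩ := hK.exists_isMaxOn ⟨x, subset_closure hx⟩ h.cont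
  refine (hmax (subset_closure hx)).trans ?_
  by_cases hyΩ : y ∈ Ω
  · have hloc : IsLocalMax u y :=
      hmax.isLocalMax (Filter.mem_of_superset (h.isOpen.mem_nhds hyΩ) subset_closure)
    have hd : fderiv ℝ u y = 0 := hloc.fderiv_eq_zero
    have : Nontrivial (EuclideanSpace ℝ (Fin n)) := by
      refine ⟨EuclideanSpace.single (⟨0, h.dim_pos⟩ : Fin n) (1 : ℝ), 0, fun h0 => ?_⟩
      have := congrArg norm h0
      simp at this
    obtain ⟨b, hb⟩ : (frontier Ω).Nonempty := by
      refine nonempty_frontier_iff.2 ⟨⟨x, hx⟩, fun h1 => ?_⟩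
      have := h.bdd
      rw [h1] at this
      exact NormedSpace.unbounded_univ ℝ _ this
    have h2 := h.tangent_le_closure hyΩ (frontier_subset_closure hb)
    rw [hd, h.bdry b hb] at h2
    simpa using h2
  · exact (h.bdry y ⟨hy, by rwa [h.isOpen.interior_eq]⟩).le

lemma closure_sec_subset (h : MADir Ω lam Lam u) {L : EuclideanSpace ℝ (Fin n) →L[ℝ] ℝ} {c : ℝ}
    (hL : ∀ y ∈ frontier Ω, L y + c < 0) : closure (sec Ω u L c) ⊆ Ω := by
  intro y hy
  by_contra hyΩ
  have hyc : y ∈ closure Ω := closure_mono sec_subset hy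
  have hyf : y ∈ frontier Ω := ⟨hyc, by rwa [h.isOpen.interior_eq]⟩
  have h1 : u y ≤ L y + c :=
    ContinuousWithinAt.closure_le (s := sec Ω u L c) (g := fun y => L y + c) hy
      ((h.cont y hyc).mono (sec_subset.trans subset_closure))
      (Continuous.continuousWithinAt (by fun_prop)) fun z hz => hz.2.le
  rw [h.bdry y hyf] at h1
  linarith [hL y hyf]

/-- `u` is negative by a definite amount away from the boundary. -/
lemma exists_neg (n : ℕ) {lam δ : ℝ} (hlam : 0 < lam) (hδ : 0 < δ) :
    ∃ c₀ > 0, ∀ (Ω : Set (EuclideanSpace ℝ (Fin n))) (Lam : ℝ) (u : EuclideanSpace ℝ (Fin n) → ℝ),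
      MADir Ω lam Lam u → ∀ x ∈ inner' Ω δ, u x ≤ -c₀ := by
  refine ⟨min 1 (lam * (δ ^ n) ^ 2 / 2) / 4, by positivity, fun Ω Lam u h x hx => ?_⟩
  set m := min 1 (lam * (δ ^ n) ^ 2 / 2) with hm
  have hm0 : 0 < m := by positivity
  by_contra hlt
  push Not at hlt
  have h1 := h.lam_mul_detT_sq_le (L := 0) (c := 0) (H := m / 4) (z := x) (by positivity)
    ((ContinuousLinearEquiv.smulLeft (Units.mk0 δ hδ.ne')).trans (ContinuousLinearEquiv.refl ℝ _))
    ?_ ?_ (by simp; linarith)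
  · rw [detT_smul] at h1
    have h2 : detT (ContinuousLinearEquiv.refl ℝ (EuclideanSpace ℝ (Fin n))) = 1 := by
      simp [detT]
    rw [h2, mul_one, mul_div_cancel₀ _ (by norm_num)] at h1
    have h3 : m ^ n ≤ m := pow_le_of_le_one hm0.le (min_le_left _ _) (by have := h.dim_pos; omega)
    have h4 : m ≤ lam * (δ ^ n) ^ 2 / 2 := min_le_right _ _
    have h5 : 0 < lam * (δ ^ n) ^ 2 := by positivity
    linarith
  · intro ω hω
    refine hx ?_
    simp [Units.smul_def, norm_smul, abs_of_pos hδ]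
    nlinarith
  · intro ω hω
    have : x + δ • ω ∈ Ω := by
      refine hx ?_
      simp [norm_smul, abs_of_pos hδ]
      nlinarith
    simpa [Units.smul_def] using h.nonpos this

/-- Propagation step for the sections of slope `(1 - ε) Du(x)`: along them the affine function
`N = - ℓ - b / 2`, where `ℓ` is the tangent plane at `x` and `b = - u x`, grows geometrically. -/
lemma localization_step (h : MADir Ω lam Lam u) {K c₁ : ℝ} (hB : BalancedConst n lam Lam K c₁)
    {x y z : EuclideanSpace ℝ (Fin n)} {N : EuclideanSpace ℝ (Fin n) → ℝ} (hx : x ∈ Ω)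
    (hub : u x < 0) (hN : ∀ y, N y = -(u x + fderiv ℝ u x (y - x)) + u x / 2)
    {ε : ℝ} (hε0 : 0 < ε) (hε1 : ε ≤ 1 / 2)
    (hy : y ∈ Ω) (hyε : u y < u x + fderiv ℝ u x (y - x) + ε / 4 * N y) (hNy : -u x / 2 ≤ N y)
    (hz : z ∈ Ω) (hzε : u z < u x + fderiv ℝ u x (z - x) + ε * N z) (hNz : N z ≤ 3 / 8 * (-u x)) :
    ∃ y' ∈ Ω, u y' < u x + fderiv ℝ u x (y' - x) + ε * N y' ∧ (1 + (8 * K)⁻¹) * N y ≤ N y' := by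
  set p := fderiv ℝ u x with hp
  set L := (1 - ε) • p with hL
  set c := (1 - ε) * (u x - p x) + ε * (u x / 2) with hc
  have hLc : ∀ y, L y + c = u x + p (y - x) + ε * N y := by
    intro y
    simp only [hL, hc, hN, _root_.smul_apply, smul_eq_mul, map_sub]
    ring
  have hcl : closure (sec Ω u L c) ⊆ Ω := by
    refine h.closure_sec_subset fun w hw => ?_
    have h1 := h.tangent_le_closure hx (frontier_subset_closure hw)
    rw [h.bdry w hw] at h1
    rw [hLc, hN]
    nlinarith
  have hK := hB.one_le
  have hys : y ∈ sec Ω u L c := ⟨hy, by rw [hLc]; nlinarith⟩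
  have hzs : z ∈ sec Ω u L c := ⟨hz, by rw [hLc]; exact hzε⟩
  obtain ⟨y₁, hy₁, hmax⟩ := ((h.bdd_sec L c).isCompact_closure).exists_isMaxOn
    ⟨y, subset_closure hys⟩ (f := fun w => L w + c - u w)
    ((by fun_prop : Continuous fun w => L w + c).continuousOn.sub (h.continuousOn.mono hcl))
  have hmax' : ∀ w ∈ sec Ω u L c, L w + c - u w ≤ L y₁ + c - u y₁ :=
    fun w hw => hmax (subset_closure hw)
  have hyy := hmax' y hys
  have hH : 0 < L y₁ + c - u y₁ := by linarith [hys.2]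
  have hy₁s : y₁ ∈ sec Ω u L c := ⟨hcl hy₁, by linarith⟩
  by_cases hdeep : (L y₁ + c - u y₁) / 2 ≤ L y + c - u y
  · have h1 := hB.extend h.toMASol hH hcl hmax' hys hdeep hzs
    refine ⟨_, h1.1, ?_, ?_⟩
    · rw [← hLc]; exact h1.2
    · have h2 : N (y + (2 * K)⁻¹ • (y - z)) = (1 + (2 * K)⁻¹) * N y - (2 * K)⁻¹ * N z := by
        simp only [hN, map_sub, map_add, map_smul, smul_eq_mul]
        ring
      have h3 : (8 * K)⁻¹ = (2 * K)⁻¹ / 4 := by field_simp; norm_num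
      have h4 : 0 < (2 * K)⁻¹ := by positivity
      rw [h2, h3]
      nlinarith
  · push Not at hdeep
    refine ⟨y₁, hy₁s.1, by rw [← hLc]; exact hy₁s.2, ?_⟩
    have h1 : L y₁ + c - u y₁ ≤ ε * N y₁ := by
      rw [hLc]
      linarith [h.tangent_le hx hy₁s.1]
    have h2 : 3 / 4 * (ε * N y) ≤ L y + c - u y := by
      rw [hLc]; linarith
    have h3 : ε * (3 / 2 * N y) ≤ ε * N y₁ := by linarith
    have h4 := le_of_mul_le_mul_left h3 hε0
    have h5 : (8 * K)⁻¹ ≤ 1 / 2 := by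
      rw [inv_le_comm₀ (by positivity) (by norm_num)]; linarith
    nlinarith

/-- The tangent planes at interior points lie below the boundary values by a definite amount. -/
lemma exists_tangent_gap (Ω : Set (EuclideanSpace ℝ (Fin n))) {K c₁ δ : ℝ}
    (hB : BalancedConst n lam Lam K c₁) (hδ : 0 < δ) :
    ∃ h₀ > 0, ∀ u, MADir Ω lam Lam u → ∀ x ∈ inner' Ω δ, ∀ y ∈ frontier Ω,
      u x + fderiv ℝ u x (y - x) ≤ -h₀ := by
  obtain ⟨c₀, hc₀, hneg⟩ := exists_neg n hB.lam_pos hδ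
  have hK := hB.one_le
  set D : ℝ := diam Ω with hD
  have hD0 : 0 ≤ D := diam_nonneg
  set M : ℝ := 1 / 2 + 2 * D / δ with hM
  obtain ⟨J, hJ⟩ := pow_unbounded_of_one_lt (2 * M) (y := 1 + (8 * K)⁻¹)
    (by have : 0 < (8 * K)⁻¹ := by positivity
        linarith)
  set ε : ℕ → ℝ := fun j => (1 / 2) * (1 / 4) ^ j with hε
  have hεpos : ∀ j, 0 < ε j := fun j => by positivity
  have hεle : ∀ j, ε j ≤ 1 / 2 := fun j => by
    have : (1 / 4 : ℝ) ^ j ≤ 1 := pow_le_one₀ (by norm_num) (by norm_num)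
    simp only [hε]; linarith
  have hεanti : ∀ i j, i ≤ j → ε j ≤ ε i := fun i j hij => by
    have : (1 / 4 : ℝ) ^ j ≤ (1 / 4) ^ i := pow_le_pow_of_le_one (by norm_num) (by norm_num) hij
    simp only [hε]; linarith
  refine ⟨ε J * c₀, mul_pos (hεpos J) hc₀, fun u h x hx yb hyb => ?_⟩
  have hxΩ := inner'_subset hδ hx
  have hu := hneg Ω Lam u h x hx
  set p := fderiv ℝ u x with hp
  set b := -u x with hb
  have hb0 : 0 < b := by linarith
  by_contra hlt
  push Not at hlt
  set N : EuclideanSpace ℝ (Fin n) → ℝ := fun y => -(u x + p (y - x)) + u x / 2 with hN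
  -- the bound on the slope of the tangent plane
  have hpn : ‖p‖ ≤ 2 * b / δ := by
    refine ContinuousLinearMap.opNorm_le_of_unit_norm (by positivity) fun v hv => ?_
    have hone : ∀ s : ℝ, |s| = 1 → p (s • v) ≤ 2 * b / δ := by
      intro s hs
      have hm : x + (δ / 2) • s • v ∈ Ω := by
        refine hx ?_
        simp [norm_smul, hv, hs, abs_of_pos hδ]
        linarith
      have h1 := h.tangent_le hxΩ hm
      have h2 := h.nonpos hm
      rw [add_sub_cancel_left, map_smul, smul_eq_mul] at h1
      rw [le_div_iff₀ hδ]
      linarith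
    rw [Real.norm_eq_abs, abs_le]
    have h1 := hone 1 (by norm_num)
    have h2 := hone (-1) (by norm_num)
    simp only [one_smul, neg_smul, map_neg] at h1 h2
    constructor <;> linarith
  have hNM : ∀ y ∈ Ω, N y ≤ b * M := by
    intro y hy
    have h1 : ‖p (y - x)‖ ≤ 2 * b / δ * D := by
      refine (p.le_opNorm _).trans ?_
      gcongr
      rw [← dist_eq_norm]
      exact dist_le_diam_of_mem h.bdd hy hxΩ
    have h2 := (abs_le.1 (Real.norm_eq_abs _ ▸ h1)).1
    have h3 : b * M = b / 2 + 2 * b / δ * D := by rw [hM]; ring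
    simp only [hN]
    linarith
  have hyb0 := h.tangent_le_closure hxΩ (frontier_subset_closure hyb)
  rw [h.bdry yb hyb] at hyb0
  set z := x + (1 / 4 : ℝ) • (yb - x) with hz
  obtain ⟨hzΩ, hzu⟩ := h.convex_closure hxΩ (frontier_subset_closure hyb)
    (by norm_num : (0 : ℝ) ≤ 1 / 4) (by norm_num)
  rw [← hz, h.bdry yb hyb] at hzu
  rw [← hz] at hzΩ
  have hpz : p (z - x) = 1 / 4 * p (yb - x) := by simp [hz]
  have hεJ : ε J * c₀ ≤ ε J * b := mul_le_mul_of_nonneg_left (by linarith) (hεpos J).le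
  have hNz : N z ≤ 3 / 8 * (-u x) := by
    simp only [hN, hpz]
    have := hεle J
    nlinarith
  have hzε : ∀ j ≤ J, u z < u x + p (z - x) + ε j * N z := by
    intro j hj
    have h1 := hεanti j J hj
    have h2 : b / 4 ≤ N z := by simp only [hN, hpz]; linarith
    have h3 : ε J * (b / 4) ≤ ε j * N z := by
      have := hεpos j
      gcongr
    rw [hpz]
    linarith
  have key : ∀ i ≤ J, ∃ y ∈ Ω, u y < u x + p (y - x) + ε (J - i) * N y ∧
      (1 + (8 * K)⁻¹) ^ i * (b / 2) ≤ N y := by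
    intro i
    induction i with
    | zero =>
      intro _
      have hNx : N x = b / 2 := by simp only [hN, sub_self, map_zero]; linarith
      refine ⟨x, hxΩ, ?_, ?_⟩
      · rw [hNx, sub_self, map_zero]
        have := mul_pos (hεpos (J - 0)) (half_pos hb0)
        linarith
      · rw [hNx]; simp
    | succ i ih =>
      intro hi
      obtain ⟨y, hy, hyε, hNy⟩ := ih (by omega)
      have hε4 : ε (J - i) = ε (J - (i + 1)) / 4 := by
        have : J - i = (J - (i + 1)) + 1 := by omega
        rw [this]
        simp only [hε, pow_succ]
        ring
      have h8 : 0 < (8 * K)⁻¹ := by positivity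
      have hNy' : -u x / 2 ≤ N y := by
        refine le_trans ?_ hNy
        have : 1 ≤ (1 + (8 * K)⁻¹) ^ i := one_le_pow₀ (by linarith)
        nlinarith
      obtain ⟨y', hy', hyε', hNy''⟩ := h.localization_step hB (N := N) hxΩ (by linarith)
        (fun _ => rfl) (hεpos (J - (i + 1))) (hεle _) hy (by rw [← hε4]; exact hyε) hNy' hzΩ
        (hzε _ (by omega)) hNz
      refine ⟨y', hy', hyε', le_trans ?_ hNy''⟩
      rw [pow_succ]
      have := mul_le_mul_of_nonneg_left hNy (by linarith : 0 ≤ 1 + (8 * K)⁻¹)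
      linarith
  obtain ⟨y, hy, -, hNy⟩ := key J le_rfl
  have := hNM y hy
  nlinarith

end MADir

end Localization

/-! ### Geometry of the sections cut off by tangent planes -/

section TangentSections

variable {n : ℕ} {u : EuclideanSpace ℝ (Fin n) → ℝ} {Ω : Set (EuclideanSpace ℝ (Fin n))}
  {lam Lam : ℝ} {x y : EuclideanSpace ℝ (Fin n)}

/-- The height of the graph of `u` at `y` above the tangent plane at `x`. -/
noncomputable def dev (u : EuclideanSpace ℝ (Fin n) → ℝ) (x y : EuclideanSpace ℝ (Fin n)) : ℝ :=
  u y - u x - fderiv ℝ u x (y - x)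

/-- The section of height `t` at `x`: the part of `Ω` where the graph of `u` is less than `t` above
its tangent plane at `x`. -/
noncomputable def tsec (Ω : Set (EuclideanSpace ℝ (Fin n))) (u : EuclideanSpace ℝ (Fin n) → ℝ)
    (x : EuclideanSpace ℝ (Fin n)) (t : ℝ) : Set (EuclideanSpace ℝ (Fin n)) :=
  sec Ω u (fderiv ℝ u x) (u x - fderiv ℝ u x x + t)

lemma depth_eq (u : EuclideanSpace ℝ (Fin n) → ℝ) (x y : EuclideanSpace ℝ (Fin n)) (t : ℝ) :
    fderiv ℝ u x y + (u x - fderiv ℝ u x x + t) - u y = t - dev u x y := by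
  simp only [dev, map_sub]; ring

lemma mem_tsec {t : ℝ} : y ∈ tsec Ω u x t ↔ y ∈ Ω ∧ dev u x y < t := by
  have := depth_eq u x y t
  simp only [tsec, sec, mem_ofPred_eq]
  constructor <;> rintro ⟨h1, h2⟩ <;> exact ⟨h1, by linarith⟩

lemma tsec_subset {t : ℝ} : tsec Ω u x t ⊆ Ω := fun _ hy => hy.1

@[simp] lemma dev_self : dev u x x = 0 := by simp [dev]

lemma self_mem_tsec {t : ℝ} (hx : x ∈ Ω) (ht : 0 < t) : x ∈ tsec Ω u x t :=
  mem_tsec.2 ⟨hx, by simpa using ht⟩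

lemma tsec_mono {s t : ℝ} (hst : s ≤ t) : tsec Ω u x s ⊆ tsec Ω u x t := fun y hy => by
  rw [mem_tsec] at hy ⊢
  exact ⟨hy.1, hy.2.trans_le hst⟩

namespace MASol

lemma dev_nonneg (h : MASol Ω lam Lam u) (hx : x ∈ Ω) (hy : y ∈ Ω) : 0 ≤ dev u x y := by
  have := h.tangent_le hx hy
  simp only [dev]; linarith

lemma isOpen_tsec (h : MASol Ω lam Lam u) {t : ℝ} : IsOpen (tsec Ω u x t) := h.isOpen_sec _ _

lemma convex_tsec (h : MASol Ω lam Lam u) {t : ℝ} : Convex ℝ (tsec Ω u x t) := h.convex_sec _ _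

lemma measurableSet_tsec (h : MASol Ω lam Lam u) {t : ℝ} : MeasurableSet (tsec Ω u x t) :=
  h.isOpen_tsec.measurableSet

lemma exists_ellipsoid (h : MASol Ω lam Lam u) {K c₁ t : ℝ} (hB : BalancedConst n lam Lam K c₁)
    (hx : x ∈ Ω) (ht : 0 < t) (hcl : closure (tsec Ω u x t) ⊆ Ω) :
    ∃ T : EuclideanSpace ℝ (Fin n) ≃L[ℝ] EuclideanSpace ℝ (Fin n),
      (∀ y ∈ tsec Ω u x t, dev u x y ≤ t / 2 → ∀ ω, ‖ω‖ < 1 → y + T ω ∈ tsec Ω u x t) ∧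
      (∀ y ∈ tsec Ω u x t, ∀ y' ∈ tsec Ω u x t, ‖T.symm (y' - y)‖ ≤ K) ∧
      c₁ * t ^ n ≤ detT T ^ 2 := by
  obtain ⟨T, h1, h2, h3⟩ := hB.exists_ellipsoid Ω u h _ _ t ht hcl
    (fun y hy => by rw [depth_eq]; linarith [h.dev_nonneg hx hy.1])
    ⟨x, self_mem_tsec hx ht, by rw [depth_eq, dev_self]; linarith⟩
  exact ⟨T, fun y hy hyd => h1 y hy (by rw [depth_eq]; linarith), h2, h3⟩

lemma tsec_extend (h : MASol Ω lam Lam u) {K c₁ t : ℝ} (hB : BalancedConst n lam Lam K c₁)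
    (hx : x ∈ Ω) (ht : 0 < t) (hcl : closure (tsec Ω u x t) ⊆ Ω) {z : EuclideanSpace ℝ (Fin n)}
    (hy : y ∈ tsec Ω u x t) (hyd : dev u x y ≤ t / 2) (hz : z ∈ tsec Ω u x t) :
    y + (2 * K)⁻¹ • (y - z) ∈ tsec Ω u x t :=
  hB.extend h ht hcl (fun y hy => by rw [depth_eq]; linarith [h.dev_nonneg hx hy.1]) hy
    (by rw [depth_eq]; linarith) hz

/-- Engulfing property of sections. -/
lemma dev_le_of_mem_tsec (h : MASol Ω lam Lam u) {K c₁ t : ℝ} (hB : BalancedConst n lam Lam K c₁)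
    (hx : x ∈ Ω) (ht : 0 < t) (hcl : closure (tsec Ω u x (2 * t)) ⊆ Ω)
    {y' : EuclideanSpace ℝ (Fin n)} (hy : y ∈ tsec Ω u x t) (hy' : y' ∈ tsec Ω u x t) :
    dev u y' y ≤ 5 * K * t := by
  have hK := hB.one_le
  have hsub : tsec Ω u x t ⊆ tsec Ω u x (2 * t) := tsec_mono (by linarith)
  have hp := h.tsec_extend hB hx (by linarith) hcl (hsub hy')
    (by linarith [(mem_tsec.1 hy').2]) (hsub hy)
  set c := (2 * K)⁻¹ with hc
  have hc0 : 0 < c := by positivity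
  have hp' := mem_tsec.1 hp
  have h1 := h.dev_nonneg hy'.1 hp'.1
  have h2 := hp'.2
  have h3 := h.dev_nonneg hx hy'.1
  have h4 := (mem_tsec.1 hy).2
  have h5 : c * dev u y' y ≤ c * t + 2 * t := by
    simp only [dev, map_sub, map_add, map_smul, smul_eq_mul, add_sub_cancel_left] at h1 h2 h3 h4 ⊢
    nlinarith
  have h6 : c * (5 * K * t) = 5 / 2 * t := by rw [hc]; field_simp
  have h7 : c ≤ 1 / 2 := by
    rw [hc, inv_le_comm₀ (by positivity) (by norm_num)]; linarith
  have h8 : c * dev u y' y ≤ c * (5 * K * t) := by nlinarith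
  exact le_of_mul_le_mul_left h8 hc0

lemma tsec_subset_inner' (h : MASol Ω lam Lam u) {K c₁ t δ : ℝ}
    (hB : BalancedConst n lam Lam K c₁) (hδ : 0 < δ) (hx : x ∈ inner' Ω δ) (ht : 0 < t)
    (hcl : closure (tsec Ω u x (2 * t)) ⊆ Ω) : tsec Ω u x t ⊆ inner' Ω (δ / (1 + 2 * K)) := by
  intro y hy
  have hK := hB.one_le
  have hxΩ := inner'_subset hδ hx
  have hsub : tsec Ω u x t ⊆ tsec Ω u x (2 * t) := tsec_mono (by linarith)
  have hp := h.tsec_extend hB hxΩ (by linarith) hcl (hsub hy)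
    (by linarith [(mem_tsec.1 hy).2]) (self_mem_tsec hxΩ (by linarith))
  intro w hw
  rw [mem_ball, dist_eq_norm, lt_div_iff₀ (by positivity)] at hw
  have hx' : x + (1 + 2 * K) • (w - y) ∈ Ω := by
    refine hx ?_
    rw [mem_ball, dist_eq_norm, add_sub_cancel_left, norm_smul, Real.norm_of_nonneg (by positivity)]
    linarith
  have := h.conv hp.1 hx' (a := 2 * K / (1 + 2 * K)) (b := 1 / (1 + 2 * K)) (by positivity)
    (by positivity) (by field_simp; ring)
  convert this using 1
  have h1 : (2 * K) * (2 * K)⁻¹ = 1 := by field_simp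
  have h2 : 1 + 2 * K ≠ 0 := by positivity
  match_scalars <;> field_simp <;> ring

lemma norm_le_of_mem_tsec (h : MASol Ω lam Lam u) {K c₁ t : ℝ}
    (hB : BalancedConst n lam Lam K c₁) (hx : x ∈ Ω) (ht : 0 < t)
    (hcl : closure (tsec Ω u x t) ⊆ Ω) (j : ℕ) (hy : y ∈ tsec Ω u x (t / 2 ^ j)) :
    (1 + (2 * K)⁻¹) ^ j * ‖y - x‖ ≤ diam Ω := by
  suffices H : ∀ j, ∀ y ∈ tsec Ω u x (t / 2 ^ j),
      x + (1 + (2 * K)⁻¹) ^ j • (y - x) ∈ tsec Ω u x t by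
    have h1 := dist_le_diam_of_mem h.bdd (H j y hy).1 hx
    have hK := hB.one_le
    rwa [dist_eq_norm, add_sub_cancel_left, norm_smul, Real.norm_of_nonneg (by positivity)] at h1
  intro j
  induction j with
  | zero => intro y hy; simpa using hy
  | succ j ih =>
    intro y hy
    have hpos : 0 < t / 2 ^ j := by positivity
    have hle : t / 2 ^ j ≤ t := div_le_self ht.le (one_le_pow₀ (by norm_num))
    have hhalf : t / 2 ^ (j + 1) = t / 2 ^ j / 2 := by rw [pow_succ]; field_simp
    rw [hhalf] at hy
    have h1 := h.tsec_extend hB hx hpos ((closure_mono (tsec_mono hle)).trans hcl)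
      (tsec_mono (by linarith) hy) (mem_tsec.1 hy).2.le (self_mem_tsec hx hpos)
    have h2 := ih _ h1
    convert h2 using 2
    rw [pow_succ]
    module

lemma volume_tsec_le (h : MASol Ω lam Lam u) (hx : x ∈ Ω) (t : ℝ) :
    volume (tsec Ω u x (2 * t)) ≤ 2 ^ n * volume (tsec Ω u x t) := by
  have hsub : AffineMap.homothety x (1 / 2 : ℝ) '' tsec Ω u x (2 * t) ⊆ tsec Ω u x t := by
    rintro _ ⟨y, hy, rfl⟩
    have hm := mem_tsec.1 hy
    have h1 := h.cvx.2 hx hy.1 (by norm_num : (0 : ℝ) ≤ 1 / 2) (by norm_num : (0 : ℝ) ≤ 1 / 2)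
      (by norm_num)
    have h2 := h.conv hx hy.1 (by norm_num : (0 : ℝ) ≤ 1 / 2) (by norm_num : (0 : ℝ) ≤ 1 / 2)
      (by norm_num)
    have h3 : AffineMap.homothety x (1 / 2 : ℝ) y = (1 / 2 : ℝ) • x + (1 / 2 : ℝ) • y := by
      rw [AffineMap.homothety_apply, vsub_eq_sub, vadd_eq_add]; module
    rw [h3, mem_tsec]
    refine ⟨h2, ?_⟩
    have h4 : (1 / 2 : ℝ) • x + (1 / 2 : ℝ) • y - x = (1 / 2 : ℝ) • (y - x) := by module
    have h5 := hm.2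
    simp only [dev, h4, map_smul, smul_eq_mul] at h1 h5 ⊢
    linarith
  have h1 := measure_mono (μ := volume) hsub
  rw [Measure.addHaar_image_homothety, finrank_euclideanSpace_fin] at h1
  calc volume (tsec Ω u x (2 * t))
      = 2 ^ n * (ENNReal.ofReal |(1 / 2 : ℝ) ^ n| * volume (tsec Ω u x (2 * t))) := by
        rw [← mul_assoc, abs_of_pos (by positivity), ENNReal.ofReal_pow (by norm_num), ← mul_pow]
        have : (2 : ENNReal) * ENNReal.ofReal (1 / 2) = 1 := by
          rw [← ENNReal.ofReal_ofNat 2, ← ENNReal.ofReal_mul (by norm_num)]; simp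
        rw [this]; simp
    _ ≤ _ := by gcongr

lemma volume_tsec_pow_le (h : MASol Ω lam Lam u) (hx : x ∈ Ω) (t : ℝ) (j : ℕ) :
    volume (tsec Ω u x (2 ^ j * t)) ≤ (2 ^ n) ^ j * volume (tsec Ω u x t) := by
  induction j with
  | zero => simp
  | succ j ih =>
    rw [pow_succ', mul_assoc]
    refine (h.volume_tsec_le hx _).trans ?_
    rw [pow_succ', mul_assoc]
    gcongr

lemma le_volume_tsec (h : MASol Ω lam Lam u) {K c₁ t : ℝ} (hB : BalancedConst n lam Lam K c₁)
    (hx : x ∈ Ω) (ht : 0 < t) (hcl : closure (tsec Ω u x t) ⊆ Ω) :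
    ENNReal.ofReal (√(c₁ * t ^ n)) * volume (ball (0 : EuclideanSpace ℝ (Fin n)) 1)
      ≤ volume (tsec Ω u x t) := by
  obtain ⟨T, h1, -, h3⟩ := h.exists_ellipsoid hB hx ht hcl
  have hsub : (fun y => x + y) '' (T '' ball 0 1) ⊆ tsec Ω u x t := by
    rintro _ ⟨_, ⟨ω, hω, rfl⟩, rfl⟩
    exact h1 x (self_mem_tsec hx ht) (by simp; linarith) ω (by simpa using hω)
  refine le_trans ?_ (measure_mono hsub)
  have h2 := Measure.addHaar_image_continuousLinearMap volume
    (T : EuclideanSpace ℝ (Fin n) →L[ℝ] EuclideanSpace ℝ (Fin n)) (ball 0 1)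
  simp only [ContinuousLinearEquiv.coe_coe] at h2
  rw [image_add_left, measure_preimage_add, h2]
  gcongr
  exact Real.sqrt_le_iff.2 ⟨abs_nonneg _, by rw [sq_abs]; exact h3⟩

end MASol

lemma MADir.closure_tsec_subset (h : MADir Ω lam Lam u) {h₀ t : ℝ}
    (hgap : ∀ y ∈ frontier Ω, u x + fderiv ℝ u x (y - x) ≤ -h₀) (ht : t < h₀) :
    closure (tsec Ω u x t) ⊆ Ω := by
  refine h.closure_sec_subset fun y hy => ?_
  have := hgap y hy
  rw [map_sub] at this
  linarith

end TangentSections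

/-! ### Integral estimates for the Hessian -/

section Integral

variable {n : ℕ} {u : EuclideanSpace ℝ (Fin n) → ℝ} {Ω : Set (EuclideanSpace ℝ (Fin n))}
  {lam Lam : ℝ} {x y : EuclideanSpace ℝ (Fin n)}

lemma measurable_hessB_apply (u : EuclideanSpace ℝ (Fin n) → ℝ) (v w : EuclideanSpace ℝ (Fin n)) :
    Measurable fun y => hessB u y v w := by
  have h1 : Measurable (hessB u) := measurable_fderiv ℝ _
  have h2 : Continuous fun B : EuclideanSpace ℝ (Fin n) →L[ℝ] EuclideanSpace ℝ (Fin n) →L[ℝ] ℝ =>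
    B v w := by fun_prop
  exact h2.measurable.comp h1

lemma measurable_hessNorm (u : EuclideanSpace ℝ (Fin n) → ℝ) : Measurable (hessNorm u) := by
  have h1 : Measurable fun y => fun i j => hessB u y (EuclideanSpace.single i (1 : ℝ))
      (EuclideanSpace.single j 1) :=
    measurable_pi_lambda _ fun i => measurable_pi_lambda _ fun j => measurable_hessB_apply u _ _
  have hl : Continuous (fun M : Fin n → Fin n → ℝ =>
      ‖Matrix.toEuclideanCLM (n := Fin n) (𝕜 := ℝ) M‖) :=
    ((Matrix.toEuclideanCLM (n := Fin n)
      (𝕜 := ℝ)).toAlgEquiv.toLinearMap.continuous_of_finiteDimensional).norm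
  have h2 := hl.measurable.comp h1
  convert h2 using 1
  ext y
  simp only [hessNorm, Function.comp_apply]
  congr 2
  ext i j
  exact hessMatrix_apply i j

lemma measurable_trace_pullHess (u : EuclideanSpace ℝ (Fin n) → ℝ)
    (T : EuclideanSpace ℝ (Fin n) ≃L[ℝ] EuclideanSpace ℝ (Fin n)) :
    Measurable fun y => (pullHess u y T).trace := by
  simp only [Matrix.trace, Matrix.diag, pullHess]
  exact Finset.measurable_sum _ fun i _ => measurable_hessB_apply u _ _

namespace MASol

/-- Fundamental theorem of calculus along a segment, with the slopes at its ends estimated by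
difference quotients of the convex function `u`. -/
lemma lintegral_segment_le (h : MASol Ω lam Lam u) {S : Set (EuclideanSpace ℝ (Fin n))}
    (hSΩ : S ⊆ Ω) (hSc : Convex ℝ S) {L : EuclideanSpace ℝ (Fin n) →L[ℝ] ℝ} {c H : ℝ}
    (hw0 : ∀ y ∈ S, u y - (L y + c) ≤ 0) (hwH : ∀ y ∈ S, -H ≤ u y - (L y + c))
    {f : EuclideanSpace ℝ (Fin n)} (h1 : y - f ∈ S) (h2 : y + (2 : ℝ) • f ∈ S) :
    ∫⁻ s in Ioc (0 : ℝ) 1, ENNReal.ofReal (hessB u (y + s • f) f f) ≤ ENNReal.ofReal (2 * H) := by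
  have hmem : ∀ s ∈ Icc (-1 : ℝ) 2, y + s • f ∈ S := by
    rintro s ⟨hs1, hs2⟩
    have := hSc h1 h2 (a := (2 - s) / 3) (b := (s + 1) / 3) (by linarith) (by linarith) (by ring)
    convert this using 1
    module
  have hΩ : ∀ s ∈ Icc (-1 : ℝ) 2, y + s • f ∈ Ω := fun s hs => hSΩ (hmem s hs)
  have huI : uIcc (0 : ℝ) 1 ⊆ Icc (-1 : ℝ) 2 := by
    rw [uIcc_of_le zero_le_one]; exact Icc_subset_Icc (by norm_num) (by norm_num)
  have hderiv : ∀ s ∈ uIcc (0 : ℝ) 1, HasDerivAt (fun s : ℝ => fderiv ℝ u (y + s • f) f)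
      (hessB u (y + s • f) f f) s := by
    intro s hs
    have hl : HasDerivAt (fun s : ℝ => y + s • f) f s := by
      simpa using ((hasDerivAt_id s).smul_const f).const_add y
    have h3 := (h.hasFDerivAt_fderiv (hΩ s (huI hs))).comp_hasDerivAt s hl
    have h4 := ((ContinuousLinearMap.apply ℝ ℝ f).hasFDerivAt).comp_hasDerivAt s h3
    exact h4
  have hcont : ContinuousOn (fun s : ℝ => hessB u (y + s • f) f f) (uIcc 0 1) := by
    have h3 : ContinuousOn (fun s : ℝ => hessB u (y + s • f)) (uIcc 0 1) :=
      h.continuousOn_hessB.comp (by fun_prop) fun s hs => hΩ s (huI hs)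
    exact (h3.clm_apply continuousOn_const).clm_apply continuousOn_const
  have hInt := hcont.intervalIntegrable (μ := volume)
  have hFTC := intervalIntegral.integral_eq_sub_of_hasDerivAt hderiv hInt
  rw [intervalIntegral.integral_of_le zero_le_one] at hFTC
  rw [← ofReal_integral_eq_lintegral_ofReal]
  · refine ENNReal.ofReal_le_ofReal ?_
    rw [hFTC]
    have hm : ∀ s ∈ Icc (-1 : ℝ) 2, y + s • f ∈ S := hmem
    have m1 := hmem (-1) (by norm_num)
    have m0 := hmem 0 (by norm_num)
    have mp := hmem 1 (by norm_num)
    have m2 := hmem 2 (by norm_num)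
    have t1 := h.tangent_le (hSΩ mp) (hSΩ m2)
    have t2 := h.tangent_le (hSΩ m0) (hSΩ m1)
    have e1 : y + (2 : ℝ) • f - (y + (1 : ℝ) • f) = f := by module
    have e2 : y + (-1 : ℝ) • f - (y + (0 : ℝ) • f) = -f := by module
    rw [e1] at t1
    rw [e2, map_neg] at t2
    have w1 := hw0 _ m1
    have w2 := hw0 _ m2
    have w3 := hwH _ m0
    have w4 := hwH _ mp
    simp only [map_add, map_smul, smul_eq_mul] at w1 w2 w3 w4
    linarith
  · exact (intervalIntegrable_iff_integrableOn_Ioc_of_le zero_le_one).1 hInt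
  · refine (ae_restrict_iff' measurableSet_Ioc).2 (Filter.Eventually.of_forall fun s hs => ?_)
    exact h.hessB_nonneg (hΩ s (huI (by rw [uIcc_of_le zero_le_one]; exact Ioc_subset_Icc_self hs))) f

/-- Second derivatives of a convex function in a direction `f` are integrable, with a bound by its
oscillation; obtained by averaging over translations along `f`. -/
lemma lintegral_hessB_le (h : MASol Ω lam Lam u) {S A : Set (EuclideanSpace ℝ (Fin n))}
    (hSo : IsOpen S) (hSΩ : S ⊆ Ω) (hSc : Convex ℝ S) (hA : MeasurableSet A)
    {L : EuclideanSpace ℝ (Fin n) →L[ℝ] ℝ} {c H : ℝ}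
    (hw0 : ∀ y ∈ S, u y - (L y + c) ≤ 0) (hwH : ∀ y ∈ S, -H ≤ u y - (L y + c))
    {f : EuclideanSpace ℝ (Fin n)} (hf : ∀ y ∈ A, ∀ s ∈ Icc (-2 : ℝ) 2, y + s • f ∈ S) :
    ∫⁻ y in A, ENNReal.ofReal (hessB u y f f) ≤ ENNReal.ofReal (2 * H) * volume S := by
  set g : EuclideanSpace ℝ (Fin n) → ENNReal := fun y => ENNReal.ofReal (hessB u y f f) with hg
  have hgm : Measurable g := (measurable_hessB_apply u f f).ennreal_ofReal
  set A' : Set (EuclideanSpace ℝ (Fin n)) := {y | y - f ∈ S ∧ y + (2 : ℝ) • f ∈ S} with hA'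
  have hA'm : MeasurableSet A' :=
    ((hSo.preimage (by fun_prop : Continuous fun y => y - f)).inter
      (hSo.preimage (by fun_prop : Continuous fun y => y + (2 : ℝ) • f))).measurableSet
  have hA'S : A' ⊆ S := by
    rintro y ⟨h1, h2⟩
    have := hSc h1 h2 (a := 2 / 3) (b := 1 / 3) (by norm_num) (by norm_num) (by norm_num)
    convert this using 1
    module
  have hshift : ∀ s ∈ Ioc (0 : ℝ) 1, ∫⁻ y in A, g y ≤ ∫⁻ y in A', g (y + s • f) := by
    rintro s ⟨hs0, hs1⟩
    rw [← lintegral_indicator hA, ← lintegral_indicator hA'm,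
      ← lintegral_add_right_eq_self (A.indicator g) (s • f)]
    refine lintegral_mono fun y => ?_
    by_cases hy : y + s • f ∈ A
    · have hyA' : y ∈ A' := by
        constructor
        · have := hf _ hy (-s - 1) ⟨by linarith, by linarith⟩
          convert this using 1
          module
        · have := hf _ hy (2 - s) ⟨by linarith, by linarith⟩
          convert this using 1
          module
      simp [hy, hyA']
    · simp [hy]
  calc ∫⁻ y in A, g y = ∫⁻ s in Ioc (0 : ℝ) 1, ∫⁻ y in A, g y := by simp
    _ ≤ ∫⁻ s in Ioc (0 : ℝ) 1, ∫⁻ y in A', g (y + s • f) :=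
        setLIntegral_mono' measurableSet_Ioc hshift
    _ = ∫⁻ y in A', ∫⁻ s in Ioc (0 : ℝ) 1, g (y + s • f) := by
        refine lintegral_lintegral_swap ?_
        exact (hgm.comp (by fun_prop)).aemeasurable
    _ ≤ ∫⁻ y in A', ENNReal.ofReal (2 * H) :=
        setLIntegral_mono' hA'm fun y hy =>
          h.lintegral_segment_le hSΩ hSc hw0 hwH hy.1 hy.2
    _ = ENNReal.ofReal (2 * H) * volume A' := by simp
    _ ≤ _ := by gcongr

lemma lintegral_trace_le (h : MASol Ω lam Lam u) {S A : Set (EuclideanSpace ℝ (Fin n))}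
    (hSo : IsOpen S) (hSΩ : S ⊆ Ω) (hSc : Convex ℝ S) (hA : MeasurableSet A)
    {L : EuclideanSpace ℝ (Fin n) →L[ℝ] ℝ} {c H : ℝ}
    (hw0 : ∀ y ∈ S, u y - (L y + c) ≤ 0) (hwH : ∀ y ∈ S, -H ≤ u y - (L y + c))
    (T : EuclideanSpace ℝ (Fin n) ≃L[ℝ] EuclideanSpace ℝ (Fin n))
    (hT : ∀ y ∈ A, ∀ ω, ‖ω‖ < 1 → y + T ω ∈ S) :
    ∫⁻ y in A, ENNReal.ofReal (pullHess u y T).trace ≤ ENNReal.ofReal (n * 32 * H) * volume S := by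
  have hAΩ : A ⊆ Ω := fun y hy => hSΩ (by simpa using hT y hy 0 (by simp))
  set F : Fin n → EuclideanSpace ℝ (Fin n) :=
    fun i => (1 / 4 : ℝ) • T (EuclideanSpace.single i 1) with hF
  have h1 : ∀ i, ∫⁻ y in A, ENNReal.ofReal (hessB u y (F i) (F i))
      ≤ ENNReal.ofReal (2 * H) * volume S := by
    intro i
    refine h.lintegral_hessB_le hSo hSΩ hSc hA hw0 hwH fun y hy s hs => ?_
    have := hT y hy ((s / 4) • EuclideanSpace.single i 1) ?_
    · convert this using 2
      rw [map_smul, hF]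
      module
    · rw [norm_smul, PiLp.norm_single, norm_one, mul_one, Real.norm_eq_abs, abs_lt]
      constructor <;> linarith [hs.1, hs.2]
  calc ∫⁻ y in A, ENNReal.ofReal (pullHess u y T).trace
      = ∫⁻ y in A, ∑ i, 16 * ENNReal.ofReal (hessB u y (F i) (F i)) := by
        refine setLIntegral_congr_fun hA fun y hy => ?_
        simp only [Matrix.trace, Matrix.diag, pullHess]
        rw [ENNReal.ofReal_sum_of_nonneg fun i _ => h.hessB_nonneg (hAΩ hy) _]
        refine Finset.sum_congr rfl fun i _ => ?_
        rw [← ENNReal.ofReal_ofNat 16, ← ENNReal.ofReal_mul (by norm_num)]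
        congr 1
        simp only [hF, map_smul, _root_.smul_apply, smul_eq_mul]
        ring
    _ = ∑ i, 16 * ∫⁻ y in A, ENNReal.ofReal (hessB u y (F i) (F i)) := by
        rw [lintegral_finsetSum _ fun i _ =>
          (measurable_hessB_apply u _ _).ennreal_ofReal.const_mul _]
        refine Finset.sum_congr rfl fun i _ => ?_
        rw [lintegral_const_mul _ (measurable_hessB_apply u _ _).ennreal_ofReal]
    _ ≤ ∑ i : Fin n, 16 * (ENNReal.ofReal (2 * H) * volume S) := by
        gcongr with i
        exact h1 i
    _ = ENNReal.ofReal (n * 32 * H) * volume S := by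
        rw [Finset.sum_const, Finset.card_univ, Fintype.card_fin, nsmul_eq_mul, ← mul_assoc,
          ← mul_assoc, ← ENNReal.ofReal_natCast, ← ENNReal.ofReal_ofNat 16,
          ← ENNReal.ofReal_mul (by positivity), ← ENNReal.ofReal_mul (by positivity)]
        congr 2
        ring

lemma lintegral_hessNorm_le (h : MASol Ω lam Lam u) {A : Set (EuclideanSpace ℝ (Fin n))}
    (hA : MeasurableSet A) (hAΩ : A ⊆ Ω)
    (T : EuclideanSpace ℝ (Fin n) ≃L[ℝ] EuclideanSpace ℝ (Fin n)) :
    ∫⁻ y in A, ENNReal.ofReal (hessNorm u y) ≤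
      ENNReal.ofReal (‖(T.symm : EuclideanSpace ℝ (Fin n) →L[ℝ] EuclideanSpace ℝ (Fin n))‖ ^ 2)
        * ∫⁻ y in A, ENNReal.ofReal (pullHess u y T).trace := by
  rw [← lintegral_const_mul _ (measurable_trace_pullHess u T).ennreal_ofReal]
  refine setLIntegral_mono' hA fun y hy => ?_
  rw [← ENNReal.ofReal_mul (by positivity)]
  exact ENNReal.ofReal_le_ofReal (h.hessNorm_le_trace (hAΩ hy) T)

end MASol

end Integral

section Integral

variable {n : ℕ} {u : EuclideanSpace ℝ (Fin n) → ℝ} {Ω : Set (EuclideanSpace ℝ (Fin n))}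
  {lam Lam : ℝ} {x y : EuclideanSpace ℝ (Fin n)}

namespace MADir

lemma exists_lower_bound (Ω : Set (EuclideanSpace ℝ (Fin n))) (lam Lam : ℝ) :
    ∃ M : ℝ, 0 ≤ M ∧ ∀ u, MADir Ω lam Lam u → ∀ x ∈ Ω, -M ≤ u x := by
  set R : ℝ := diam Ω + 1 with hR
  have hR0 : 0 < R := by positivity
  refine ⟨max 1 ((8 * R ^ 2) ^ n * Lam), le_max_of_le_left zero_le_one, fun u h x hx => ?_⟩
  by_contra! hlt
  set M := max 1 ((8 * R ^ 2) ^ n * Lam) with hM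
  have hm1 : 1 < -u x := by linarith [le_max_left 1 ((8 * R ^ 2) ^ n * Lam)]
  have hm2 : (8 * R ^ 2) ^ n * Lam < -u x := by linarith [le_max_right 1 ((8 * R ^ 2) ^ n * Lam)]
  have hdist : ∀ y ∈ Ω, ‖y - x‖ ≤ R := fun y hy => by
    have := dist_le_diam_of_mem h.bdd hy hx
    rw [dist_eq_norm] at this
    linarith
  set e : EuclideanSpace ℝ (Fin n) := EuclideanSpace.single ⟨0, h.dim_pos⟩ 1 with he
  have he1 : ‖e‖ = 1 := by simp [he]
  have h1 := h.alexandrov_slab (L := 0) (c := 0) h.isOpen subset_rfl h.cont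
    (fun y hy hy' => by
      have : y ∈ frontier Ω := by
        rw [h.isOpen.frontier_eq]; exact ⟨hy, hy'⟩
      simp [h.bdry y this]) hx (m := -u x) (by linarith) (by simp)
    (ContinuousLinearEquiv.refl ℝ _) (z := x) hR0 hR0
    (fun y hy => by simpa using hdist y hy) he1
    (fun y hy => (real_inner_le_norm _ _).trans (by
      rw [he1, one_mul]; simpa using hdist y hy))
  have h2 : detT (ContinuousLinearEquiv.refl ℝ (EuclideanSpace ℝ (Fin n))) = 1 := by
    simp [detT]
  rw [h2, div_self hR0.ne', one_pow, mul_one] at h1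
  have h3 : -u x ≤ (-u x) ^ n := le_self_pow₀ hm1.le (by have := h.dim_pos; omega)
  linarith

/-- Interior `L¹` bound for the Hessian. -/
lemma exists_lintegral_le (Ω : Set (EuclideanSpace ℝ (Fin n))) (lam Lam : ℝ) {δ : ℝ} (hδ : 0 < δ) :
    ∃ C : ℝ, 0 ≤ C ∧ ∀ u, MADir Ω lam Lam u →
      ∫⁻ y in inner' Ω δ, ENNReal.ofReal (hessNorm u y) ≤ ENNReal.ofReal C := by
  obtain ⟨M, hM0, hM⟩ := exists_lower_bound Ω lam Lam
  set T : EuclideanSpace ℝ (Fin n) ≃L[ℝ] EuclideanSpace ℝ (Fin n) :=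
    ContinuousLinearEquiv.smulLeft (Units.mk0 δ hδ.ne') with hT
  refine ⟨‖(T.symm : EuclideanSpace ℝ (Fin n) →L[ℝ] EuclideanSpace ℝ (Fin n))‖ ^ 2 *
    ((n * 32 * M) * (volume Ω).toReal), by positivity, fun u h => ?_⟩
  have h1 := h.lintegral_trace_le (S := Ω) (A := inner' Ω δ) (L := 0) (c := 0) (H := M)
    h.isOpen subset_rfl h.conv (isClosed_inner' δ).measurableSet
    (fun y hy => by simpa using h.nonpos hy) (fun y hy => by simpa using hM u h y hy) T
    (fun y hy ω hω => hy (by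
      have : T ω = δ • ω := by simp [hT, Units.smul_def]
      rw [this, mem_ball, dist_eq_norm, add_sub_cancel_left, norm_smul, Real.norm_of_nonneg hδ.le]
      nlinarith))
  have h2 := h.lintegral_hessNorm_le (isClosed_inner' δ).measurableSet (inner'_subset hδ) T
  have h3 : volume Ω ≠ ⊤ := h.bdd.measure_lt_top.ne
  rw [ENNReal.ofReal_mul (by positivity), ENNReal.ofReal_mul (by positivity),
    ENNReal.ofReal_toReal h3]
  exact h2.trans (by gcongr)

end MADir

/-- The reverse inequality behind the higher integrability: on a fixed fraction of a section, the
Hessian is comparable to (at least a multiple of) its average. In the coordinates adapted to the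
section, the trace of the Hessian has average of order `t`; where it is not much larger than this,
the lower bound on the determinant makes all eigenvalues of order `t`. -/
lemma exists_density (hn : 1 ≤ n) {K c₁ : ℝ} (hB : BalancedConst n lam Lam K c₁) :
    ∃ c > 0, ∀ (Ω : Set (EuclideanSpace ℝ (Fin n))) (u : EuclideanSpace ℝ (Fin n) → ℝ),
      MASol Ω lam Lam u → ∀ x ∈ Ω, ∀ t > 0, closure (tsec Ω u x (2 * t)) ⊆ Ω → ∀ γ > 0,
      ENNReal.ofReal γ * volume (tsec Ω u x t)
        ≤ ∫⁻ y in tsec Ω u x t, ENNReal.ofReal (hessNorm u y) →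
      ENNReal.ofReal c * volume (tsec Ω u x t)
        ≤ volume (tsec Ω u x t ∩ {y | c * γ ≤ hessNorm u y}) := by
  have hc₁ := hB.pos
  have hlam := hB.lam_pos
  set C1 : ℝ := n * 64 * 2 ^ n with hC1
  have hn0 : (0 : ℝ) < n := by exact_mod_cast hn
  have hC10 : 0 < C1 := by positivity
  set c' : ℝ := lam * c₁ * 2 ^ n / (4 * (2 * C1) ^ (n - 1) * C1) with hc'
  have hc'0 : 0 < c' := by positivity
  refine ⟨min c' (1 / 2), by positivity, fun Ω u h x hx t ht hcl γ hγ hav => ?_⟩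
  set A := tsec Ω u x t with hA
  set V := volume A with hV
  have hAm : MeasurableSet A := h.measurableSet_tsec
  have hsub : A ⊆ tsec Ω u x (2 * t) := tsec_mono (by linarith)
  have hVt : V ≠ ⊤ := (h.bdd.subset tsec_subset).measure_lt_top.ne
  have hV0 : V ≠ 0 := (h.isOpen_tsec.measure_pos volume ⟨x, self_mem_tsec hx ht⟩).ne'
  obtain ⟨T, hT1, -, hT3⟩ := h.exists_ellipsoid hB hx (by linarith : 0 < 2 * t) hcl
  set τ := ‖(T.symm : EuclideanSpace ℝ (Fin n) →L[ℝ] EuclideanSpace ℝ (Fin n))‖ with hτ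
  have hw : ∀ y, u y - (fderiv ℝ u x y + (u x - fderiv ℝ u x x + 2 * t)) = dev u x y - 2 * t := by
    intro y
    have := depth_eq u x y (2 * t)
    linarith
  have h1 := h.lintegral_trace_le (S := tsec Ω u x (2 * t)) (A := A) (L := fderiv ℝ u x)
    (c := u x - fderiv ℝ u x x + 2 * t) (H := 2 * t) h.isOpen_tsec tsec_subset h.convex_tsec hAm
    (fun y hy => by rw [hw]; linarith [(mem_tsec.1 hy).2])
    (fun y hy => by rw [hw]; linarith [h.dev_nonneg hx hy.1]) T
    (fun y hy ω hω => hT1 y (hsub hy) (by linarith [(mem_tsec.1 hy).2]) ω hω)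
  have h2 : ∫⁻ y in A, ENNReal.ofReal (pullHess u y T).trace ≤ ENNReal.ofReal (C1 * t) * V := by
    refine h1.trans ?_
    have h3 := h.volume_tsec_le hx t
    calc _ ≤ ENNReal.ofReal (n * 32 * (2 * t)) * (2 ^ n * V) := by gcongr
      _ = _ := by
        rw [← mul_assoc, ← ENNReal.ofReal_ofNat 2, ← ENNReal.ofReal_pow (by norm_num),
          ← ENNReal.ofReal_mul (by positivity)]
        congr 2
        rw [hC1]; ring
  have h3 : γ ≤ τ ^ 2 * (C1 * t) := by
    have h4 := (hav.trans (h.lintegral_hessNorm_le hAm tsec_subset T)).trans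
      (mul_le_mul_right h2 _)
    rw [← mul_assoc, ← ENNReal.ofReal_mul (by positivity)] at h4
    exact (ENNReal.ofReal_le_ofReal_iff (by positivity)).1
      ((ENNReal.mul_le_mul_iff_left hV0 hVt).1 h4)
  have hτ0 : 0 < τ := by
    rcases (norm_nonneg (T.symm :
      EuclideanSpace ℝ (Fin n) →L[ℝ] EuclideanSpace ℝ (Fin n))).lt_or_eq with h | h
    · exact h
    · rw [hτ, ← h] at h3; norm_num at h3; linarith
  -- by Chebyshev's inequality, the trace is at most twice its average on half of the section
  set B := {y | 2 * C1 * t < (pullHess u y T).trace} with hBd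
  have hBm : MeasurableSet B := measurableSet_lt measurable_const (measurable_trace_pullHess u T)
  have h5 : 2 * volume (A ∩ B) ≤ V := by
    have h6 := mul_meas_ge_le_lintegral (μ := volume.restrict A)
      (measurable_trace_pullHess u T).ennreal_ofReal (ENNReal.ofReal (2 * C1 * t))
    have h7 : volume (A ∩ B) ≤ volume.restrict A
        {y | ENNReal.ofReal (2 * C1 * t) ≤ ENNReal.ofReal (pullHess u y T).trace} := by
      rw [inter_comm, ← Measure.restrict_apply hBm]
      exact measure_mono fun y hy => ENNReal.ofReal_le_ofReal (le_of_lt hy)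
    have h8 : ENNReal.ofReal (C1 * t) * (2 * volume (A ∩ B)) ≤ ENNReal.ofReal (C1 * t) * V := by
      calc _ = ENNReal.ofReal (2 * C1 * t) * volume (A ∩ B) := by
            rw [mul_assoc 2, ENNReal.ofReal_mul (by norm_num : (0 : ℝ) ≤ 2), ENNReal.ofReal_ofNat]
            ring
        _ ≤ _ := by
            refine le_trans ?_ (h6.trans h2)
            gcongr
    exact (ENNReal.mul_le_mul_iff_right (by simpa using by positivity) ENNReal.ofReal_ne_top).1 h8
  have h6 : A \ B ⊆ A ∩ {y | min c' (1 / 2) * γ ≤ hessNorm u y} := by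
    rintro y ⟨hyA, hyB⟩
    refine ⟨hyA, ?_⟩
    have hyΩ := tsec_subset hyA
    have htr : (pullHess u y T).trace ≤ 2 * C1 * t := not_lt.1 hyB
    have hps := h.pullHess_posSemidef hyΩ T
    obtain ⟨v, hv1, hv2⟩ := ContinuousLinearMap.exists_lt_apply_of_lt_opNorm
      (T.symm : EuclideanSpace ℝ (Fin n) →L[ℝ] EuclideanSpace ℝ (Fin n)) (half_lt_self hτ0)
    have hdq := det_mul_le_quad hps (T.symm v)
    rw [← hessB_eq_pullHess, det_pullHess, T.apply_symm_apply] at hdq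
    have hq := MASol.hessB_le_hessNorm (u := u) (x := y) v
    have hφ : 0 ≤ hessNorm u y := norm_nonneg _
    have hv3 : ‖v‖ ^ 2 ≤ 1 := pow_le_one₀ (norm_nonneg _) hv1.le
    have hq' : hessB u y v v ≤ hessNorm u y := hq.trans (mul_le_of_le_one_right hφ hv3)
    have hd : c₁ * (2 * t) ^ n * lam ≤ detT T ^ 2 * hessDet u y :=
      mul_le_mul hT3 (h.det_lb y hyΩ) hlam.le (sq_nonneg _)
    have hω : (τ / 2) ^ 2 ≤ ‖T.symm v‖ ^ 2 := by
      have : τ / 2 ≤ ‖T.symm v‖ := hv2.le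
      gcongr
    have h9 : c₁ * (2 * t) ^ n * lam * (τ / 2) ^ 2 ≤ (2 * C1 * t) ^ (n - 1) * hessNorm u y := by
      calc _ ≤ detT T ^ 2 * hessDet u y * ‖T.symm v‖ ^ 2 := by
            refine mul_le_mul hd hω (by positivity) ?_
            exact le_trans (by positivity) hd
        _ ≤ _ := hdq
        _ ≤ _ := by
            have := hps.trace_nonneg
            refine mul_le_mul (by gcongr) hq' (h.hessB_nonneg hyΩ v) (by positivity)
    have h10 : c' * γ ≤ hessNorm u y := by
      obtain ⟨m, rfl⟩ : ∃ m, n = m + 1 := ⟨n - 1, by omega⟩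
      simp only [Nat.add_sub_cancel] at h9
      have h11 : c' * γ ≤ c' * (τ ^ 2 * (C1 * t)) := by gcongr
      refine h11.trans ?_
      have h12 : 0 < (2 * C1 * t) ^ m := by positivity
      refine le_of_mul_le_mul_left (le_trans (le_of_eq ?_) h9) h12
      rw [hc']
      simp only [Nat.add_sub_cancel]
      field_simp
      ring
    refine le_trans ?_ h10
    gcongr
    exact min_le_left _ _
  refine le_trans ?_ (measure_mono h6)
  have h7 : V ≤ volume (A ∩ B) + volume (A \ B) := by
    rw [hV, measure_inter_add_sdiff A hBm]
  have h8 : V ≤ 2 * volume (A \ B) := by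
    have h9 : V + V ≤ V + 2 * volume (A \ B) := by
      calc V + V = 2 * V := (two_mul V).symm
        _ ≤ 2 * (volume (A ∩ B) + volume (A \ B)) := by gcongr
        _ = 2 * volume (A ∩ B) + 2 * volume (A \ B) := mul_add _ _ _
        _ ≤ _ := by gcongr
    exact (ENNReal.add_le_add_iff_left hVt).1 h9
  calc ENNReal.ofReal (min c' (1 / 2)) * V
      ≤ ENNReal.ofReal (1 / 2) * (2 * volume (A \ B)) := by
        gcongr
        exact min_le_right _ _
    _ = volume (A \ B) := by
        have : ENNReal.ofReal (1 / 2) * 2 = 1 := by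
          rw [← ENNReal.ofReal_ofNat 2, ← ENNReal.ofReal_mul (by norm_num)]; norm_num
        rw [← mul_assoc, this, one_mul]

end Integral

/-! ### Covering by sections of controlled average -/

section Covering

variable {n : ℕ} {u : EuclideanSpace ℝ (Fin n) → ℝ} {Ω : Set (EuclideanSpace ℝ (Fin n))}
  {lam Lam : ℝ} {x y : EuclideanSpace ℝ (Fin n)}

/-- Sections shrink to their centre, so a point where the Hessian exceeds `γ` has small sections on
which its average is at least `γ`. -/
lemma MASol.exists_le_average (h : MASol Ω lam Lam u) {K c₁ t γ : ℝ}
    (hB : BalancedConst n lam Lam K c₁) (hx : x ∈ Ω) (ht : 0 < t)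
    (hcl : closure (tsec Ω u x t) ⊆ Ω) (hγ : γ < hessNorm u x) :
    ∃ j : ℕ, ENNReal.ofReal γ * volume (tsec Ω u x (t / 2 ^ j))
      ≤ ∫⁻ y in tsec Ω u x (t / 2 ^ j), ENNReal.ofReal (hessNorm u y) := by
  have hc := (h.continuousOn_hessNorm.continuousAt (h.isOpen.mem_nhds hx)).eventually
    (lt_mem_nhds hγ)
  obtain ⟨ε, hε, hball⟩ := Metric.eventually_nhds_iff_ball.1 hc
  have hK := hB.one_le
  obtain ⟨j, hj⟩ := pow_unbounded_of_one_lt (diam Ω / ε)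
    (by have : 0 < (2 * K)⁻¹ := by positivity
        linarith : 1 < 1 + (2 * K)⁻¹)
  refine ⟨j, ?_⟩
  rw [← setLIntegral_const]
  refine setLIntegral_mono' h.measurableSet_tsec fun y hy => ENNReal.ofReal_le_ofReal ?_
  refine (hball y ?_).le
  have h1 := h.norm_le_of_mem_tsec hB hx ht hcl j hy
  rw [mem_ball, dist_eq_norm]
  rw [div_lt_iff₀ hε] at hj
  have h2 : 0 < (1 + (2 * K)⁻¹) ^ j := by positivity
  exact lt_of_mul_lt_mul_left (h1.trans_lt hj) h2.le

/-- Weak-type inequality: the integral of the Hessian over its superlevel set at height `γ` is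
controlled by the measure of a slightly lower superlevel set. -/
lemma exists_weak_type (hn : 1 ≤ n) (Ω : Set (EuclideanSpace ℝ (Fin n))) {K c₁ δ : ℝ}
    (hB : BalancedConst n lam Lam K c₁) (hδ : 0 < δ) :
    ∃ δ' > 0, ∃ γ₀ > 0, ∃ C > 0, ∃ c > 0, ∀ u, MADir Ω lam Lam u → ∀ γ, γ₀ ≤ γ →
      ∫⁻ y in inner' Ω δ ∩ {y | γ < hessNorm u y}, ENNReal.ofReal (hessNorm u y)
        ≤ ENNReal.ofReal (C * γ) * volume (inner' Ω δ' ∩ {y | c * γ ≤ hessNorm u y}) := by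
  have hK := hB.one_le
  have hc₁ := hB.pos
  set δ' : ℝ := δ / (1 + 2 * K) with hδ'd
  have hδ' : 0 < δ' := by positivity
  have hδδ' : δ' ≤ δ := div_le_self hδ.le (by linarith)
  have hinner : inner' Ω δ ⊆ inner' Ω δ' := fun x hx => (ball_subset_ball hδδ').trans hx
  obtain ⟨h₀, hh₀, hgap⟩ := MADir.exists_tangent_gap Ω hB hδ'
  obtain ⟨c, hc, hdens⟩ := exists_density hn hB
  obtain ⟨Cb, hCb, hbase⟩ := MADir.exists_lintegral_le Ω lam Lam hδ'
  obtain ⟨N, hN⟩ := pow_unbounded_of_one_lt (100 * K ^ 2) (one_lt_two : (1 : ℝ) < 2)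
  set h₁ : ℝ := h₀ / (60 * K) with hh₁d
  have hh₁ : 0 < h₁ := by positivity
  have hh₁' : 60 * K * h₁ = h₀ := by rw [hh₁d]; field_simp
  have hωt : volume (ball (0 : EuclideanSpace ℝ (Fin n)) 1) ≠ ⊤ := measure_ball_lt_top.ne
  have hω0 : 0 < (volume (ball (0 : EuclideanSpace ℝ (Fin n)) 1)).toReal :=
    ENNReal.toReal_pos (measure_ball_pos volume 0 one_pos).ne' hωt
  set v : ℝ := √(c₁ * (h₁ / 2 ^ N) ^ n) * (volume (ball (0 : EuclideanSpace ℝ (Fin n)) 1)).toReal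
    with hv
  have hv0 : 0 < v := by positivity
  refine ⟨δ', hδ', (Cb + 1) / v, by positivity, (2 ^ n) ^ N / c, by positivity, c, hc,
    fun u h γ hγ => ?_⟩
  have hγ0 : 0 < γ := lt_of_lt_of_le (by positivity) hγ
  have hcl : ∀ z ∈ inner' Ω δ', ∀ t, t < h₀ → closure (tsec Ω u z t) ⊆ Ω :=
    fun z hz t ht => h.closure_tsec_subset (hgap u h z hz) ht
  have hh₁0 : ∀ t ≤ h₁, 6 * (5 * K) * t < h₀ := fun t ht => by nlinarith
  have h2h : ∀ t ≤ h₁, 2 * t < h₀ := fun t ht => by nlinarith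
  set G := inner' Ω δ ∩ {y | γ < hessNorm u y} with hG
  -- at the largest `N + 1` scales the average is less than `γ` because `γ₀` is large
  have hlarge : ∀ x ∈ G, ∀ j ≤ N, ¬ (ENNReal.ofReal γ * volume (tsec Ω u x (h₁ / 2 ^ j))
      ≤ ∫⁻ y in tsec Ω u x (h₁ / 2 ^ j), ENNReal.ofReal (hessNorm u y)) := by
    intro x hx j hj hle
    have hxΩ := inner'_subset hδ hx.1
    have hjle : h₁ / 2 ^ j ≤ h₁ := div_le_self hh₁.le (one_le_pow₀ (by norm_num))
    have hsub := h.tsec_subset_inner' hB hδ hx.1 (by positivity : 0 < h₁ / 2 ^ j)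
      (hcl x (hinner hx.1) _ (h2h _ hjle))
    have h1 : ENNReal.ofReal γ * volume (tsec Ω u x (h₁ / 2 ^ j)) ≤ ENNReal.ofReal Cb :=
      hle.trans ((lintegral_mono_set hsub).trans (hbase u h))
    have hNj : h₁ / 2 ^ N ≤ h₁ / 2 ^ j := by
      gcongr
      norm_num
    have h2 : ENNReal.ofReal v ≤ volume (tsec Ω u x (h₁ / 2 ^ j)) := by
      have h3 := h.le_volume_tsec hB hxΩ (by positivity : 0 < h₁ / 2 ^ N)
        (hcl x (hinner hx.1) _ (by have := h2h _ (hNj.trans hjle)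
                                   have : 0 < h₁ / 2 ^ N := by positivity
                                   linarith))
      rw [hv, ENNReal.ofReal_mul (by positivity), ENNReal.ofReal_toReal hωt]
      exact h3.trans (measure_mono (tsec_mono hNj))
    have h3 : ENNReal.ofReal (γ * v) ≤ ENNReal.ofReal Cb := by
      rw [ENNReal.ofReal_mul hγ0.le]
      exact le_trans (by gcongr) h1
    have h4 := (ENNReal.ofReal_le_ofReal_iff hCb).1 h3
    rw [div_le_iff₀ hv0] at hγ
    linarith
  have hscale : ∀ x ∈ G, ∃ t, 0 < t ∧ t ≤ h₁ ∧
      ENNReal.ofReal γ * volume (tsec Ω u x t)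
        ≤ ∫⁻ y in tsec Ω u x t, ENNReal.ofReal (hessNorm u y) ∧
      ∫⁻ y in tsec Ω u x (2 ^ N * t), ENNReal.ofReal (hessNorm u y)
        ≤ ENNReal.ofReal γ * volume (tsec Ω u x (2 ^ N * t)) := by
    classical
    intro x hx
    have hxΩ := inner'_subset hδ hx.1
    have hex := h.exists_le_average hB hxΩ hh₁
      (hcl x (hinner hx.1) _ (by linarith [h2h _ le_rfl])) hx.2
    have hNlt : N < Nat.find hex := by
      by_contra! hle
      exact hlarge x hx _ hle (Nat.find_spec hex)
    refine ⟨h₁ / 2 ^ Nat.find hex, by positivity,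
      div_le_self hh₁.le (one_le_pow₀ (by norm_num)), Nat.find_spec hex, ?_⟩
    have hN0 : N ≠ 0 := by
      rintro rfl
      norm_num at hN
      nlinarith
    have h1 := Nat.find_min hex (m := Nat.find hex - N) (by omega)
    have h2 : 2 ^ N * (h₁ / 2 ^ Nat.find hex) = h₁ / 2 ^ (Nat.find hex - N) := by
      obtain ⟨m, hm⟩ : ∃ m, Nat.find hex = m + N := ⟨Nat.find hex - N, by omega⟩
      rw [hm, Nat.add_sub_cancel, pow_add]
      field_simp
    rw [h2]
    exact (not_le.1 h1).le
  choose! s hs0 hs1 hs2 hs3 using hscale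
  obtain ⟨w, hwG, hdisj, hcov⟩ := Vitali.exists_disjoint_subfamily_covering_enlargement
    (fun x => tsec Ω u x (s x)) G s 2 one_lt_two (fun x hx => (hs0 x hx).le) h₁ hs1
    (fun x hx => ⟨x, self_mem_tsec (inner'_subset hδ hx.1) (hs0 x hx)⟩)
  have hwc : w.Countable := hdisj.countable_of_isOpen (fun x _ => h.isOpen_tsec)
    fun x hx => ⟨x, self_mem_tsec (inner'_subset hδ (hwG hx).1) (hs0 x (hwG hx))⟩
  have hin : ∀ x ∈ G, tsec Ω u x (s x) ⊆ inner' Ω δ' := fun x hx =>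
    h.tsec_subset_inner' hB hδ hx.1 (hs0 x hx) (hcl x (hinner hx.1) _ (h2h _ (hs1 x hx)))
  have hGsub : G ⊆ ⋃ b : w, tsec Ω u b (2 ^ N * s b) := by
    intro a ha
    obtain ⟨b, hb, ⟨z, hza, hzb⟩, hab⟩ := hcov a ha
    have hbG := hwG hb
    have haΩ := inner'_subset hδ ha.1
    have hbΩ := inner'_subset hδ hbG.1
    have hb0 := hs0 b hbG
    have d1 := h.dev_le_of_mem_tsec hB haΩ (hs0 a ha) (hcl a (hinner ha.1) _ (h2h _ (hs1 a ha)))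
      (self_mem_tsec haΩ (hs0 a ha)) hza
    have d2 := h.dev_le_of_mem_tsec hB hbΩ hb0 (hcl b (hinner hbG.1) _ (h2h _ (hs1 b hbG)))
      (self_mem_tsec hbΩ hb0) hzb
    have hz := hin a ha hza
    have hKb : 0 < K * s b := by positivity
    have d3 := h.dev_le_of_mem_tsec hB (inner'_subset hδ' hz) (t := 3 * (5 * K) * s b)
      (by positivity) (hcl z hz _ (by linarith [hh₁0 _ (hs1 b hbG)]))
      (mem_tsec.2 ⟨haΩ, by nlinarith⟩) (mem_tsec.2 ⟨hbΩ, by nlinarith⟩) (y := a) (y' := b)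
    refine mem_iUnion.2 ⟨⟨b, hb⟩, mem_tsec.2 ⟨haΩ, ?_⟩⟩
    have : 100 * K ^ 2 * s b < 2 ^ N * s b := by gcongr
    nlinarith [mul_pos hKb (by linarith : 0 < K)]
  have : Countable w := hwc.to_subtype
  have hEm : MeasurableSet {y | c * γ ≤ hessNorm u y} :=
    measurableSet_le measurable_const (measurable_hessNorm u)
  have hterm : ∀ b : w, ∫⁻ y in tsec Ω u b (2 ^ N * s b), ENNReal.ofReal (hessNorm u y)
      ≤ ENNReal.ofReal ((2 ^ n) ^ N / c * γ) *
        volume (tsec Ω u b (s b) ∩ {y | c * γ ≤ hessNorm u y}) := by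
    rintro ⟨b, hb⟩
    have hbG := hwG hb
    have hbΩ := inner'_subset hδ hbG.1
    have h1 := hdens Ω u h.toMASol b hbΩ (s b) (hs0 b hbG)
      (hcl b (hinner hbG.1) _ (h2h _ (hs1 b hbG))) γ hγ0 (hs2 b hbG)
    have h2 := h.volume_tsec_pow_le hbΩ (s b) N
    calc _ ≤ ENNReal.ofReal γ * volume (tsec Ω u b (2 ^ N * s b)) := hs3 b hbG
      _ ≤ ENNReal.ofReal γ * ((2 ^ n) ^ N * volume (tsec Ω u b (s b))) := by gcongr
      _ = ENNReal.ofReal ((2 ^ n) ^ N / c * γ) *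
          (ENNReal.ofReal c * volume (tsec Ω u b (s b))) := by
        have h3 : ((2 : ENNReal) ^ n) ^ N = ENNReal.ofReal ((2 ^ n) ^ N) := by
          rw [ENNReal.ofReal_pow (by positivity), ENNReal.ofReal_pow (by positivity),
            ENNReal.ofReal_ofNat]
        rw [h3, ← mul_assoc, ← mul_assoc, ← ENNReal.ofReal_mul hγ0.le,
          ← ENNReal.ofReal_mul (by positivity)]
        congr 2
        field_simp
      _ ≤ _ := by gcongr
  calc ∫⁻ y in G, ENNReal.ofReal (hessNorm u y)
      ≤ ∫⁻ y in ⋃ b : w, tsec Ω u b (2 ^ N * s b), ENNReal.ofReal (hessNorm u y) :=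
        lintegral_mono_set hGsub
    _ ≤ ∑' b : w, ∫⁻ y in tsec Ω u b (2 ^ N * s b), ENNReal.ofReal (hessNorm u y) :=
        lintegral_iUnion_le _ _
    _ ≤ ∑' b : w, ENNReal.ofReal ((2 ^ n) ^ N / c * γ) *
        volume (tsec Ω u b (s b) ∩ {y | c * γ ≤ hessNorm u y}) := ENNReal.tsum_le_tsum hterm
    _ = ENNReal.ofReal ((2 ^ n) ^ N / c * γ) *
        volume (⋃ b : w, tsec Ω u b (s b) ∩ {y | c * γ ≤ hessNorm u y}) := by
        rw [ENNReal.tsum_mul_left, measure_iUnion]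
        · intro a b hab
          exact (hdisj a.2 b.2 (fun e => hab (Subtype.ext e))).mono inter_subset_left
            inter_subset_left
        · exact fun b => h.measurableSet_tsec.inter hEm
    _ ≤ _ := by
        gcongr
        exact iUnion_subset fun b => inter_subset_inter_left _ (hin b (hwG b.2))

end Covering

/-! ### From weak-type inequalities to powers of the logarithm -/

section LogPower

lemma sum_dyadic_le {g a : ℝ} (hg : 0 < g) (ha : 0 ≤ a) (J : ℕ) :
    ∑ j ∈ Finset.range J, (if g * 2 ^ j ≤ a then g * 2 ^ j else 0) ≤ min (2 * a) (g * 2 ^ J) := by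
  induction J with
  | zero => simpa using ⟨ha, hg.le⟩
  | succ J ih =>
    rw [Finset.sum_range_succ]
    have h1 := ih.trans (min_le_left _ _)
    have h2 := ih.trans (min_le_right _ _)
    have h3 : 0 < g * 2 ^ J := by positivity
    rw [pow_succ]
    split_ifs with h
    · exact le_min (by linarith) (by linarith)
    · exact le_min (by linarith) (by linarith)

lemma pow_succ_sub_le {t : ℝ} (ht : 0 ≤ t) (k : ℕ) :
    (t + 1) ^ (k + 1) ≤ t ^ (k + 1) + (k + 1) * (t + 1) ^ k := by
  induction k with
  | zero => simp
  | succ k ih =>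
    have h1 : t * t ^ (k + 1) ≤ t * (t + 1) ^ (k + 1) := by gcongr; linarith
    have h2 : 0 ≤ (t + 1) ^ k := by positivity
    push_cast
    have h3 := mul_le_mul_of_nonneg_left ih (by linarith : 0 ≤ t + 1)
    have h4 : t ^ (k + 1) ≤ (t + 1) ^ (k + 1) := by gcongr; linarith
    calc (t + 1) ^ (k + 1 + 1) = (t + 1) * (t + 1) ^ (k + 1) := by ring
      _ ≤ (t + 1) * (t ^ (k + 1) + (k + 1) * (t + 1) ^ k) := h3
      _ = t ^ (k + 1 + 1) + t ^ (k + 1) + (k + 1) * (t + 1) ^ (k + 1) := by ring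
      _ ≤ _ := by linarith

/-- Layer-cake decomposition of `s * log (2 + s) ^ (k + 1)` over the dyadic levels
`γ * 2 ^ j`. -/
lemma mul_log_pow_succ_le {γ : ℝ} (hγ : 0 < γ) (k : ℕ) {s : ℝ} (hs : 0 ≤ s) :
    ENNReal.ofReal (s * Real.log (2 + s) ^ (k + 1)) ≤
      ENNReal.ofReal (Real.log (2 + γ) ^ (k + 1)) * ENNReal.ofReal s +
      ∑' j : ℕ, ENNReal.ofReal ((k + 1) * (Real.log (2 + γ) + j + 1) ^ k) *
        (if γ * 2 ^ j < s then ENNReal.ofReal s else 0) := by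
  set L := Real.log (2 + γ) with hL
  have hL0 : 0 ≤ L := Real.log_nonneg (by linarith)
  classical
  have hex : ∃ m : ℕ, s ≤ γ * 2 ^ m := by
    obtain ⟨m, hm⟩ := pow_unbounded_of_one_lt (s / γ) (one_lt_two : (1 : ℝ) < 2)
    rw [div_lt_iff₀ hγ] at hm
    exact ⟨m, by linarith⟩
  obtain ⟨m, hm, hlt⟩ : ∃ m : ℕ, s ≤ γ * 2 ^ m ∧ ∀ j < m, γ * 2 ^ j < s :=
    ⟨Nat.find hex, Nat.find_spec hex, fun j hj => not_le.1 (Nat.find_min hex hj)⟩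
  have hlog : Real.log (2 + s) ≤ L + m := by
    have h1 : (1 : ℝ) ≤ 2 ^ m := one_le_pow₀ (by norm_num)
    have h2 : 2 + s ≤ (2 + γ) * 2 ^ m := by nlinarith
    have h3 := Real.log_le_log (by linarith) h2
    rw [Real.log_mul (by positivity) (by positivity), Real.log_pow] at h3
    have h4 : (m : ℝ) * Real.log 2 ≤ m * 1 := by
      gcongr
      linarith [Real.log_two_lt_d9]
    linarith
  have htel : ∀ m : ℕ, (L + m) ^ (k + 1) ≤
      L ^ (k + 1) + ∑ j ∈ Finset.range m, (k + 1) * (L + j + 1) ^ k := by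
    intro m
    induction m with
    | zero => simp
    | succ m ih =>
      rw [Finset.sum_range_succ]
      have := pow_succ_sub_le (by positivity : 0 ≤ L + m) k
      push_cast
      rw [← add_assoc]
      linarith
  have h1 : s * Real.log (2 + s) ^ (k + 1) ≤
      L ^ (k + 1) * s + ∑ j ∈ Finset.range m, (k + 1) * (L + j + 1) ^ k * s := by
    rw [← Finset.sum_mul, ← add_mul, mul_comm]
    gcongr
    exact le_trans (pow_le_pow_left₀ (Real.log_nonneg (by linarith)) hlog _) (htel m)
  refine (ENNReal.ofReal_le_ofReal h1).trans ?_
  rw [ENNReal.ofReal_add (by positivity) (by positivity), ENNReal.ofReal_mul (by positivity),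
    ENNReal.ofReal_sum_of_nonneg (fun j _ => by positivity)]
  gcongr
  refine le_trans (le_of_eq ?_) (ENNReal.sum_le_tsum (Finset.range m))
  refine Finset.sum_congr rfl fun j hj => ?_
  rw [if_pos (hlt j (Finset.mem_range.1 hj)), ENNReal.ofReal_mul (by positivity)]

/-- The sum over the dyadic levels below a multiple of `s` is controlled by its last term. -/
lemma exists_sum_levels_le {γ C c : ℝ} (hγ : 0 < γ) (hC : 0 < C) (hc : 0 < c) (k : ℕ) :
    ∃ D : ℝ, 0 ≤ D ∧ ∀ s : ℝ, 0 ≤ s →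
      ∑' j : ℕ, ENNReal.ofReal ((k + 1) * (Real.log (2 + γ) + j + 1) ^ k) *
        (ENNReal.ofReal (C * (γ * 2 ^ j)) * (if c * (γ * 2 ^ j) ≤ s then 1 else 0))
      ≤ ENNReal.ofReal D * ENNReal.ofReal (s * Real.log (2 + s) ^ k) := by
  set L := Real.log (2 + γ) with hL
  have hL0 : 0 ≤ L := Real.log_nonneg (by linarith)
  set E : ℝ := max 1 (1 / (c * γ)) with hE
  have hE1 : 1 ≤ E := le_max_left _ _
  have hE2 : 1 / (c * γ) ≤ E := le_max_right _ _
  have hlE : 0 ≤ Real.log E := Real.log_nonneg hE1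
  set M : ℝ := 2 + 2 * (2 * Real.log E + L + 1) with hM
  have hM0 : 0 ≤ M := by positivity
  refine ⟨(k + 1) * M ^ k * C * (2 / c), by positivity, fun s hs => ?_⟩
  set ℓ := Real.log (2 + s) with hℓ
  have hl2 := Real.log_two_gt_d9
  have hℓ2 : 1 / 2 ≤ ℓ := by
    have : Real.log 2 ≤ ℓ := Real.log_le_log (by norm_num) (by linarith)
    linarith
  have hj : ∀ j : ℕ, c * (γ * 2 ^ j) ≤ s → L + j + 1 ≤ M * ℓ := by
    intro j hj
    have h1 : (2 : ℝ) ^ j ≤ E * (2 + s) := by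
      have h2 : (2 : ℝ) ^ j ≤ 1 / (c * γ) * s := by
        rw [one_div, inv_mul_eq_div, le_div_iff₀ (by positivity)]
        linarith
      calc _ ≤ _ := h2
        _ ≤ E * (2 + s) := by gcongr; linarith
    have h3 := Real.log_le_log (by positivity) h1
    rw [Real.log_mul (by positivity) (by positivity), Real.log_pow] at h3
    have h4 : (j : ℝ) * (1 / 2) ≤ j * Real.log 2 := by
      gcongr
      linarith
    have h5 : (2 * Real.log E + L + 1) * 1 ≤ (2 * Real.log E + L + 1) * (2 * ℓ) := by
      gcongr
      linarith
    rw [hM]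
    linarith
  refine ENNReal.tsum_le_of_sum_range_le fun J => ?_
  rw [← ENNReal.ofReal_mul (by positivity)]
  calc _ ≤ ∑ j ∈ Finset.range J, ENNReal.ofReal ((k + 1) * (M * ℓ) ^ k * (C / c) *
        (if c * γ * 2 ^ j ≤ s then c * γ * 2 ^ j else 0)) := by
        refine Finset.sum_le_sum fun j _ => ?_
        by_cases hle : c * (γ * 2 ^ j) ≤ s
        · rw [if_pos hle, if_pos (by linarith), mul_one, ← ENNReal.ofReal_mul (by positivity)]
          refine ENNReal.ofReal_le_ofReal ?_
          have h1 := hj j hle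
          have h2 : (L + j + 1) ^ k ≤ (M * ℓ) ^ k := by gcongr
          calc _ ≤ (k + 1) * (M * ℓ) ^ k * (C * (γ * 2 ^ j)) := by gcongr
            _ = _ := by field_simp
        · rw [if_neg hle]
          simp
    _ = ENNReal.ofReal ((k + 1) * (M * ℓ) ^ k * (C / c) *
        ∑ j ∈ Finset.range J, (if c * γ * 2 ^ j ≤ s then c * γ * 2 ^ j else 0)) := by
        rw [Finset.mul_sum, ENNReal.ofReal_sum_of_nonneg]
        intro j _
        split_ifs <;> positivity
    _ ≤ ENNReal.ofReal ((k + 1) * (M * ℓ) ^ k * (C / c) * (2 * s)) := by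
        gcongr
        exact (sum_dyadic_le (by positivity) hs J).trans (min_le_left _ _)
    _ = _ := by
        congr 1
        rw [mul_pow]
        field_simp

/-- A weak-type inequality between `A` and `A'` raises the power of the logarithm by one. -/
lemma exists_lintegral_log_pow_succ_le {α : Type*} [MeasurableSpace α] (μ : Measure α)
    {γ C c : ℝ} (hγ : 0 < γ) (hC : 0 < C) (hc : 0 < c) (k : ℕ) (A A' : Set α) :
    ∃ D : ℝ, 0 ≤ D ∧ ∀ f : α → ℝ, Measurable f → (∀ x, 0 ≤ f x) →
      (∀ t, γ ≤ t → ∫⁻ y in A ∩ {y | t < f y}, ENNReal.ofReal (f y) ∂μ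
        ≤ ENNReal.ofReal (C * t) * μ (A' ∩ {y | c * t ≤ f y})) →
      ∫⁻ y in A, ENNReal.ofReal (f y * Real.log (2 + f y) ^ (k + 1)) ∂μ ≤
        ENNReal.ofReal D * (∫⁻ y in A, ENNReal.ofReal (f y) ∂μ +
          ∫⁻ y in A', ENNReal.ofReal (f y * Real.log (2 + f y) ^ k) ∂μ) := by
  obtain ⟨D, hD, hDs⟩ := exists_sum_levels_le hγ hC hc k
  set L := Real.log (2 + γ) with hL
  have hL0 : 0 ≤ L := Real.log_nonneg (by linarith)
  refine ⟨max (L ^ (k + 1)) D, le_max_of_le_right hD, fun f hf hf0 hweak => ?_⟩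
  set b : ℕ → ENNReal := fun j => ENNReal.ofReal ((k + 1) * (L + j + 1) ^ k) with hb
  have hset : ∀ t : ℝ, MeasurableSet {y | t < f y} := fun t => measurableSet_lt measurable_const hf
  have hset' : ∀ t : ℝ, MeasurableSet {y | t ≤ f y} := fun t => measurableSet_le measurable_const hf
  have hm1 : ∀ j : ℕ, Measurable fun y =>
      b j * (if γ * 2 ^ j < f y then ENNReal.ofReal (f y) else 0) := fun j =>
    (Measurable.ite (hset _) hf.ennreal_ofReal measurable_const).const_mul _
  have hm2 : ∀ j : ℕ, Measurable fun y => b j *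
      (ENNReal.ofReal (C * (γ * 2 ^ j)) * (if c * (γ * 2 ^ j) ≤ f y then (1 : ENNReal) else 0)) :=
    fun j => ((Measurable.ite (hset' _) measurable_const measurable_const).const_mul _).const_mul _
  have hsum : ∫⁻ y in A, ∑' j : ℕ, b j * (if γ * 2 ^ j < f y then ENNReal.ofReal (f y) else 0) ∂μ
      ≤ ENNReal.ofReal D * ∫⁻ y in A', ENNReal.ofReal (f y * Real.log (2 + f y) ^ k) ∂μ := by
    rw [lintegral_tsum fun j => (hm1 j).aemeasurable]
    calc _ ≤ ∑' j : ℕ, ∫⁻ y in A', b j * (ENNReal.ofReal (C * (γ * 2 ^ j)) *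
          (if c * (γ * 2 ^ j) ≤ f y then 1 else 0)) ∂μ := by
          refine ENNReal.tsum_le_tsum fun j => ?_
          have h1 := hweak (γ * 2 ^ j)
            (le_mul_of_one_le_right hγ.le (one_le_pow₀ (by norm_num)))
          rw [lintegral_const_mul' _ _ ENNReal.ofReal_ne_top,
            lintegral_const_mul' _ _ ENNReal.ofReal_ne_top,
            lintegral_const_mul' _ _ ENNReal.ofReal_ne_top]
          gcongr
          refine le_trans (le_of_eq ?_) (h1.trans (le_of_eq ?_))
          · rw [inter_comm, ← Measure.restrict_restrict (hset _), ← lintegral_indicator (hset _)]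
            rfl
          · congr 1
            rw [inter_comm, ← Measure.restrict_apply (hset' _), ← lintegral_indicator_one (hset' _)]
            rfl
      _ = ∫⁻ y in A', ∑' j : ℕ, b j * (ENNReal.ofReal (C * (γ * 2 ^ j)) *
          (if c * (γ * 2 ^ j) ≤ f y then 1 else 0)) ∂μ :=
          (lintegral_tsum fun j => (hm2 j).aemeasurable).symm
      _ ≤ ∫⁻ y in A', ENNReal.ofReal D *
          ENNReal.ofReal (f y * Real.log (2 + f y) ^ k) ∂μ :=
          lintegral_mono fun y => hDs (f y) (hf0 y)
      _ = _ := lintegral_const_mul' _ _ ENNReal.ofReal_ne_top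
  calc ∫⁻ y in A, ENNReal.ofReal (f y * Real.log (2 + f y) ^ (k + 1)) ∂μ
      ≤ ∫⁻ y in A, (ENNReal.ofReal (L ^ (k + 1)) * ENNReal.ofReal (f y) +
          ∑' j : ℕ, b j * (if γ * 2 ^ j < f y then ENNReal.ofReal (f y) else 0)) ∂μ :=
        lintegral_mono fun y => mul_log_pow_succ_le hγ k (hf0 y)
    _ = ENNReal.ofReal (L ^ (k + 1)) * ∫⁻ y in A, ENNReal.ofReal (f y) ∂μ +
          ∫⁻ y in A, ∑' j : ℕ, b j * (if γ * 2 ^ j < f y then ENNReal.ofReal (f y) else 0) ∂μ := by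
        rw [lintegral_add_left (hf.ennreal_ofReal.const_mul _),
          lintegral_const_mul' _ _ ENNReal.ofReal_ne_top]
    _ ≤ ENNReal.ofReal (max (L ^ (k + 1)) D) * ∫⁻ y in A, ENNReal.ofReal (f y) ∂μ +
          ENNReal.ofReal (max (L ^ (k + 1)) D) *
            ∫⁻ y in A', ENNReal.ofReal (f y * Real.log (2 + f y) ^ k) ∂μ := by
        refine add_le_add ?_ (hsum.trans ?_)
        · gcongr
          exact le_max_left _ _
        · gcongr
          exact le_max_right _ _
    _ = _ := (mul_add _ _ _).symm

end LogPower

/-! ### The estimate -/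

section Final

variable {n : ℕ} {lam Lam : ℝ}

/-- Interior `L log^k L` bound for the Hessian, by induction on `k`. -/
lemma exists_lintegral_log_pow_le (hn : 1 ≤ n) (hlam : 0 < lam) (hle : lam ≤ Lam)
    (Ω : Set (EuclideanSpace ℝ (Fin n))) (k : ℕ) :
    ∀ δ > 0, ∃ C : ℝ, 0 ≤ C ∧ ∀ u, MADir Ω lam Lam u →
      ∫⁻ y in inner' Ω δ, ENNReal.ofReal (hessNorm u y * Real.log (2 + hessNorm u y) ^ k)
        ≤ ENNReal.ofReal C := by
  obtain ⟨K, c₁, hB⟩ := exists_balanced hn hlam hle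
  induction k with
  | zero =>
    intro δ hδ
    simpa using MADir.exists_lintegral_le Ω lam Lam hδ
  | succ k ih =>
    intro δ hδ
    obtain ⟨δ', hδ', γ, hγ, C, hC, c, hc, hweak⟩ := exists_weak_type hn Ω hB hδ
    obtain ⟨D, hD, hDf⟩ := exists_lintegral_log_pow_succ_le
      (volume : Measure (EuclideanSpace ℝ (Fin n))) hγ hC hc k (inner' Ω δ) (inner' Ω δ')
    obtain ⟨C0, hC0, h0⟩ := MADir.exists_lintegral_le Ω lam Lam hδ
    obtain ⟨C1, hC1, h1⟩ := ih δ' hδ'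
    refine ⟨D * (C0 + C1), by positivity, fun u h => ?_⟩
    refine (hDf (hessNorm u) (measurable_hessNorm u) (fun _ => norm_nonneg _) (hweak u h)).trans ?_
    rw [ENNReal.ofReal_mul hD, ENNReal.ofReal_add hC0 hC1]
    gcongr
    · exact h0 u h
    · exact h1 u h

end Final

theorem W21_apriori_estimate (n k : ℕ) (hn : 1 ≤ n)
    (Ω Ω' : Set (EuclideanSpace ℝ (Fin n)))
    (hΩopen : IsOpen Ω) (hΩbdd : Bornology.IsBounded Ω) (hΩconv : Convex ℝ Ω)
    (hΩ'cpt : IsCompact Ω') (hΩ'sub : Ω' ⊆ Ω)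
    (lam Lam : ℝ) (hlam : 0 < lam) (hlL : lam ≤ Lam) :
    ∃ C > 0, ∀ u : EuclideanSpace ℝ (Fin n) → ℝ,
      ContinuousOn u (closure Ω) → ConvexOn ℝ Ω u → ContDiffOn ℝ 2 u Ω →
      (∀ x ∈ frontier Ω, u x = 0) →
      (∀ x ∈ Ω, lam ≤ hessDet u x ∧ hessDet u x ≤ Lam) →
      ∫ x in Ω', hessNorm u x * (Real.log (2 + hessNorm u x)) ^ k ≤ C := by
  obtain ⟨δ, hδ, hsub⟩ := hΩ'cpt.exists_thickening_subset_open hΩopen hΩ'sub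
  have hin : Ω' ⊆ inner' Ω δ := fun x hx => (ball_subset_thickening hx δ).trans hsub
  obtain ⟨C, hC, hCu⟩ := exists_lintegral_log_pow_le hn hlam hlL Ω k δ hδ
  refine ⟨C + 1, by positivity, fun u hcont hcvx hc2 hbdry hdet => ?_⟩
  have h : MADir Ω lam Lam u :=
    { isOpen := hΩopen, bdd := hΩbdd, conv := hΩconv, lam_pos := hlam, lam_le := hlL, cvx := hcvx,
      c2 := hc2, det_lb := fun x hx => (hdet x hx).1, det_ub := fun x hx => (hdet x hx).2,
      dim_pos := hn, cont := hcont, bdry := hbdry }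
  have h1 := (lintegral_mono_set (μ := volume) hin).trans (hCu u h)
  have hm := measurable_hessNorm u
  have h0 : ∀ x, 0 ≤ hessNorm u x := fun _ => norm_nonneg _
  rw [integral_eq_lintegral_of_nonneg_ae
    (Filter.Eventually.of_forall fun x => mul_nonneg (h0 x)
      (pow_nonneg (Real.log_nonneg (by linarith [h0 x])) k))
    (hm.mul ((Real.measurable_log.comp (hm.const_add 2)).pow_const k)).aestronglyMeasurable]
  have h2 := ENNReal.toReal_mono ENNReal.ofReal_ne_top h1
  rw [ENNReal.toReal_ofReal hC] at h2
  linarith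
end

section
/- Let n ≥ 1 and 0 < λ ≤ Λ. Then there exists a constant C > 0, depending only on n, λ and Λ, such that for every normalized convex set U ⊂ ℝⁿ and every function u : closure(U) → ℝ which is continuous on closure(U), convex and C² in U, with u = 0 on ∂U and λ ≤ det D²u(x) ≤ Λ for all x ∈ U, one has ∫_{(3/4)U} ‖D²u(x)‖ dx ≤ C. -/
/-!
For convex `u` the Hessian is positive semidefinite, so `‖D²u‖ ≤ Δu`, and it suffices to bound the
integral over `(3/4) U` of each pure second derivative `∂ₑₑ u ≥ 0`.

Comparison with a paraboloid (`bounds`) gives `-M ≤ u ≤ 0` with `M` depending only on `n` and `Lam`: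
the minimum of `u - (Lam + 1)/2 |x|²` cannot be interior because there `det D²u` would exceed `Lam`,
and the maximum of `u` cannot be interior because there `D²u` would vanish.

For a convex function on `[-h, 2 h]` with values in `[-M, 0]`, the second derivative has integral at
most `2 M / h` over `(0, h]` (`second_diff_bound`). Averaging this over segments in direction `e`
starting at points of `(7/8) U`, Tonelli and translation invariance (`lintegral_sliding`) yield
`h ∫_{(3/4) U} ∂ₑₑ u ≤ (2 M / h) |(7/8) U|`. This one-dimensional estimate takes the place of an
interior gradient bound combined with the divergence theorem.
-/

open MeasureTheory Metric Set
open scoped Pointwise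

def IsNormalized {n : ℕ} (Z : Set (EuclideanSpace ℝ (Fin n))) : Prop :=
  IsOpen Z ∧ Convex ℝ Z ∧ ball (0 : EuclideanSpace ℝ (Fin n)) 1 ⊆ Z ∧ Z ⊆ ball 0 n

/-! ### Second-order test on the line -/

open Filter Topology in
/-- Second-order necessary condition for a local minimum on the line: if `f'' < 0` then `0` would
also be a local maximum, hence `f` locally constant and `f'' = 0`. -/
lemma snd_deriv_test {f f' : ℝ → ℝ} {f'' : ℝ} (hf : ∀ᶠ t in 𝓝 (0 : ℝ), HasDerivAt f (f' t) t)
    (h2 : HasDerivAt f' f'' 0) (hmin : IsLocalMin f 0) : 0 ≤ f'' := by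
  by_contra! hneg
  have hd : deriv f =ᶠ[𝓝 0] f' := hf.mono fun t ht => ht.deriv
  have hdd : deriv (deriv f) 0 = f'' := by rw [hd.deriv_eq]; exact h2.deriv
  have hf0 : HasDerivAt f (f' 0) 0 := hf.self_of_nhds
  have hmax : IsLocalMax f 0 := isLocalMax_of_deriv_deriv_neg (by rw [hdd]; exact hneg)
    hmin.deriv_eq_zero hf0.continuousAt
  have hc : f =ᶠ[𝓝 0] fun _ => f 0 := by
    filter_upwards [hmin, hmax] with t h1 h2 using le_antisymm h2 h1
  have h0 : deriv (deriv f) 0 = 0 := by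
    rw [hc.deriv.deriv_eq]; simp
  linarith

/-! ### Symmetric matrices and their quadratic forms -/

lemma eigen_eq {n : ℕ} {H : Matrix (Fin n) (Fin n) ℝ} (hH : H.IsHermitian) (i : Fin n) :
    ∃ w : EuclideanSpace ℝ (Fin n), ‖w‖ = 1 ∧
      hH.eigenvalues i = ∑ a, ∑ b, w a * w b * H a b := by
  refine ⟨hH.eigenvectorBasis i, hH.eigenvectorBasis.orthonormal.1 i, ?_⟩
  rw [hH.eigenvalues_eq]
  simp [dotProduct, Matrix.mulVec, Finset.mul_sum]
  refine Finset.sum_congr rfl fun a _ => Finset.sum_congr rfl fun b _ => by ring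

lemma pow_le_det {n : ℕ} {H : Matrix (Fin n) (Fin n) ℝ} (hH : H.IsHermitian) {c : ℝ} (hc : 0 ≤ c)
    (h : ∀ w : EuclideanSpace ℝ (Fin n), c * ‖w‖ ^ 2 ≤ ∑ a, ∑ b, w a * w b * H a b) :
    c ^ n ≤ H.det := by
  rw [hH.det_eq_prod_eigenvalues]
  have : ∀ i, c ≤ hH.eigenvalues i := fun i => by
    obtain ⟨w, hw, he⟩ := eigen_eq hH i
    have := h w
    rw [he]; simpa [hw] using this
  calc c ^ n = ∏ _i : Fin n, c := by simp
    _ ≤ _ := Finset.prod_le_prod (fun _ _ => hc) (fun i _ => by simpa using this i)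

lemma det_eq_zero_of_form_zero {n : ℕ} (hn : 1 ≤ n) {H : Matrix (Fin n) (Fin n) ℝ}
    (hH : H.IsHermitian)
    (h : ∀ w : EuclideanSpace ℝ (Fin n), ∑ a, ∑ b, w a * w b * H a b = 0) : H.det = 0 := by
  rw [hH.det_eq_prod_eigenvalues]
  refine Finset.prod_eq_zero (Finset.mem_univ ⟨0, hn⟩) ?_
  obtain ⟨w, -, he⟩ := eigen_eq hH ⟨0, hn⟩
  simp [he, h w]

/-- For a positive semidefinite matrix the operator norm is at most the Frobenius norm, which is at
most the trace since `H i j ^ 2 ≤ H i i * H j j`. -/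
lemma norm_le_trace {n : ℕ} {H : Matrix (Fin n) (Fin n) ℝ} (hH : H.IsHermitian)
    (h : ∀ w : EuclideanSpace ℝ (Fin n), 0 ≤ ∑ a, ∑ b, w a * w b * H a b) :
    ‖Matrix.toEuclideanCLM (𝕜 := ℝ) H‖ ≤ ∑ i, H i i := by
  have hs : ∀ i j, H i j = H j i := fun i j => by simpa using (hH.apply i j).symm
  have hd : ∀ i, 0 ≤ H i i := fun i => by
    simpa [Pi.single_apply] using h (EuclideanSpace.single i 1)
  have hmin : ∀ i j, H i j ^ 2 ≤ H i i * H j j := fun i j => by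
    have key : ∀ t : ℝ, 0 ≤ H j j * (t * t) + (2 * H i j) * t + H i i := fun t => by
      have := h (EuclideanSpace.single i 1 + t • EuclideanSpace.single j 1)
      simp [add_mul, mul_add, Finset.sum_add_distrib] at this
      rw [hs j i] at this
      linarith
    have := discrim_le_zero key
    rw [discrim] at this
    nlinarith
  have htr : 0 ≤ ∑ i, H i i := Finset.sum_nonneg fun i _ => hd i
  refine ContinuousLinearMap.opNorm_le_bound _ htr fun v => ?_
  refine abs_le_of_sq_le_sq' ?_ (by positivity) |>.2
  rw [mul_pow, EuclideanSpace.norm_sq_eq, EuclideanSpace.norm_sq_eq]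
  simp only [Real.norm_eq_abs, sq_abs, Matrix.ofLp_toEuclideanCLM, Matrix.mulVec, dotProduct]
  calc ∑ i, (∑ j, H i j * v j) ^ 2 ≤ ∑ i, (∑ j, H i j ^ 2) * ∑ j, v j ^ 2 :=
        Finset.sum_le_sum fun i _ => Finset.sum_mul_sq_le_sq_mul_sq _ _ _
    _ = (∑ i, ∑ j, H i j ^ 2) * ∑ j, v j ^ 2 := by rw [Finset.sum_mul]
    _ ≤ (∑ i, ∑ j, H i i * H j j) * ∑ j, v j ^ 2 := by
        gcongr with i _ j _
        exact hmin i j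
    _ = _ := by rw [← Finset.sum_mul_sum, ← sq]

/-! ### Integrals of second derivatives along segments -/

/-- If the integral of `g` over every segment `x + (0, h] e` starting in `K'` is at most `A`, and
every segment `y - (0, h] e` ending in `K` lies in `K'`, then Tonelli and translation invariance
bound the integral of `g` over `K`. -/
lemma lintegral_sliding {E : Type*} [NormedAddCommGroup E] [NormedSpace ℝ E] [MeasurableSpace E]
    [BorelSpace E] [SecondCountableTopology E]
    (μ : Measure E) [SFinite μ] [μ.IsAddRightInvariant] {g : E → ENNReal} (hg : Measurable g) (e : E)
    {K K' : Set E} (hK : MeasurableSet K) (hK' : MeasurableSet K') {h : ℝ} {A : ENNReal}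
    (hA : ∀ x ∈ K', ∫⁻ t in Ioc 0 h, g (x + t • e) ≤ A)
    (hsub : ∀ y ∈ K, ∀ t ∈ Ioc 0 h, y - t • e ∈ K') :
    ENNReal.ofReal h * ∫⁻ x in K, g x ∂μ ≤ A * μ K' := by
  calc ENNReal.ofReal h * ∫⁻ x in K, g x ∂μ
      = ∫⁻ _t in Ioc 0 h, ∫⁻ x in K, g x ∂μ := by simp [mul_comm]
    _ ≤ ∫⁻ t in Ioc 0 h, ∫⁻ x in K', g (x + t • e) ∂μ := by
        refine setLIntegral_mono' measurableSet_Ioc fun t ht => ?_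
        rw [← lintegral_indicator hK, ← lintegral_indicator hK',
          ← lintegral_add_right_eq_self (μ := μ) (K.indicator g) (t • e)]
        refine lintegral_mono fun x => ?_
        by_cases hx : x + t • e ∈ K
        · have : x ∈ K' := by simpa using hsub _ hx t ht
          simp [hx, this]
        · simp [hx]
    _ = ∫⁻ x in K', (∫⁻ t in Ioc 0 h, g (x + t • e)) ∂μ := by
        refine lintegral_lintegral_swap ?_
        refine (hg.comp ?_).aemeasurable
        change Measurable fun p : ℝ × E => p.2 + p.1 • e
        fun_prop
    _ ≤ ∫⁻ _x in K', A ∂μ := setLIntegral_mono' hK' hA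
    _ = A * μ K' := by simp

/-- A convex function on `[-h, 2 h]` with values in `[-M, 0]` satisfies `∫₀ʰ f'' ≤ 2 M / h`: the
integral is `f' h - f' 0`, and the two derivatives are controlled by difference quotients on
`[h, 2 h]` and `[-h, 0]`. -/
lemma second_diff_bound {f f' f'' : ℝ → ℝ} {h M : ℝ} (hh : 0 < h)
    (hf : ∀ t ∈ Icc (-h) (2 * h), HasDerivAt f (f' t) t)
    (hf' : ∀ t ∈ Icc (-h) (2 * h), HasDerivAt f' (f'' t) t)
    (hc : ContinuousOn f'' (Icc (-h) (2 * h))) (hpos : ∀ t ∈ Icc (-h) (2 * h), 0 ≤ f'' t)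
    (hconv : ConvexOn ℝ (Icc (-h) (2 * h)) f)
    (hb : ∀ t ∈ Icc (-h) (2 * h), f t ∈ Icc (-M) 0) :
    ∫⁻ t in Ioc 0 h, ENNReal.ofReal (f'' t) ≤ ENNReal.ofReal (2 * M / h) := by
  have m1 : -h ∈ Icc (-h) (2 * h) := by constructor <;> linarith
  have m2 : 0 ∈ Icc (-h) (2 * h) := by constructor <;> linarith
  have m3 : h ∈ Icc (-h) (2 * h) := by constructor <;> linarith
  have m4 : 2 * h ∈ Icc (-h) (2 * h) := by constructor <;> linarith
  have sub : Icc 0 h ⊆ Icc (-h) (2 * h) := Icc_subset_Icc (by linarith) (by linarith)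
  have hi : IntervalIntegrable f'' volume 0 h :=
    (hc.mono (by rwa [uIcc_of_le hh.le])).intervalIntegrable
  have e := intervalIntegral.integral_eq_sub_of_hasDerivAt (f := f') (f' := f'') (a := 0) (b := h)
    (fun t ht => hf' t (sub (by rwa [uIcc_of_le hh.le] at ht))) hi
  rw [intervalIntegral.integral_of_le hh.le] at e
  rw [← ofReal_integral_eq_lintegral_ofReal
    ((intervalIntegrable_iff_integrableOn_Ioc_of_le hh.le).1 hi), e]
  · apply ENNReal.ofReal_le_ofReal
    have s1 := hconv.le_slope_of_hasDerivAt m3 m4 (by linarith) (hf _ m3)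
    have s2 := hconv.slope_le_of_hasDerivAt m1 m2 (by linarith) (hf _ m2)
    rw [slope_def_field, le_div_iff₀ (by linarith)] at s1
    rw [slope_def_field, div_le_iff₀ (by linarith)] at s2
    rw [le_div_iff₀ hh]
    have := hb _ m1
    have := hb _ m2
    have := hb _ m3
    have := hb _ m4
    simp only [mem_Icc] at *
    nlinarith
  · exact (ae_restrict_mem measurableSet_Ioc).mono fun t ht => hpos t (sub (Ioc_subset_Icc_self ht))

/-! ### The Hessian along lines -/

section
variable {n : ℕ} {U : Set (EuclideanSpace ℝ (Fin n))} {u : EuclideanSpace ℝ (Fin n) → ℝ}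

lemma line_deriv1 (hU : IsOpen U) (hu : ContDiffOn ℝ 2 u U) (x v : EuclideanSpace ℝ (Fin n))
    {t : ℝ} (hx : x + t • v ∈ U) :
    HasDerivAt (fun s : ℝ => u (x + s • v)) (fderiv ℝ u (x + t • v) v) t := by
  have h1 : HasDerivAt (fun s : ℝ => x + s • v) v t := by
    simpa using ((hasDerivAt_id t).smul_const v).const_add x
  have h2 : DifferentiableAt ℝ u (x + t • v) :=
    (hu.contDiffAt (hU.mem_nhds hx)).differentiableAt (by norm_num)
  exact h2.hasFDerivAt.comp_hasDerivAt t h1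

lemma line_deriv2 (hU : IsOpen U) (hu : ContDiffOn ℝ 2 u U) (x v : EuclideanSpace ℝ (Fin n))
    {t : ℝ} (hx : x + t • v ∈ U) :
    HasDerivAt (fun s : ℝ => fderiv ℝ u (x + s • v) v)
      (fderiv ℝ (fderiv ℝ u) (x + t • v) v v) t := by
  have h1 : HasDerivAt (fun s : ℝ => x + s • v) v t := by
    simpa using ((hasDerivAt_id t).smul_const v).const_add x
  have h2 : DifferentiableAt ℝ (fderiv ℝ u) (x + t • v) :=
    ((hu.contDiffAt (hU.mem_nhds hx)).fderiv_right (m := 1) (by norm_num)).differentiableAt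
      (by norm_num)
  have h3 : HasDerivAt (fun s : ℝ => fderiv ℝ u (x + s • v))
      (fderiv ℝ (fderiv ℝ u) (x + t • v) v) t := h2.hasFDerivAt.comp_hasDerivAt t h1
  exact (ContinuousLinearMap.apply ℝ ℝ v).hasFDerivAt.comp_hasDerivAt t h3

lemma hess_apply (x : EuclideanSpace ℝ (Fin n)) (i j : Fin n) : hessMatrix u x i j =
    fderiv ℝ (fderiv ℝ u) x (EuclideanSpace.single i 1) (EuclideanSpace.single j 1) := by
  simp [hessMatrix, iteratedFDeriv_two_apply]

lemma hess_form (x w : EuclideanSpace ℝ (Fin n)) :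
    ∑ a, ∑ b, w a * w b * hessMatrix u x a b = fderiv ℝ (fderiv ℝ u) x w w := by
  have hw : w = ∑ a, w a • EuclideanSpace.single a (1 : ℝ) := by
    ext i; simp [Pi.single_apply]
  conv_rhs => rw [hw]
  simp [hess_apply, Finset.mul_sum, mul_assoc]
  rw [Finset.sum_comm]
  refine Finset.sum_congr rfl fun a _ => Finset.sum_congr rfl fun b _ => by ring

lemma hess_symm (hU : IsOpen U) (hu : ContDiffOn ℝ 2 u U) {x : EuclideanSpace ℝ (Fin n)}
    (hx : x ∈ U) : (hessMatrix u x).IsHermitian := by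
  refine Matrix.IsHermitian.ext fun i j => ?_
  have h := (hu.contDiffAt (hU.mem_nhds hx)).isSymmSndFDerivAt (by simp)
  simp only [hess_apply, star_trivial]
  exact h _ _

lemma line_convex (hc : ConvexOn ℝ U u) (x v : EuclideanSpace ℝ (Fin n)) {s : Set ℝ}
    (hs : Convex ℝ s) (hsU : ∀ t ∈ s, x + t • v ∈ U) : ConvexOn ℝ s fun t : ℝ => u (x + t • v) := by
  have h := hc.comp_affineMap (AffineMap.lineMap (k := ℝ) x (x + v))
  have e : ∀ t : ℝ, AffineMap.lineMap (k := ℝ) x (x + v) t = x + t • v := fun t => by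
    simp [AffineMap.lineMap_apply, add_comm]
  refine (h.subset (fun t ht => ?_) hs).congr fun t _ => ?_
  · rw [mem_preimage, e]; exact hsU t ht
  · rw [Function.comp, e]

lemma eventually_line (hU : IsOpen U) {x : EuclideanSpace ℝ (Fin n)} (hx : x ∈ U)
    (v : EuclideanSpace ℝ (Fin n)) : ∀ᶠ t in nhds (0 : ℝ), x + t • v ∈ U := by
  have : ContinuousAt (fun t : ℝ => x + t • v) 0 := by fun_prop
  exact this.preimage_mem_nhds (hU.mem_nhds (by simpa using hx))

/-- A convex `C²` function has nonnegative pure second derivatives: along a line it lies above its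
tangent, so subtracting the tangent gives a local minimum. -/
lemma hess_nonneg (hU : IsOpen U) (hu : ContDiffOn ℝ 2 u U) (hc : ConvexOn ℝ U u)
    {x : EuclideanSpace ℝ (Fin n)} (hx : x ∈ U) (v : EuclideanSpace ℝ (Fin n)) :
    0 ≤ fderiv ℝ (fderiv ℝ u) x v v := by
  obtain ⟨ε, hε, hb⟩ := Metric.eventually_nhds_iff_ball.1 (eventually_line hU hx v)
  have hconv := line_convex hc x v (convex_ball 0 ε) hb
  have h0 : x + (0 : ℝ) • v ∈ U := by simpa using hx
  have hd : ∀ t ∈ ball (0 : ℝ) ε, _ := fun t ht => line_deriv1 hU hu x v (hb t ht)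
  have h2 := line_deriv2 hU hu x v h0
  rw [zero_smul, add_zero] at h2
  refine snd_deriv_test (f := fun t => u (x + t • v) - t * fderiv ℝ u x v)
    (f' := fun t => fderiv ℝ u (x + t • v) v - fderiv ℝ u x v) ?_ (h2.sub_const _) ?_
  · filter_upwards [ball_mem_nhds (0 : ℝ) hε] with t ht
    exact ((hd t ht).sub ((hasDerivAt_id t).mul_const (fderiv ℝ u x v))).congr_deriv (by simp)
  · have hm : (0 : ℝ) ∈ ball (0 : ℝ) ε := mem_ball_self hε
    have hd0 := hd 0 hm
    rw [zero_smul, add_zero] at hd0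
    filter_upwards [ball_mem_nhds (0 : ℝ) hε] with t ht
    simp only [zero_smul, add_zero, zero_mul, sub_zero]
    rcases lt_trichotomy t 0 with h | h | h
    · have := hconv.slope_le_of_hasDerivAt ht hm h hd0
      rw [slope_def_field, div_le_iff₀ (by linarith)] at this
      simp at this
      linarith
    · simp [h]
    · have := hconv.le_slope_of_hasDerivAt hm ht h hd0
      rw [slope_def_field, le_div_iff₀ (by linarith)] at this
      simp at this
      linarith

/-! ### Comparison with paraboloids -/

/-- At an interior minimum of `σ u - c/2 |·|²` one has `σ D²u ≥ c I`. -/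
lemma hess_ge_of_isLocalMin (hU : IsOpen U) (hu : ContDiffOn ℝ 2 u U)
    {x : EuclideanSpace ℝ (Fin n)} (hx : x ∈ U) {σ c : ℝ}
    (hmin : IsLocalMin (fun y => σ * u y - c / 2 * ‖y‖ ^ 2) x) (v : EuclideanSpace ℝ (Fin n)) :
    c * ‖v‖ ^ 2 ≤ σ * fderiv ℝ (fderiv ℝ u) x v v := by
  have h0 : x + (0 : ℝ) • v ∈ U := by simpa using hx
  have h2 := line_deriv2 hU hu x v h0
  rw [zero_smul, add_zero] at h2
  have hexp : ∀ t : ℝ, ‖x + t • v‖ ^ 2 = ‖x‖ ^ 2 + 2 * t * inner ℝ x v + t ^ 2 * ‖v‖ ^ 2 := by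
    intro t
    rw [norm_add_sq_real, inner_smul_right, norm_smul, mul_pow, Real.norm_eq_abs, sq_abs]
    ring
  have key : 0 ≤ σ * fderiv ℝ (fderiv ℝ u) x v v - c * ‖v‖ ^ 2 := by
    refine snd_deriv_test (f := fun t => σ * u (x + t • v) - c / 2 * ‖x + t • v‖ ^ 2)
      (f' := fun t => σ * fderiv ℝ u (x + t • v) v - c * (inner ℝ x v + t * ‖v‖ ^ 2)) ?_ ?_ ?_
    · filter_upwards [eventually_line hU hx v] with t ht
      have h1 := (line_deriv1 hU hu x v ht).const_mul σ
      have hq : HasDerivAt (fun s : ℝ => c / 2 * ‖x + s • v‖ ^ 2)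
          (c * (inner ℝ x v + t * ‖v‖ ^ 2)) t := by
        simp only [hexp]
        have a := ((hasDerivAt_id t).const_mul 2).mul_const (inner ℝ x v)
        have b := ((hasDerivAt_id t).pow 2).mul_const (‖v‖ ^ 2)
        refine (((a.const_add (‖x‖ ^ 2)).add b).const_mul (c / 2)).congr_deriv ?_
        simp
        ring
      exact h1.sub hq
    · have a := (((hasDerivAt_id (0 : ℝ)).mul_const (‖v‖ ^ 2)).const_add (inner ℝ x v)).const_mul c
      exact ((h2.const_mul σ).sub a).congr_deriv (by simp)
    · have hca : ContinuousAt (fun t : ℝ => x + t • v) 0 := by fun_prop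
      have : Filter.Tendsto (fun t : ℝ => x + t • v) (nhds 0) (nhds x) := by
        simpa [ContinuousAt] using hca
      filter_upwards [this.eventually hmin] with t ht
      simpa using ht
  linarith

/-- Uniform bound for `u`. Comparing with `(Lam + 1)/2 (|x|² - n²)`, an interior minimum of the
difference would have `det D²u ≥ (Lam + 1)ⁿ > Lam`; an interior maximum of `u` would have `D²u = 0`
and `det D²u = 0 < lam`. So each of these extrema is attained on the boundary. -/
lemma bounds (hn : 1 ≤ n) {lam Lam : ℝ} (hlam : 0 < lam) (hlL : lam ≤ Lam) (hN : IsNormalized U)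
    (hcont : ContinuousOn u (closure U)) (hc : ConvexOn ℝ U u) (hu : ContDiffOn ℝ 2 u U)
    (hbd : ∀ x ∈ frontier U, u x = 0) (hdet : ∀ x ∈ U, lam ≤ hessDet u x ∧ hessDet u x ≤ Lam)
    {x : EuclideanSpace ℝ (Fin n)} (hx : x ∈ U) :
    u x ∈ Icc (-((Lam + 1) / 2 * n ^ 2)) 0 := by
  obtain ⟨hU, -, -, hball⟩ := hN
  have hcb : closure U ⊆ closedBall 0 n :=
    closure_minimal (hball.trans ball_subset_closedBall) isClosed_closedBall
  have hcpt : IsCompact (closure U) := (isCompact_closedBall _ _).of_isClosed_subset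
    isClosed_closure hcb
  have hcl : ∀ y ∈ closure U, y ∉ U → y ∈ frontier U := fun y hy hyU => by
    rw [frontier, hU.interior_eq]; exact ⟨hy, hyU⟩
  have hxc := subset_closure hx
  have hnbd : ∀ y ∈ U, closure U ∈ nhds y := fun y hy =>
    Filter.mem_of_superset (hU.mem_nhds hy) subset_closure
  constructor
  · obtain ⟨y, hy, hmin⟩ := hcpt.exists_isMinOn ⟨x, hxc⟩
      (f := fun y => 1 * u y - (Lam + 1) / 2 * ‖y‖ ^ 2) (by fun_prop)
    have hyU : y ∉ U := fun hyU => by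
      have hge := hess_ge_of_isLocalMin hU hu hyU (hmin.isLocalMin (hnbd y hyU))
      have hp := pow_le_det (hess_symm hU hu hyU) (c := Lam + 1) (by linarith) fun w => by
        rw [hess_form]; simpa using hge w
      have := (hdet y hyU).2
      have h3 : Lam + 1 ≤ (Lam + 1) ^ n := le_self_pow₀ (by linarith) (by omega)
      rw [hessDet] at this
      linarith
    have h1 := hmin hxc
    have h2 := hbd y (hcl y hy hyU)
    have h3 : ‖y‖ ≤ n := by simpa using hcb hy
    have h4 : ‖y‖ ^ 2 ≤ (n : ℝ) ^ 2 := by gcongr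
    have h5 : 0 ≤ (Lam + 1) / 2 * ‖x‖ ^ 2 := by
      have : 0 ≤ Lam + 1 := by linarith
      positivity
    have h6 : (Lam + 1) / 2 * ‖y‖ ^ 2 ≤ (Lam + 1) / 2 * (n : ℝ) ^ 2 := by
      gcongr; linarith
    simp only [mem_ofPred_eq, h2] at h1
    linarith
  · obtain ⟨y, hy, hmin⟩ := hcpt.exists_isMinOn ⟨x, hxc⟩
      (f := fun y => (-1) * u y - 0 / 2 * ‖y‖ ^ 2) (by fun_prop)
    have hyU : y ∉ U := fun hyU => by
      have hge := hess_ge_of_isLocalMin hU hu hyU (hmin.isLocalMin (hnbd y hyU))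
      have hz := det_eq_zero_of_form_zero hn (hess_symm hU hu hyU) fun w => by
        rw [hess_form]
        have := hess_nonneg hU hu hc hyU w
        have := hge w
        linarith
      have := (hdet y hyU).1
      rw [hessDet, hz] at this
      linarith
    have h1 := hmin hxc
    have h2 := hbd y (hcl y hy hyU)
    simp only [mem_ofPred_eq, h2] at h1
    linarith

/-! ### The integral estimate -/

lemma mem_of_smul_add (hN : IsNormalized U) {x v : EuclideanSpace ℝ (Fin n)} {r s : ℝ}
    (hr : 0 < r) (hs : 0 < s) (hrs : r + s = 1) (hx : x ∈ U) (hv : ‖v‖ < s) : r • x + v ∈ U := by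
  have h8 : s⁻¹ • v ∈ U := hN.2.2.1 (by
    rw [mem_ball_zero_iff, norm_smul, Real.norm_of_nonneg (by positivity), inv_mul_lt_iff₀ hs]
    linarith)
  have := hN.2.1 hx h8 hr.le hs.le hrs
  rwa [smul_smul, mul_inv_cancel₀ hs.ne', one_smul] at this

lemma continuousOn_second (hU : IsOpen U) (hu : ContDiffOn ℝ 2 u U)
    (v : EuclideanSpace ℝ (Fin n)) :
    ContinuousOn (fun x => fderiv ℝ (fderiv ℝ u) x v v) U := by
  have h1 : ContDiffOn ℝ 1 (fderiv ℝ u) U := hu.fderiv_of_isOpen hU (by norm_num)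
  have h2 := h1.continuousOn_fderiv_of_isOpen hU (by norm_num)
  exact (h2.clm_apply continuousOn_const).clm_apply continuousOn_const

/-- Integral bound for one pure second derivative, with sets `K = (3/4) U`, `K' = (7/8) U` and step
`h = 1/32`; the constant is `2048 = 2 / h²`. -/
lemma lintegral_second_le (hN : IsNormalized U) (hc : ConvexOn ℝ U u) (hu : ContDiffOn ℝ 2 u U)
    {M : ℝ} (hM : ∀ x ∈ U, u x ∈ Icc (-M) 0) {e : EuclideanSpace ℝ (Fin n)} (he : ‖e‖ = 1) :
    ∫⁻ x in (3 / 4 : ℝ) • U, ENNReal.ofReal (fderiv ℝ (fderiv ℝ u) x e e) ≤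
      ENNReal.ofReal 2048 * (ENNReal.ofReal M * volume (ball (0 : EuclideanSpace ℝ (Fin n)) n)) := by
  classical
  have hU := hN.1
  set q := fun x => fderiv ℝ (fderiv ℝ u) x e e with hq
  have hqc : ContinuousOn q U := continuousOn_second hU hu e
  -- Extension by zero outside `U` makes the second derivative measurable on the whole space.
  set g : EuclideanSpace ℝ (Fin n) → ENNReal := U.piecewise (fun x => ENNReal.ofReal (q x))
    (fun _ => 0) with hg
  have hgm : Measurable g := ContinuousOn.measurable_piecewise
    (ENNReal.continuous_ofReal.comp_continuousOn hqc) continuousOn_const hU.measurableSet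
  have hgU : ∀ x ∈ U, g x = ENNReal.ofReal (q x) := fun x hx => piecewise_eq_of_mem _ _ _ hx
  have hKo : IsOpen ((3 / 4 : ℝ) • U) := hU.smul₀ (by norm_num)
  have hK'o : IsOpen ((7 / 8 : ℝ) • U) := hU.smul₀ (by norm_num)
  have hKU : (3 / 4 : ℝ) • U ⊆ U := by
    rintro _ ⟨z, hz, rfl⟩
    simpa using mem_of_smul_add hN (r := 3 / 4) (s := 1 / 4) (v := 0) (by norm_num) (by norm_num)
      (by norm_num) hz (by norm_num)
  have hK'U : (7 / 8 : ℝ) • U ⊆ U := by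
    rintro _ ⟨z, hz, rfl⟩
    simpa using mem_of_smul_add hN (r := 7 / 8) (s := 1 / 8) (v := 0) (by norm_num) (by norm_num)
      (by norm_num) hz (by norm_num)
  have hnorm : ∀ t : ℝ, ‖t • e‖ = |t| := fun t => by rw [norm_smul, he, mul_one, Real.norm_eq_abs]
  have hline : ∀ x ∈ (7 / 8 : ℝ) • U, ∀ t ∈ Icc (-(1 / 32)) (2 * (1 / 32) : ℝ), x + t • e ∈ U := by
    rintro _ ⟨z, hz, rfl⟩ t ht
    refine mem_of_smul_add hN (r := 7 / 8) (s := 1 / 8) (by norm_num) (by norm_num)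
      (by norm_num) hz ?_
    rw [hnorm, abs_lt]
    constructor <;> linarith [ht.1, ht.2]
  have main := lintegral_sliding volume hgm e hKo.measurableSet hK'o.measurableSet (h := 1 / 32)
    (A := ENNReal.ofReal (2 * M / (1 / 32))) ?_ ?_
  · have h1 : ∫⁻ x in (3 / 4 : ℝ) • U, ENNReal.ofReal (q x) = ∫⁻ x in (3 / 4 : ℝ) • U, g x :=
      setLIntegral_congr_fun hKo.measurableSet fun x hx => (hgU x (hKU hx)).symm
    rw [h1]
    calc ∫⁻ x in (3 / 4 : ℝ) • U, g x
        = ENNReal.ofReal 32 * (ENNReal.ofReal (1 / 32) * ∫⁻ x in (3 / 4 : ℝ) • U, g x) := by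
          rw [← mul_assoc, ← ENNReal.ofReal_mul (by norm_num)]; norm_num
      _ ≤ ENNReal.ofReal 32 * (ENNReal.ofReal (2 * M / (1 / 32)) * volume ((7 / 8 : ℝ) • U)) := by
          gcongr
      _ ≤ ENNReal.ofReal 32 * (ENNReal.ofReal (64 * M) *
            volume (ball (0 : EuclideanSpace ℝ (Fin n)) n)) := by
          gcongr
          · linarith
          · exact hK'U.trans hN.2.2.2
      _ = _ := by
          rw [ENNReal.ofReal_mul (by norm_num), mul_assoc, ← mul_assoc,
            ← ENNReal.ofReal_mul (by norm_num)]
          norm_num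
  · intro x hx
    have hx' := hline x hx
    calc ∫⁻ t in Ioc 0 (1 / 32), g (x + t • e)
        = ∫⁻ t in Ioc 0 (1 / 32), ENNReal.ofReal (q (x + t • e)) :=
          setLIntegral_congr_fun measurableSet_Ioc fun t ht =>
            hgU _ (hx' t ⟨by linarith [ht.1], by linarith [ht.2]⟩)
      _ ≤ _ := second_diff_bound (by norm_num)
          (fun t ht => line_deriv1 hU hu x e (hx' t ht))
          (fun t ht => line_deriv2 hU hu x e (hx' t ht))
          (hqc.comp (by fun_prop) hx')
          (fun t ht => hess_nonneg hU hu hc (hx' t ht) e)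
          (line_convex hc x e (convex_Icc _ _) hx')
          (fun t ht => hM _ (hx' t ht))
  · rintro _ ⟨z, hz, rfl⟩ t ht
    refine ⟨(6 / 7 : ℝ) • z + (-(8 / 7) * t) • e, ?_, ?_⟩
    · refine mem_of_smul_add hN (r := 6 / 7) (s := 1 / 7) (by norm_num) (by norm_num)
        (by norm_num) hz ?_
      rw [hnorm, abs_lt]
      constructor <;> linarith [ht.1, ht.2]
    · simp only
      module

lemma hessNorm_le (hU : IsOpen U) (hc : ConvexOn ℝ U u) (hu : ContDiffOn ℝ 2 u U)
    {x : EuclideanSpace ℝ (Fin n)} (hx : x ∈ U) :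
    hessNorm u x ≤ ∑ i, fderiv ℝ (fderiv ℝ u) x (EuclideanSpace.single i 1)
      (EuclideanSpace.single i 1) := by
  simp only [← hess_apply]
  refine norm_le_trace (hess_symm hU hu hx) fun w => ?_
  rw [hess_form]
  exact hess_nonneg hU hu hc hx w

end

theorem base_case_L_logk_estimate (n : ℕ) (hn : 1 ≤ n) (lam Lam : ℝ)
    (hlam : 0 < lam) (hlL : lam ≤ Lam) :
    ∃ C > 0, ∀ (U : Set (EuclideanSpace ℝ (Fin n))) (u : EuclideanSpace ℝ (Fin n) → ℝ),
      IsNormalized U →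
      ContinuousOn u (closure U) → ConvexOn ℝ U u → ContDiffOn ℝ 2 u U →
      (∀ x ∈ frontier U, u x = 0) →
      (∀ x ∈ U, lam ≤ hessDet u x ∧ hessDet u x ≤ Lam) →
      ∫ x in (3/4 : ℝ) • U, hessNorm u x ≤ C := by
  set D : ENNReal := ∑ _i : Fin n, ENNReal.ofReal 2048 * (ENNReal.ofReal ((Lam + 1) / 2 * n ^ 2) *
    volume (ball (0 : EuclideanSpace ℝ (Fin n)) n)) with hD
  have hDfin : D ≠ ⊤ := ENNReal.sum_ne_top.2 fun _ _ => ENNReal.mul_ne_top ENNReal.ofReal_ne_top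
    (ENNReal.mul_ne_top ENNReal.ofReal_ne_top measure_ball_lt_top.ne)
  have hDnn : 0 ≤ D.toReal := ENNReal.toReal_nonneg
  -- Adding `1` gives a positive constant.
  refine ⟨D.toReal + 1, by linarith, fun U u hN hcont hc hu hbd hdet => ?_⟩
  by_cases hInt : Integrable (hessNorm u) (volume.restrict ((3 / 4 : ℝ) • U))
  swap
  -- The Bochner integral of a non-integrable function is `0`.
  · rw [integral_undef hInt]; linarith
  suffices h : ∫⁻ x in (3 / 4 : ℝ) • U, ENNReal.ofReal (hessNorm u x) ≤ D by
    rw [integral_eq_lintegral_of_nonneg_ae (f := hessNorm u) (Filter.Eventually.of_forall fun x => norm_nonneg _)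
      hInt.1]
    linarith [ENNReal.toReal_mono hDfin h]
  have hU := hN.1
  have hKm : MeasurableSet ((3 / 4 : ℝ) • U) := (hU.smul₀ (by norm_num)).measurableSet
  have hKU : (3 / 4 : ℝ) • U ⊆ U := by
    rintro _ ⟨z, hz, rfl⟩
    simpa using mem_of_smul_add hN (r := 3 / 4) (s := 1 / 4) (v := 0) (by norm_num) (by norm_num)
      (by norm_num) hz (by norm_num)
  have hM := fun x hx => bounds hn hlam hlL hN hcont hc hu hbd hdet (x := x) hx
  calc ∫⁻ x in (3 / 4 : ℝ) • U, ENNReal.ofReal (hessNorm u x)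
      ≤ ∫⁻ x in (3 / 4 : ℝ) • U, ∑ i, ENNReal.ofReal (fderiv ℝ (fderiv ℝ u) x
          (EuclideanSpace.single i 1) (EuclideanSpace.single i 1)) := by
        refine setLIntegral_mono' hKm fun x hx => ?_
        rw [← ENNReal.ofReal_sum_of_nonneg fun i _ => hess_nonneg hU hu hc (hKU hx) _]
        exact ENNReal.ofReal_le_ofReal (hessNorm_le hU hc hu (hKU hx))
    _ = ∑ i, ∫⁻ x in (3 / 4 : ℝ) • U, ENNReal.ofReal (fderiv ℝ (fderiv ℝ u) x
          (EuclideanSpace.single i 1) (EuclideanSpace.single i 1)) :=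
        lintegral_finsetSum' _ fun i _ =>
          (((continuousOn_second hU hu _).mono hKU).aemeasurable hKm).ennreal_ofReal
    _ ≤ D := Finset.sum_le_sum fun i _ => lintegral_second_le hN hc hu hM (by simp)
end
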